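/- There exist constants C > 0 and Θ₀ ∈ (0,π), depending only on d and α, such that for every Θ ∈ (0,Θ₀) the following holds. Whenever β ∈ (0,α), κ ≥ 1, and M : ℝ^d → ℝ is continuous, nonnegative, M = 0 on ℝ^d∖Γ_Θ, M is twice continuously differentiable on Γ_Θ, M(rx) = r^β·M(x) for all r > 0 and x ∈ ℝ^d∖{0}, the fractional Laplacian Δ^{α/2}M(x) exists and equals 0 for every x ∈ Γ_Θ, and κ^{-1}·dist(θ, ℝ^d∖Γ_Θ)^{α/2} ≤ M(θ) ≤ κ·dist(θ, ℝ^d∖Γ_Θ)^{α/2} for all θ ∈ S^{d-1}, then |β - α + B_{d,α}·Θ^{d-1+α}| ≤ C·Θ^{d-1+α}·ω(Θ). -/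

import Mathlib

open MeasureTheory Metric Real Set Filter RealInnerProductSpace
open scoped ENNReal

noncomputable section

/-- Euclidean space ℝ^d. -/
abbrev Ed (d : ℕ) := EuclideanSpace ℝ (Fin d)

/-- The constant `A_{d,α}`. -/
noncomputable def fracConst (d : ℕ) (α : ℝ) : ℝ :=
  α * 2 ^ (α - 1) * π ^ (-(d : ℝ) / 2) * Real.Gamma (((d : ℝ) + α) / 2) / Real.Gamma (1 - α / 2)

/-- The fractional Laplacian `Δ^{α/2} Φ (x)` exists and equals `L`. -/
def fracLapAt (d : ℕ) (α : ℝ) (Φ : Ed d → ℝ) (x : Ed d) (L : ℝ) : Prop :=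
  Filter.Tendsto
    (fun ε : ℝ => fracConst d α *
      ∫ y in {y : Ed d | ε < ‖y - x‖}, (Φ y - Φ x) * ‖y - x‖ ^ (-(d : ℝ) - α))
    (nhdsWithin 0 (Set.Ioi 0)) (nhds L)

/-- The last coordinate of a vector in ℝ^d. -/
def lastCoord (d : ℕ) (x : Ed d) : ℝ :=
  if h : 0 < d then x ⟨d - 1, Nat.sub_lt h Nat.one_pos⟩ else 0

/-- The unit vector `e_d = (0,…,0,1)`. -/
def eLast (d : ℕ) : Ed d :=
  if h : 0 < d then EuclideanSpace.single ⟨d - 1, Nat.sub_lt h Nat.one_pos⟩ (1 : ℝ) else 0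

/-- The right circular cone `Γ_Θ` of angle `Θ`. -/
def cone (d : ℕ) (Θ : ℝ) : Set (Ed d) := {x | ‖x‖ * Real.cos Θ < lastCoord d x}

/-- The unit sphere `S^{d-1}` in ℝ^d. -/
def unitSphere (d : ℕ) : Set (Ed d) := Metric.sphere (0 : Ed d) 1

/-- The spherical cap `B_Θ`. -/
def capB (d : ℕ) (Θ : ℝ) : Set (Ed d) := {θ | θ ∈ unitSphere d ∧ Real.cos Θ < lastCoord d θ}

/-- The surface measure `σ`: the (d-1)-dimensional Hausdorff measure. -/
noncomputable def sphMeasure (d : ℕ) : Measure (Ed d) := μH[(d : ℝ) - 1]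

/-- The kernel `u_λ(t)`. -/
noncomputable def uKernel (d : ℕ) (α lam t : ℝ) : ℝ :=
  ∫ r in Set.Ioi (0 : ℝ), r ^ ((d : ℝ) + lam - 1) * (r ^ 2 - 2 * r * t + 1) ^ (-((d : ℝ) + α) / 2)

/-- The kernel `u_λ(t)` as a value in `[0,∞]`. -/
noncomputable def uKernelE (d : ℕ) (α lam t : ℝ) : ℝ≥0∞ :=
  ∫⁻ r in Set.Ioi (0 : ℝ),
    ENNReal.ofReal (r ^ ((d : ℝ) + lam - 1) * (r ^ 2 - 2 * r * t + 1) ^ (-((d : ℝ) + α) / 2))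

/-- The spherical fractional Laplacian `Δ_S^{α/2} φ (η)` exists and equals `L`. -/
def sphFracLapAt (d : ℕ) (α : ℝ) (φ : Ed d → ℝ) (η : Ed d) (L : ℝ) : Prop :=
  Filter.Tendsto
    (fun ε : ℝ => fracConst d α *
      ∫ θ in {θ : Ed d | θ ∈ unitSphere d ∧ ⟪θ, η⟫ ≤ Real.cos ε},
        (φ θ - φ η) * uKernel d α 0 ⟪θ, η⟫ ∂(sphMeasure d))
    (nhdsWithin 0 (Set.Ioi 0)) (nhds L)

/-- The integrand of the radial operator `R_λ`. -/
noncomputable def RopIntegrand (d : ℕ) (α lam : ℝ) (φ : Ed d → ℝ) (η θ : Ed d) : ℝ :=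
  φ θ * (uKernel d α lam ⟪θ, η⟫ - uKernel d α 0 ⟪θ, η⟫)

/-- The radial operator `R_λ φ (η)`. -/
noncomputable def Rop (d : ℕ) (α lam : ℝ) (φ : Ed d → ℝ) (η : Ed d) : ℝ :=
  fracConst d α * ∫ θ in unitSphere d, RopIntegrand d α lam φ η θ ∂(sphMeasure d)

/-- The modulus `ω`. -/
noncomputable def omegaFn (α Θ : ℝ) : ℝ :=
  if α < 1 then Θ ^ α else if α = 1 then Θ * |Real.log Θ| else Θ

/-- The Euler beta function. -/
noncomputable def eulerBeta (a b : ℝ) : ℝ := Real.Gamma a * Real.Gamma b / Real.Gamma (a + b)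

/-- The constant `B_{d,α}`. -/
noncomputable def Bconst (d : ℕ) (α : ℝ) : ℝ :=
  Real.Gamma (((d : ℝ) + α) / 2) / (π ^ ((3 : ℝ) / 2) * Real.Gamma (((d : ℝ) - 1 + α) / 2)) *
    Real.sin (π * α / 2) * eulerBeta (1 + α / 2) (((d : ℝ) - 1) / 2)

/-- The constant `C_{d-1,α}`. -/
noncomputable def Cexit (d : ℕ) (α : ℝ) : ℝ :=
  Real.Gamma (((d : ℝ) - 1) / 2) /
    (2 ^ α * Real.Gamma (((d : ℝ) - 1 + α) / 2) * Real.Gamma (1 + α / 2))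

/-- The constant `C̃_{d,α}`. -/
noncomputable def Ctilde (d : ℕ) (α : ℝ) : ℝ :=
  π ^ (((d : ℝ) - 1) / 2) / Real.Gamma (((d : ℝ) - 1) / 2) * Cexit d α *
    eulerBeta (1 + α / 2) (((d : ℝ) - 1) / 2)

/-- The norm `|ỹ|` of the first `d-1` coordinates of `y`. -/
noncomputable def tnorm (d : ℕ) (y : Ed d) : ℝ :=
  Real.sqrt (∑ i : Fin d, if (i : ℕ) < d - 1 then (y i) ^ 2 else 0)

/-- The function `s_ε`. -/
noncomputable def sExit (d : ℕ) (α ε : ℝ) (y : Ed d) : ℝ :=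
  Cexit d α * (max (ε ^ 2 - tnorm d y ^ 2) 0) ^ (α / 2)

/-- The cylinder `Π_ε`. -/
def cylPi (d : ℕ) (ε : ℝ) : Set (Ed d) := {y | tnorm d y < ε}

/-- The hyperplane `F = {y : y_d = 1}`. -/
def hyperF (d : ℕ) : Set (Ed d) := {y | lastCoord d y = 1}

/-- The Riesz kernel `h(y) = |y|^{α-d}`. -/
noncomputable def rieszH (d : ℕ) (α : ℝ) (y : Ed d) : ℝ := ‖y‖ ^ (α - (d : ℝ))

/-- The inversion `T x = x/|x|²`. -/
noncomputable def inversion (d : ℕ) (x : Ed d) : Ed d := (‖x‖ ^ 2)⁻¹ • x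

/-- The shifted cone `V_Θ = Γ_Θ + e_d/2`. -/
def Vcone (d : ℕ) (Θ : ℝ) : Set (Ed d) := {y | y - (1 / 2 : ℝ) • eLast d ∈ cone d Θ}

/-- The spindle `L_ε = T(V_Θ)` with `ε = tan(Θ/2)`, i.e. `Θ = 2 arctan ε`. -/
def Lspindle (d : ℕ) (ε : ℝ) : Set (Ed d) := inversion d '' Vcone d (2 * Real.arctan ε)

/-- The curvilinear projection `y* = T(e_d/2 + (Ty - e_d/2)/(2|Ty - e_d/2|))`. -/
noncomputable def ystar (d : ℕ) (y : Ed d) : Ed d :=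
  inversion d ((1 / 2 : ℝ) • eLast d +
    (2 * ‖inversion d y - (1 / 2 : ℝ) • eLast d‖)⁻¹ • (inversion d y - (1 / 2 : ℝ) • eLast d))

open scoped Classical in
/-- The function `s*_ε`. -/
noncomputable def sStar (d : ℕ) (α ε : ℝ) (y : Ed d) : ℝ :=
  if y ∈ Lspindle d ε then Cexit d α * (max (ε ^ 2 - tnorm d (ystar d y) ^ 2) 0) ^ (α / 2)
  else 0

open scoped Classical in
/-- The function `u = K(h s*_ε)`, i.e. `u(y) = s*_ε(Ty)`, `u(0) = 0`. -/
noncomputable def uFn (d : ℕ) (α ε : ℝ) (y : Ed d) : ℝ :=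
  if y = 0 then 0 else sStar d α ε (inversion d y)

/-- The spherical profile `φ_Θ`. -/
noncomputable def profileFn (d : ℕ) (α Θ : ℝ) (θ : Ed d) : ℝ :=
  2 ^ α * Cexit d α *
    (max (Real.tan (Θ / 2) ^ 2 - ‖eLast d - θ‖ ^ 2 / ‖eLast d + θ‖ ^ 2) 0) ^ (α / 2)

/-- Laplacian on ℝ^d as the sum of pure second partial derivatives. -/
noncomputable def lapE (d : ℕ) (u : Ed d → ℝ) (x : Ed d) : ℝ :=
  ∑ i : Fin d,
    iteratedFDeriv ℝ 2 u x ![EuclideanSpace.single i (1 : ℝ), EuclideanSpace.single i (1 : ℝ)]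

/-- Laplacian on ℝ^d × ℝ as the sum of the d+1 pure second partial derivatives. -/
noncomputable def lapProd (d : ℕ) (U : Ed d × ℝ → ℝ) (p : Ed d × ℝ) : ℝ :=
  (∑ i : Fin d, iteratedFDeriv ℝ 2 U p
      ![(EuclideanSpace.single i (1 : ℝ), (0 : ℝ)), (EuclideanSpace.single i (1 : ℝ), (0 : ℝ))]) +
    iteratedFDeriv ℝ 2 U p ![((0 : Ed d), (1 : ℝ)), ((0 : Ed d), (1 : ℝ))]

/-- The Poisson kernel `P_t(x)` for the upper half-space. -/
noncomputable def poissonK (d : ℕ) (t : ℝ) (x : Ed d) : ℝ :=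
  Real.Gamma (((d : ℝ) + 1) / 2) / π ^ (((d : ℝ) + 1) / 2) * t *
    (‖x‖ ^ 2 + t ^ 2) ^ (-((d : ℝ) + 1) / 2)

end

/-!
Write `d = n + 1`, `p = α / 2` and `δ = α - β`. The function `s ^ β * (τ² - |w / s|²)₊ ^ p` of
`(w, s)`, extended by zero to `s ≤ 0`, is homogeneous of degree `β` and lives on the cone with
`tan Θ = τ`. Its symmetrized fractional Laplacian at height one is integrated along the lines
through the point. In the variable `1 / (ρ - 1)` the integral over a line splits into a
one-dimensional principal value, evaluated by a beta integral, and a part that degenerates as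
`δ → 0`. Together they give, up to a factor two and an error of order `ω(τ)`,
`-c + m * τ ^ (n + 2 * p) / δ`, with `c` and `m` depending only on `n` and `p`.

Comparing `M` with test functions for a slightly smaller and a slightly larger cone, the largest
multiple that stays below `M` and the smallest one that stays above `M` both touch it inside the
cone. There the operator on the test function has a sign because `M` is harmonic, so `δ` is squeezed
between two multiples `(1 ± O(ω(Θ))) * (m / c) * Θ ^ (n + 2 * p)`, and `m / c` is `B_{d,α}`.
-/

namespace NarrowCone

open scoped Topology

section BetaIntegrals

variable {a b p : ℝ}

lemma eulerBeta_pos (ha : 0 < a) (hb : 0 < b) : 0 < eulerBeta a b :=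
  div_pos (mul_pos (Gamma_pos_of_pos ha) (Gamma_pos_of_pos hb)) (Gamma_pos_of_pos (add_pos ha hb))

lemma ofReal_rpow_mul_one_sub_rpow {x : ℝ} (hx : x ∈ Ioo (0 : ℝ) 1) :
    (x : ℂ) ^ ((a : ℂ) - 1) * (1 - (x : ℂ)) ^ ((b : ℂ) - 1) =
      ((x ^ (a - 1) * (1 - x) ^ (b - 1) : ℝ) : ℂ) := by
  rw [Complex.ofReal_mul, Complex.ofReal_cpow hx.1.le, Complex.ofReal_cpow (sub_nonneg.2 hx.2.le)]
  push_cast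
  rfl

lemma integrableOn_rpow_mul_one_sub_rpow (ha : 0 < a) (hb : 0 < b) :
    IntegrableOn (fun x : ℝ => x ^ (a - 1) * (1 - x) ^ (b - 1)) (Ioo 0 1) := by
  have hconv := Complex.betaIntegral_convergent (u := (a : ℂ)) (v := (b : ℂ))
    (by simpa using ha) (by simpa using hb)
  rw [intervalIntegrable_iff_integrableOn_Ioo_of_le zero_le_one] at hconv
  have hre := hconv.congr_fun (fun x hx => ofReal_rpow_mul_one_sub_rpow hx) measurableSet_Ioo
  simpa [IntegrableOn] using hre.re

lemma integral_rpow_mul_one_sub_rpow (ha : 0 < a) (hb : 0 < b) :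
    ∫ x in Ioo (0 : ℝ) 1, x ^ (a - 1) * (1 - x) ^ (b - 1) = eulerBeta a b := by
  have hval := Complex.betaIntegral_eq_Gamma_mul_div (a : ℂ) (b : ℂ)
    (by simpa using ha) (by simpa using hb)
  rw [Complex.betaIntegral, intervalIntegral.integral_of_le zero_le_one,
    integral_Ioc_eq_integral_Ioo,
    setIntegral_congr_fun measurableSet_Ioo fun x hx => ofReal_rpow_mul_one_sub_rpow hx,
    integral_complex_ofReal, ← Complex.ofReal_add, Complex.Gamma_ofReal, Complex.Gamma_ofReal,
    Complex.Gamma_ofReal] at hval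
  rw [eulerBeta]
  exact_mod_cast hval

lemma image_div_one_sub_Ioo : (fun x : ℝ => x / (1 - x)) '' Ioo 0 1 = Ioi 0 := by
  ext y
  constructor
  · rintro ⟨x, hx, rfl⟩
    exact div_pos hx.1 (sub_pos.2 hx.2)
  · intro (hy : 0 < y)
    refine ⟨y / (1 + y), ⟨by positivity, (div_lt_one (by positivity)).2 (by linarith)⟩, ?_⟩
    field_simp
    ring

lemma injOn_div_one_sub : InjOn (fun x : ℝ => x / (1 - x)) (Ioo 0 1) := by
  intro x hx y hy hxy
  rw [div_eq_div_iff (sub_pos.2 hx.2).ne' (sub_pos.2 hy.2).ne'] at hxy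
  linarith

lemma hasDerivWithinAt_div_one_sub {x : ℝ} (hx : x ∈ Ioo (0 : ℝ) 1) :
    HasDerivWithinAt (fun x : ℝ => x / (1 - x)) (1 / (1 - x) ^ 2) (Ioo 0 1) x := by
  refine (((hasDerivAt_id x).div ((hasDerivAt_id x).const_sub 1)
    (sub_pos.2 hx.2).ne').congr_deriv ?_).hasDerivWithinAt
  simp

lemma rpow_mul_one_sub_rpow_eq_smul {x : ℝ} (hx : x ∈ Ioo (0 : ℝ) 1) :
    x ^ (a - 1) * (1 - x) ^ (b - 1) =
      |1 / (1 - x) ^ 2| • ((x / (1 - x)) ^ (a - 1) * (1 + x / (1 - x)) ^ (-(a + b))) := by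
  have hpos : 0 < 1 - x := sub_pos.2 hx.2
  have hinv : 1 + x / (1 - x) = (1 - x)⁻¹ := by field_simp; ring
  have hsplit : (1 - x) ^ (a + b) = (1 - x) ^ (a - 1) * (1 - x) ^ (b - 1) * (1 - x) ^ 2 := by
    rw [← rpow_natCast (1 - x) 2, ← rpow_add hpos, ← rpow_add hpos]
    congr 1
    push_cast
    ring
  have hne : (1 - x) ^ (a - 1) ≠ 0 := (rpow_pos_of_pos hpos _).ne'
  rw [hinv, abs_of_pos (by positivity), smul_eq_mul, div_rpow hx.1.le hpos.le, inv_rpow hpos.le,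
    ← rpow_neg hpos.le, neg_neg, hsplit]
  field_simp

lemma integrableOn_rpow_mul_one_add_rpow (ha : 0 < a) (hb : 0 < b) :
    IntegrableOn (fun y : ℝ => y ^ (a - 1) * (1 + y) ^ (-(a + b))) (Ioi 0) := by
  rw [← image_div_one_sub_Ioo, integrableOn_image_iff_integrableOn_abs_deriv_smul measurableSet_Ioo
    (fun _ hx => hasDerivWithinAt_div_one_sub hx) injOn_div_one_sub]
  exact (integrableOn_rpow_mul_one_sub_rpow ha hb).congr_fun
    (fun _ hx => rpow_mul_one_sub_rpow_eq_smul hx) measurableSet_Ioo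

lemma integral_rpow_mul_one_add_rpow (ha : 0 < a) (hb : 0 < b) :
    ∫ y in Ioi (0 : ℝ), y ^ (a - 1) * (1 + y) ^ (-(a + b)) = eulerBeta a b := by
  rw [← image_div_one_sub_Ioo, integral_image_eq_integral_abs_deriv_smul measurableSet_Ioo
    (fun _ hx => hasDerivWithinAt_div_one_sub hx) injOn_div_one_sub,
    ← integral_rpow_mul_one_sub_rpow ha hb]
  exact (setIntegral_congr_fun measurableSet_Ioo
    fun _ hx => rpow_mul_one_sub_rpow_eq_smul hx).symm

lemma mul_rpow_div_add {y : ℝ} (ha : 0 < a) (hy : 0 < y) :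
    (a * y) ^ (p - 1) / (a * y + a) =
      a ^ (p - 1) / a * (y ^ (p - 1) * (1 + y) ^ (-(p + (1 - p)))) := by
  rw [mul_rpow ha.le hy.le, add_sub_cancel, rpow_neg_one, show a * y + a = a * (1 + y) by ring]
  field_simp

lemma integrableOn_rpow_div_add (hp : 0 < p) (hp1 : p < 1) (ha : 0 < a) :
    IntegrableOn (fun y : ℝ => y ^ (p - 1) / (y + a)) (Ioi 0) := by
  rw [← mul_zero a, ← integrableOn_Ioi_comp_mul_left_iff _ 0 ha]
  exact IntegrableOn.congr_fun
    ((integrableOn_rpow_mul_one_add_rpow hp (sub_pos.2 hp1)).const_mul (a ^ (p - 1) / a))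
    (fun _ hy => (mul_rpow_div_add ha hy).symm) measurableSet_Ioi

lemma integral_rpow_div_add (hp : 0 < p) (hp1 : p < 1) (ha : 0 < a) :
    ∫ y in Ioi (0 : ℝ), y ^ (p - 1) / (y + a) = a ^ (p - 1) * (π / sin (π * p)) := by
  have hreflection : eulerBeta p (1 - p) = π / sin (π * p) := by
    rw [eulerBeta, add_sub_cancel, Gamma_one, div_one, Gamma_mul_Gamma_one_sub]
  have hscale := integral_comp_mul_left_Ioi (fun y : ℝ => y ^ (p - 1) / (y + a)) 0 ha
  rw [mul_zero, setIntegral_congr_fun measurableSet_Ioi fun _ hy => mul_rpow_div_add ha hy,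
    integral_const_mul, integral_rpow_mul_one_add_rpow hp (sub_pos.2 hp1), hreflection,
    smul_eq_mul, ← div_eq_inv_mul, eq_div_iff ha.ne'] at hscale
  rw [← hscale]
  field_simp

end BetaIntegrals

section PowerIncrements

variable {x y c R b : ℝ}

lemma rpow_le_two_rpow_abs (hy : 1 / 2 ≤ y) (hy2 : y ≤ 2) : y ^ c ≤ 2 ^ |c| := by
  have hy0 : 0 < y := by linarith
  rcases le_total 0 c with hc | hc
  · rw [abs_of_nonneg hc]
    exact rpow_le_rpow hy0.le hy2 hc
  · rw [abs_of_nonpos hc, ← inv_inv y, inv_rpow (by positivity), ← rpow_neg (by positivity)]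
    exact rpow_le_rpow (by positivity) ((inv_le_comm₀ hy0 two_pos).2 (by linarith)) (by linarith)

lemma hasDerivAt_one_add_rpow (hx : -1 < x) :
    HasDerivAt (fun y : ℝ => (1 + y) ^ c) (c * (1 + x) ^ (c - 1)) x := by
  have h := ((hasDerivAt_id x).const_add 1).rpow_const (p := c)
    (Or.inl (by simp only [id]; linarith))
  simpa only [one_mul, id] using h

lemma abs_one_add_rpow_sub_one_le (hx : |x| ≤ 1 / 2) :
    |(1 + x) ^ c - 1| ≤ |c| * 2 ^ |c - 1| * |x| := by
  have hbound : ∀ y ∈ Icc (-(1 / 2) : ℝ) (1 / 2),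
      ‖c * (1 + y) ^ (c - 1)‖ ≤ |c| * 2 ^ |c - 1| := by
    intro y hy
    rw [norm_mul, Real.norm_eq_abs, Real.norm_of_nonneg (rpow_nonneg (by linarith [hy.1]) _)]
    gcongr
    exact rpow_le_two_rpow_abs (by linarith [hy.1]) (by linarith [hy.2])
  simpa using (convex_Icc (-(1 / 2) : ℝ) (1 / 2)).norm_image_sub_le_of_norm_hasDerivWithin_le
    (fun y hy => (hasDerivAt_one_add_rpow (by linarith [hy.1])).hasDerivWithinAt) hbound
    (x := 0) (y := x) (by norm_num) (abs_le.1 hx)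

lemma abs_one_add_rpow_sub_linear_le (hx : |x| ≤ 1 / 2) :
    |(1 + x) ^ c - 1 - c * x| ≤ |c| * (|c - 1| * 2 ^ |c - 2|) * x ^ 2 := by
  have hderiv : ∀ y ∈ Icc (-|x|) |x|, HasDerivWithinAt (fun y : ℝ => (1 + y) ^ c - 1 - c * y)
      (c * ((1 + y) ^ (c - 1) - 1)) (Icc (-|x|) |x|) y := by
    intro y hy
    refine ((((hasDerivAt_one_add_rpow (by linarith [hy.1])).sub_const 1).sub
      ((hasDerivAt_id y).const_mul c)).congr_deriv ?_).hasDerivWithinAt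
    ring
  have hbound : ∀ y ∈ Icc (-|x|) |x|,
      ‖c * ((1 + y) ^ (c - 1) - 1)‖ ≤ |c| * (|c - 1| * 2 ^ |c - 2|) * |x| := by
    intro y hy
    have hyx : |y| ≤ |x| := abs_le.2 hy
    have hone := abs_one_add_rpow_sub_one_le (c := c - 1) (hyx.trans hx)
    rw [show c - 1 - 1 = c - 2 by ring] at hone
    rw [norm_mul, Real.norm_eq_abs, Real.norm_eq_abs, mul_assoc]
    gcongr
    exact hone.trans (by gcongr)
  have hmvt := (convex_Icc (-|x|) |x|).norm_image_sub_le_of_norm_hasDerivWithin_le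
    hderiv hbound (x := 0) (y := x) (by simp) (abs_le.1 le_rfl)
  simp only [add_zero, one_rpow, sub_self, mul_zero, sub_zero, Real.norm_eq_abs] at hmvt
  rwa [mul_assoc _ |x|, abs_mul_abs_self, ← sq] at hmvt

lemma abs_one_add_rpow_sub_one_le_of_abs_le_one (hc : |c| ≤ 1) (hx : |x| ≤ 1 / 2) :
    |(1 + x) ^ c - 1| ≤ 4 * |x| := by
  have hc1 : |c - 1| ≤ 2 := (abs_sub _ _).trans (by rw [abs_one]; linarith)
  calc |(1 + x) ^ c - 1| ≤ |c| * 2 ^ |c - 1| * |x| := abs_one_add_rpow_sub_one_le hx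
    _ ≤ 1 * 2 ^ (2 : ℝ) * |x| := by gcongr; exact one_le_two
    _ = 4 * |x| := by norm_num

lemma abs_one_add_rpow_sub_linear_le_of_abs_le_one (hc : |c| ≤ 1) (hx : |x| ≤ 1 / 2) :
    |(1 + x) ^ c - 1 - c * x| ≤ 16 * x ^ 2 := by
  have hc1 : |c - 1| ≤ 2 := (abs_sub _ _).trans (by rw [abs_one]; linarith)
  have hc2 : |c - 2| ≤ 3 := (abs_sub _ _).trans (by rw [abs_two]; linarith)
  calc |(1 + x) ^ c - 1 - c * x| ≤ |c| * (|c - 1| * 2 ^ |c - 2|) * x ^ 2 :=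
        abs_one_add_rpow_sub_linear_le hx
    _ ≤ 1 * (2 * 2 ^ (3 : ℝ)) * x ^ 2 := by gcongr; exact one_le_two
    _ = 16 * x ^ 2 := by norm_num

lemma abs_one_add_rpow_sub_rpow_le {c' : ℝ} (hc : |c| ≤ 1) (hc' : |c'| ≤ 1) (hx : |x| ≤ 1 / 2) :
    |(1 + x) ^ c - (1 + x) ^ c'| ≤ 8 * |x| := by
  have h := abs_sub ((1 + x) ^ c - 1) ((1 + x) ^ c' - 1)
  rw [sub_sub_sub_cancel_right] at h
  linarith [abs_one_add_rpow_sub_one_le_of_abs_le_one hc hx,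
    abs_one_add_rpow_sub_one_le_of_abs_le_one hc' hx]

-- The first-order terms `(c - c') x` of the two differences cancel.
lemma abs_one_add_rpow_sub_rpow_symm_le {c' : ℝ} (hc : |c| ≤ 1) (hc' : |c'| ≤ 1)
    (hx : |x| ≤ 1 / 2) :
    |((1 + x) ^ c - (1 + x) ^ c') + ((1 + -x) ^ c - (1 + -x) ^ c')| ≤ 64 * x ^ 2 := by
  have hx' : |-x| ≤ 1 / 2 := by rwa [abs_neg]
  have hplus := abs_le.1 (abs_one_add_rpow_sub_linear_le_of_abs_le_one hc hx)
  have hplus' := abs_le.1 (abs_one_add_rpow_sub_linear_le_of_abs_le_one hc' hx)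
  have hminus := abs_le.1 (abs_one_add_rpow_sub_linear_le_of_abs_le_one hc hx')
  have hminus' := abs_le.1 (abs_one_add_rpow_sub_linear_le_of_abs_le_one hc' hx')
  rw [neg_sq] at hminus hminus'
  rw [abs_le]
  constructor <;> linarith

lemma rpow_le_sq (hx : 1 ≤ x) (hc : c ≤ 2) : x ^ c ≤ x ^ 2 := by
  rw [← rpow_two]
  exact rpow_le_rpow_of_exponent_le hx hc

lemma add_rpow_eq_mul_one_add_rpow (hR : 0 < R) (hb : |b / R| ≤ 1 / 2) :
    (R + b) ^ c = R ^ c * (1 + b / R) ^ c := by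
  rw [← mul_rpow hR.le (by linarith [(abs_le.1 hb).1]), mul_add, mul_one, mul_div_cancel₀ b hR.ne']

lemma abs_div_le_half (hR : 0 < R) (hb : 2 * |b| ≤ R) : |b / R| ≤ 1 / 2 := by
  rw [abs_div, abs_of_pos hR, div_le_iff₀ hR]
  linarith

lemma abs_add_rpow_sub_rpow_le (hR : 0 < R) (hb : 2 * |b| ≤ R) :
    |(R + b) ^ c - R ^ c| ≤ |c| * 2 ^ |c - 1| * |b| * R ^ (c - 1) := by
  have hle := abs_div_le_half hR hb
  have hRc : 0 < R ^ c := rpow_pos_of_pos hR c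
  calc |(R + b) ^ c - R ^ c| = R ^ c * |(1 + b / R) ^ c - 1| := by
        rw [add_rpow_eq_mul_one_add_rpow hR hle, ← mul_sub_one, abs_mul, abs_of_pos hRc]
    _ ≤ R ^ c * (|c| * 2 ^ |c - 1| * |b / R|) := by
        gcongr; exact abs_one_add_rpow_sub_one_le hle
    _ = |c| * 2 ^ |c - 1| * |b| * R ^ (c - 1) := by
        rw [rpow_sub_one hR.ne', abs_div, abs_of_pos hR]; ring

lemma abs_sub_rpow_add_add_rpow_sub_le (hR : 0 < R) (hb : 2 * |b| ≤ R) :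
    |(R - b) ^ c + (R + b) ^ c - 2 * R ^ c| ≤
      2 * (|c| * (|c - 1| * 2 ^ |c - 2|)) * b ^ 2 * R ^ (c - 2) := by
  have hplus := abs_div_le_half hR hb
  have hminus : |-b / R| ≤ 1 / 2 := by rwa [neg_div, abs_neg]
  have hRc : 0 < R ^ c := rpow_pos_of_pos hR c
  set K := |c| * (|c - 1| * 2 ^ |c - 2|)
  have hfactor : (R - b) ^ c + (R + b) ^ c - 2 * R ^ c =
      R ^ c * (((1 + -b / R) ^ c - 1 - c * (-b / R)) + ((1 + b / R) ^ c - 1 - c * (b / R))) := by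
    rw [sub_eq_add_neg R b, add_rpow_eq_mul_one_add_rpow hR hminus,
      add_rpow_eq_mul_one_add_rpow hR hplus]
    ring
  calc |(R - b) ^ c + (R + b) ^ c - 2 * R ^ c| ≤
        R ^ c * (K * (-b / R) ^ 2 + K * (b / R) ^ 2) := by
        rw [hfactor, abs_mul, abs_of_pos hRc]
        gcongr
        exact (abs_add_le _ _).trans (add_le_add (abs_one_add_rpow_sub_linear_le hminus)
          (abs_one_add_rpow_sub_linear_le hplus))
    _ = 2 * K * b ^ 2 * R ^ (c - 2) := by
        rw [rpow_sub hR, rpow_two]; field_simp; ring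

end PowerIncrements

section PrincipalValue

variable {p a b c R : ℝ}

lemma tendsto_const_mul_rpow_zero {s : ℝ} (K : ℝ) (hs : s < 0) :
    Tendsto (fun R : ℝ => K * R ^ s) atTop (𝓝 0) := by
  simpa using (tendsto_rpow_neg_atTop (neg_pos.2 hs)).const_mul K

lemma tendsto_integral_window {Q : ℝ → ℝ} (hQ : Tendsto Q atTop (𝓝 0)) (k : ℝ) :
    Tendsto (fun R => ∫ r in R..R + k, Q r) atTop (𝓝 0) := by
  rw [Metric.tendsto_atTop]
  intro ε hε
  have hk : 0 < |k| + 1 := by positivity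
  obtain ⟨N, hN⟩ := (Metric.tendsto_atTop.1 hQ) (ε / (|k| + 1)) (by positivity)
  refine ⟨N + |k|, fun R hR => ?_⟩
  have hbound : ∀ x ∈ uIoc R (R + k), ‖Q x‖ ≤ ε / (|k| + 1) := by
    intro x hx
    have hmin : R - |k| ≤ min R (R + k) :=
      le_min (by linarith [abs_nonneg k]) (by linarith [neg_abs_le k])
    simpa using (hN x (by linarith [hx.1])).le
  rw [dist_zero_right]
  refine (intervalIntegral.norm_integral_le_of_norm_le_const hbound).trans_lt ?_
  rw [add_sub_cancel_left, div_mul_eq_mul_div, div_lt_iff₀ hk]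
  exact mul_lt_mul_of_pos_left (lt_add_one _) hε

lemma tendsto_integral_shift_sub {Q : ℝ → ℝ} (hQ : ∀ a b, IntervalIntegrable Q volume a b)
    (htop : Tendsto Q atTop (𝓝 0)) (hbot : Tendsto Q atBot (𝓝 0)) (k : ℝ) :
    Tendsto (fun R => (∫ r in -R..R, Q (r + k)) - ∫ r in -R..R, Q r) atTop (𝓝 0) := by
  have hwindows : ∀ R, (∫ r in R..R + k, Q r) + ∫ r in R..R + -k, Q (-r) =
      (∫ r in -R..R, Q (r + k)) - ∫ r in -R..R, Q r := by
    intro R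
    have hleft := intervalIntegral.integral_add_adjacent_intervals (hQ (-R + k) (-R)) (hQ (-R) R)
    have hright :=
      intervalIntegral.integral_add_adjacent_intervals (hQ (-R + k) R) (hQ R (R + k))
    rw [intervalIntegral.integral_comp_add_right (fun r => Q r),
      intervalIntegral.integral_comp_neg (fun r => Q r), show -(R + -k) = -R + k by ring,
      ← hright, ← hleft]
    ring
  refine Tendsto.congr hwindows ?_
  simpa using (tendsto_integral_window htop k).add
    (tendsto_integral_window (hbot.comp tendsto_neg_atTop_atBot) (-k))

lemma intervalIntegrable_abs_rpow (hc : -1 < c) (a b : ℝ) :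
    IntervalIntegrable (fun x : ℝ => |x| ^ c) volume a b := by
  have hnonneg : ∀ b : ℝ, 0 ≤ b → IntervalIntegrable (fun x : ℝ => |x| ^ c) volume 0 b := by
    intro b hb
    refine (intervalIntegral.intervalIntegrable_rpow' hc (a := 0) (b := b)).congr fun x hx => ?_
    rw [uIoc_of_le hb] at hx
    rw [abs_of_pos hx.1]
  have hzero : ∀ b : ℝ, IntervalIntegrable (fun x : ℝ => |x| ^ c) volume 0 b := by
    intro b
    rcases le_total 0 b with hb | hb
    · exact hnonneg b hb
    · simpa using (IntervalIntegrable.iff_comp_neg).1 (hnonneg (-b) (neg_nonneg.2 hb))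
  exact (hzero a).symm.trans (hzero b)

lemma intervalIntegrable_abs_sub_rpow (hc : -1 < c) (k a b : ℝ) :
    IntervalIntegrable (fun x : ℝ => |x - k| ^ c) volume a b := by
  simpa using (intervalIntegrable_abs_rpow hc (a - k) (b - k)).comp_sub_right k

lemma integral_neg_eq_integral_comp_neg_add {E : Type*} [NormedAddCommGroup E] [NormedSpace ℝ E]
    {f : ℝ → E} (hneg : IntervalIntegrable f volume (-R) 0)
    (hpos : IntervalIntegrable f volume 0 R) :
    ∫ r in -R..R, f r = ∫ r in (0 : ℝ)..R, (f (-r) + f r) := by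
  have hneg' : IntervalIntegrable (fun r => f (-r)) volume 0 R := by
    simpa using ((IntervalIntegrable.iff_comp_neg).1 hneg).symm
  rw [intervalIntegral.integral_add hneg' hpos, intervalIntegral.integral_comp_neg, neg_zero,
    intervalIntegral.integral_add_adjacent_intervals hneg hpos]

lemma integral_abs_rpow {B : ℝ} (hc : 0 < c) (hB : 0 ≤ B) :
    ∫ x in (0 : ℝ)..B, |x| ^ (c - 1) = B ^ c / c := by
  rw [intervalIntegral.integral_congr (g := fun x => x ^ (c - 1)) fun x hx => ?_,
    integral_rpow (Or.inl (by linarith))]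
  · simp [hc.ne']
  · rw [uIcc_of_le hB] at hx
    rw [abs_of_nonneg hx.1]

lemma integral_abs_sub_rpow_symm (hc : 0 < c) (hR : |b| ≤ R) :
    ∫ x in -R..R, |x - b| ^ (c - 1) = ((R - b) ^ c + (R + b) ^ c) / c := by
  obtain ⟨hbl, hbr⟩ := abs_le.1 hR
  have hint := intervalIntegrable_abs_rpow (c := c - 1) (by linarith)
  have hleft : ∫ x in (-R - b)..0, |x| ^ (c - 1) = ∫ x in (0 : ℝ)..(R + b), |x| ^ (c - 1) := by
    have hneg := intervalIntegral.integral_comp_neg (a := 0) (b := R + b)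
      (fun x : ℝ => |x| ^ (c - 1))
    simp only [abs_neg, neg_zero, neg_add'] at hneg
    exact hneg.symm
  rw [intervalIntegral.integral_comp_sub_right (fun x => |x| ^ (c - 1)),
    ← intervalIntegral.integral_add_adjacent_intervals (hint (-R - b) 0) (hint 0 (R - b)), hleft,
    integral_abs_rpow hc (by linarith), integral_abs_rpow hc (by linarith)]
  ring

lemma sq_rpow_eq_rpow_two_mul (hR : 0 ≤ R) (s : ℝ) : (R ^ 2) ^ s = R ^ (2 * s) := by
  rw [rpow_mul hR, rpow_two]

lemma tendsto_power_defect (hp1 : p < 1) (A b : ℝ) :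
    Tendsto (fun R : ℝ => 2 * (R ^ 2 - A) ^ p - ((R - b) ^ (2 * p) + (R + b) ^ (2 * p)))
      atTop (𝓝 0) := by
  set K₁ := |p| * 2 ^ |p - 1| * |A|
  set K₂ := 2 * (|2 * p| * (|2 * p - 1| * 2 ^ |2 * p - 2|)) * b ^ 2
  refine squeeze_zero_norm' ?_ (tendsto_const_mul_rpow_zero (2 * K₁ + K₂)
    (show 2 * p - 2 < 0 by linarith))
  filter_upwards [eventually_ge_atTop (2 * |A| + 2 * |b| + 1)] with R hR
  have hA := abs_nonneg A
  have hb := abs_nonneg b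
  have hR1 : 1 ≤ R := by linarith
  have hR0 : 0 < R := by linarith
  have hquad : |(R ^ 2 - A) ^ p - R ^ (2 * p)| ≤ K₁ * R ^ (2 * p - 2) := by
    have h := abs_add_rpow_sub_rpow_le (R := R ^ 2) (b := -A) (c := p) (by positivity)
      (by rw [abs_neg]; nlinarith)
    rwa [abs_neg, ← sub_eq_add_neg, sq_rpow_eq_rpow_two_mul hR0.le,
      sq_rpow_eq_rpow_two_mul hR0.le, mul_sub_one] at h
  have hlin : |(R - b) ^ (2 * p) + (R + b) ^ (2 * p) - 2 * R ^ (2 * p)| ≤ K₂ * R ^ (2 * p - 2) :=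
    abs_sub_rpow_add_add_rpow_sub_le hR0 (by linarith)
  rw [Real.norm_eq_abs, abs_le]
  rw [abs_le] at hquad hlin
  constructor <;> linarith [hquad.1, hquad.2, hlin.1, hlin.2]

/-- The kernel `|r|^(-1) (r² + 2br - a)₊^p - |r|^(2p-1)`, whose principal value at infinity is, up
to the substitution `r = 1/t`, the one-dimensional fractional Laplacian of a power of a truncated
quadratic polynomial. -/
noncomputable def quadKernel (p a b r : ℝ) : ℝ :=
  (max (r ^ 2 + 2 * b * r - a) 0) ^ p / |r| - |r| ^ (2 * p - 1)

lemma continuous_quad_div_abs (hp : 0 < p) (ha : 0 < a) :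
    Continuous (fun r : ℝ => (max (r ^ 2 + 2 * b * r - a) 0) ^ p / |r|) := by
  rw [continuous_iff_continuousAt]
  intro r
  rcases eq_or_ne r 0 with rfl | hr
  · have hquad : Continuous fun r : ℝ => r ^ 2 + 2 * b * r - a := by fun_prop
    have hneg : ∀ᶠ r : ℝ in 𝓝 0, r ^ 2 + 2 * b * r - a < 0 :=
      hquad.continuousAt.eventually_lt continuousAt_const (by simpa using ha)
    refine continuousAt_const.congr (f := fun _ => 0) ?_
    filter_upwards [hneg] with r hr
    rw [max_eq_right hr.le, zero_rpow hp.ne', zero_div]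
  · have hpow : Continuous (fun r : ℝ => (max (r ^ 2 + 2 * b * r - a) 0) ^ p) :=
      Continuous.rpow_const (by fun_prop) fun _ => Or.inr hp.le
    exact hpow.continuousAt.div continuous_abs.continuousAt (abs_ne_zero.2 hr)

lemma intervalIntegrable_quadKernel (hp : 0 < p) (ha : 0 < a) (x y : ℝ) :
    IntervalIntegrable (quadKernel p a b) volume x y :=
  ((continuous_quad_div_abs hp ha).intervalIntegrable x y).sub
    (intervalIntegrable_abs_rpow (by linarith) x y)

lemma abs_quadKernel_le (hR : 4 * |a| + 4 * |b| + 1 ≤ R) :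
    |quadKernel p a b R| ≤ |p| * 2 ^ |p - 1| * (2 * |b| + |a|) * R ^ (2 * p - 2) := by
  have ha := abs_nonneg a
  have hb := abs_nonneg b
  have hR1 : 1 ≤ R := by linarith
  have hR0 : 0 < R := by linarith
  have hlinear : |2 * b * R - a| ≤ (2 * |b| + |a|) * R := by
    refine (abs_sub _ _).trans ?_
    rw [abs_mul, abs_mul, abs_two, abs_of_pos hR0]
    nlinarith
  have hsmall : 2 * |2 * b * R - a| ≤ R ^ 2 := by nlinarith
  have hquad := abs_add_rpow_sub_rpow_le (c := p) (sq_pos_of_pos hR0) hsmall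
  have hnonneg : 0 ≤ R ^ 2 + 2 * b * R - a := by linarith [neg_abs_le (2 * b * R - a), sq_nonneg R]
  have hkernel : quadKernel p a b R =
      ((R ^ 2 + (2 * b * R - a)) ^ p - (R ^ 2) ^ p) / R := by
    rw [quadKernel, abs_of_pos hR0, max_eq_left hnonneg, sq_rpow_eq_rpow_two_mul hR0.le,
      rpow_sub_one hR0.ne', sub_div, add_sub_assoc]
  rw [hkernel, abs_div, abs_of_pos hR0, div_le_iff₀ hR0]
  calc _ ≤ |p| * 2 ^ |p - 1| * |2 * b * R - a| * (R ^ 2) ^ (p - 1) := hquad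
    _ ≤ |p| * 2 ^ |p - 1| * ((2 * |b| + |a|) * R) * (R ^ 2) ^ (p - 1) := by gcongr
    _ = |p| * 2 ^ |p - 1| * (2 * |b| + |a|) * R ^ (2 * p - 2) * R := by
      rw [sq_rpow_eq_rpow_two_mul hR0.le, mul_sub_one]; ring

lemma tendsto_quadKernel_atTop (hp1 : p < 1) : Tendsto (quadKernel p a b) atTop (𝓝 0) := by
  refine squeeze_zero_norm' ?_ (tendsto_const_mul_rpow_zero
    (|p| * 2 ^ |p - 1| * (2 * |b| + |a|)) (show 2 * p - 2 < 0 by linarith))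
  filter_upwards [eventually_ge_atTop (4 * |a| + 4 * |b| + 1)] with R hR
  exact abs_quadKernel_le hR

lemma quadKernel_neg (p a b r : ℝ) : quadKernel p a b (-r) = quadKernel p a (-b) r := by
  simp only [quadKernel, abs_neg]
  congr 4
  ring

lemma tendsto_quadKernel_atBot (hp1 : p < 1) : Tendsto (quadKernel p a b) atBot (𝓝 0) := by
  have hneg := (tendsto_quadKernel_atTop (a := a) (b := -b) hp1).comp tendsto_neg_atBot_atTop
  refine hneg.congr fun r => ?_
  rw [Function.comp_apply, quadKernel_neg, neg_neg]

lemma continuous_max_rpow_div_add (hp : 0 < p) (ha : 0 < a) :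
    Continuous (fun y : ℝ => (max y 0) ^ p / (max y 0 + a)) :=
  ((continuous_id.max continuous_const).rpow_const fun _ => Or.inr hp.le).div (by fun_prop)
    fun y => by positivity

lemma integral_max_rpow_div_add {Y : ℝ} (hp : 0 < p) (ha : 0 < a) (hY : 0 ≤ Y) :
    ∫ y in (0 : ℝ)..Y, (max y 0) ^ p / (max y 0 + a) =
      Y ^ p / p - a * ∫ y in (0 : ℝ)..Y, y ^ (p - 1) / (y + a) := by
  have hpow : IntervalIntegrable (fun y : ℝ => y ^ (p - 1)) volume 0 Y :=
    intervalIntegral.intervalIntegrable_rpow' (by linarith)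
  have hdiv : IntervalIntegrable (fun y : ℝ => y ^ (p - 1) / (y + a)) volume 0 Y := by
    simp_rw [div_eq_mul_inv]
    refine hpow.mul_continuousOn ?_
    rw [uIcc_of_le hY]
    exact ContinuousOn.inv₀ (by fun_prop) (fun y hy => by linarith [hy.1])
  have hsplit : ∫ y in (0 : ℝ)..Y, (max y 0) ^ p / (max y 0 + a) =
      ∫ y in (0 : ℝ)..Y, (y ^ (p - 1) - a * (y ^ (p - 1) / (y + a))) := by
    refine intervalIntegral.integral_congr_ae (Eventually.of_forall fun y hy => ?_)
    rw [uIoc_of_le hY] at hy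
    have hy0 := hy.1
    rw [max_eq_left hy0.le, rpow_sub_one hy0.ne']
    field_simp
    ring
  rw [hsplit, intervalIntegral.integral_sub hpow (hdiv.const_mul a),
    intervalIntegral.integral_const_mul, integral_rpow (Or.inl (by linarith))]
  simp [hp.ne']

lemma max_rpow_div_abs_symm_sum {r : ℝ} (hp : 0 < p) (ha : 0 < a) (hr : 0 ≤ r) :
    (max (r ^ 2 - (a + b ^ 2)) 0) ^ p / |-r - b| + (max (r ^ 2 - (a + b ^ 2)) 0) ^ p / |r - b| =
      (max (r ^ 2 - (a + b ^ 2)) 0) ^ p / (max (r ^ 2 - (a + b ^ 2)) 0 + a) * (2 * r) := by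
  rcases le_total (r ^ 2 - (a + b ^ 2)) 0 with hneg | hpos
  · simp [max_eq_right hneg, zero_rpow hp.ne']
  · obtain ⟨hleft, hright⟩ := abs_lt.1 (abs_lt_of_sq_lt_sq (by linarith : b ^ 2 < r ^ 2) hr)
    have hplus : r + b ≠ 0 := by linarith
    have hminus : r - b ≠ 0 := by linarith
    rw [max_eq_left hpos, abs_of_neg (by linarith : -r - b < 0), abs_of_pos (sub_pos.2 hright),
      show -(-r - b) = r + b by ring, show r ^ 2 - (a + b ^ 2) + a = (r + b) * (r - b) by ring]
    field_simp
    ring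

lemma integral_quad_div_abs (hp : 0 < p) (ha : 0 < a) (hR : 0 ≤ R) :
    ∫ r in -R..R, (max ((r - b) ^ 2 + 2 * b * (r - b) - a) 0) ^ p / |r - b| =
      ∫ y in (0 : ℝ)..(R ^ 2 - (a + b ^ 2)), (max y 0) ^ p / (max y 0 + a) := by
  set h : ℝ → ℝ := fun y => (max y 0) ^ p / (max y 0 + a) with hh
  have hcont : Continuous fun r : ℝ =>
      (max ((r - b) ^ 2 + 2 * b * (r - b) - a) 0) ^ p / |r - b| :=
    (continuous_quad_div_abs (b := b) hp ha).comp (continuous_id.sub continuous_const)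
  have hhc : Continuous h := continuous_max_rpow_div_add hp ha
  have hvanish : ∫ y in ((0 : ℝ) ^ 2 - (a + b ^ 2))..0, h y = 0 := by
    rw [intervalIntegral.integral_congr (g := fun _ => (0 : ℝ)) fun y hy => ?_,
      intervalIntegral.integral_zero]
    rw [uIcc_of_le (by nlinarith)] at hy
    simp only [hh, max_eq_right hy.2, zero_rpow hp.ne', zero_div]
  calc _ = ∫ r in (0 : ℝ)..R, (h ∘ fun r => r ^ 2 - (a + b ^ 2)) r * (2 * r) := by
        rw [integral_neg_eq_integral_comp_neg_add (hcont.intervalIntegrable _ _)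
          (hcont.intervalIntegrable _ _)]
        refine intervalIntegral.integral_congr fun r hr => ?_
        rw [uIcc_of_le hR] at hr
        simp only [hh, Function.comp, ← max_rpow_div_abs_symm_sum hp ha hr.1]
        ring_nf
    _ = ∫ y in ((0 : ℝ) ^ 2 - (a + b ^ 2))..(R ^ 2 - (a + b ^ 2)), h y :=
        intervalIntegral.integral_comp_mul_deriv
          (fun r _ => by simpa using (hasDerivAt_pow 2 r).sub_const (a + b ^ 2)) (by fun_prop) hhc
    _ = ∫ y in (0 : ℝ)..(R ^ 2 - (a + b ^ 2)), h y := by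
        rw [← intervalIntegral.integral_add_adjacent_intervals (hhc.intervalIntegrable _ 0)
          (hhc.intervalIntegrable 0 _), hvanish, zero_add]

lemma integral_quadKernel_sub (hp : 0 < p) (ha : 0 < a) (hR : a + b ^ 2 + |b| + 1 ≤ R) :
    ∫ r in -R..R, quadKernel p a b (r - b) =
      1 / (2 * p) * (2 * (R ^ 2 - (a + b ^ 2)) ^ p - ((R - b) ^ (2 * p) + (R + b) ^ (2 * p))) -
        a * ∫ y in (0 : ℝ)..(R ^ 2 - (a + b ^ 2)), y ^ (p - 1) / (y + a) := by
  have hb := abs_nonneg b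
  have hR1 : 1 ≤ R := by linarith [sq_nonneg b]
  have hquad : IntervalIntegrable (fun r : ℝ =>
      (max ((r - b) ^ 2 + 2 * b * (r - b) - a) 0) ^ p / |r - b|) volume (-R) R :=
    ((continuous_quad_div_abs (b := b) hp ha).comp
      (continuous_id.sub continuous_const)).intervalIntegrable _ _
  simp only [quadKernel]
  rw [intervalIntegral.integral_sub hquad (intervalIntegrable_abs_sub_rpow (by linarith) b _ _),
    integral_quad_div_abs hp ha (by linarith), integral_abs_sub_rpow_symm (c := 2 * p)
      (by linarith) (by linarith [sq_nonneg b]), integral_max_rpow_div_add hp ha (by nlinarith)]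
  field_simp
  ring

-- After the translation by `b` the quadratic is even, and the principal value becomes a beta
-- integral.
lemma tendsto_integral_quadKernel (b : ℝ) (hp : 0 < p) (hp1 : p < 1) (ha : 0 < a) :
    Tendsto (fun R => ∫ r in -R..R, quadKernel p a b r) atTop
      (𝓝 (-(π / sin (π * p)) * a ^ p)) := by
  have hshift := tendsto_integral_shift_sub (intervalIntegrable_quadKernel (b := b) hp ha)
    (tendsto_quadKernel_atTop hp1) (tendsto_quadKernel_atBot hp1) (-b)
  suffices htranslated : Tendsto (fun R => ∫ r in -R..R, quadKernel p a b (r + -b)) atTop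
      (𝓝 (-(π / sin (π * p)) * a ^ p)) by
    simpa using htranslated.sub hshift
  have hupper : Tendsto (fun R : ℝ => R ^ 2 - (a + b ^ 2)) atTop atTop :=
    tendsto_atTop_add_const_right _ _ (tendsto_pow_atTop two_ne_zero)
  have hbeta := (intervalIntegral_tendsto_integral_Ioi 0 (integrableOn_rpow_div_add hp hp1 ha)
    hupper).const_mul a
  rw [integral_rpow_div_add hp hp1 ha] at hbeta
  have hlimit := ((tendsto_power_defect hp1 (a + b ^ 2) b).const_mul (1 / (2 * p))).sub hbeta
  have hvalue : 1 / (2 * p) * 0 - a * (a ^ (p - 1) * (π / sin (π * p))) =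
      -(π / sin (π * p)) * a ^ p := by
    rw [rpow_sub_one ha.ne']
    field_simp
    ring
  rw [hvalue] at hlimit
  refine hlimit.congr' ?_
  filter_upwards [eventually_ge_atTop (a + b ^ 2 + |b| + 1)] with R hR
  simp only [← sub_eq_add_neg]
  rw [integral_quadKernel_sub hp ha hR]

end PrincipalValue

section LineKernel

variable {α δ K : ℝ} {P : ℝ → ℝ}

/-- The kernel at height one, in the coordinate `ρ = 1 + 1 / σ` on a line, of a function which is
homogeneous of degree `α - δ` with profile `P` and vanishes below height zero; the height
`1 + σ = ρ / (ρ - 1)` is positive exactly when `ρ ∉ [0, 1]`. -/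
noncomputable def lineDensity (α δ : ℝ) (P : ℝ → ℝ) : ℝ → ℝ :=
  (Icc (0 : ℝ) 1)ᶜ.indicator fun ρ => |ρ - 1| ^ (δ - 1) * |ρ| ^ (α - δ) * P ρ⁻¹

/-- The density `lineDensity` compensated by the value at the base point. -/
noncomputable def lineKernel (α δ : ℝ) (P : ℝ → ℝ) (ρ : ℝ) : ℝ :=
  lineDensity α δ P ρ - |ρ - 1| ^ (α - 1) * P 0

/-- The compensated kernel of the profile itself, in the coordinate `ρ = 1 / v`. -/
noncomputable def lineKernelZero (α : ℝ) (P : ℝ → ℝ) (ρ : ℝ) : ℝ :=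
  |ρ| ^ (α - 1) * (P ρ⁻¹ - P 0)

/-- The difference of the two kernels, estimated as an error term away from `ρ = 1`. -/
noncomputable def lineDefect (α δ : ℝ) (P : ℝ → ℝ) (ρ : ℝ) : ℝ :=
  lineKernel α δ P ρ - lineKernelZero α P ρ

lemma lineDensity_of_mem {ρ : ℝ} (hρ : ρ ∈ Icc (0 : ℝ) 1) : lineDensity α δ P ρ = 0 :=
  indicator_of_notMem (notMem_compl_iff.2 hρ) _

lemma lineDensity_of_notMem {ρ : ℝ} (hρ : ρ ∉ Icc (0 : ℝ) 1) :
    lineDensity α δ P ρ = |ρ - 1| ^ (δ - 1) * |ρ| ^ (α - δ) * P ρ⁻¹ :=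
  indicator_of_mem hρ _

lemma abs_le_of_forall_mem_Icc (hPK : ∀ v, P v ∈ Icc 0 K) (v : ℝ) : |P v| ≤ K :=
  (abs_of_nonneg (hPK v).1).trans_le (hPK v).2

lemma abs_sub_le_of_forall_mem_Icc (hPK : ∀ v, P v ∈ Icc 0 K) (u v : ℝ) : |P u - P v| ≤ K :=
  abs_sub_le_of_nonneg_of_le (hPK u).1 (hPK u).2 (hPK v).1 (hPK v).2

lemma intervalIntegrable_mul_of_bound {f g : ℝ → ℝ} {a b : ℝ}
    (hf : IntervalIntegrable f volume a b) (hg : Measurable g) (hK : ∀ x, |g x| ≤ K) :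
    IntervalIntegrable (fun x => f x * g x) volume a b := by
  rw [intervalIntegrable_iff] at hf ⊢
  exact hf.mul_bdd hg.aestronglyMeasurable (Eventually.of_forall hK)

lemma intervalIntegrable_lineDensity (hδ : 0 < δ) (hδα : δ ≤ α) (hP : Continuous P)
    (hPK : ∀ v, P v ∈ Icc 0 K) (a b : ℝ) :
    IntervalIntegrable (lineDensity α δ P) volume a b := by
  have hpow : IntervalIntegrable (fun ρ : ℝ => |ρ - 1| ^ (δ - 1) * |ρ| ^ (α - δ)) volume a b :=
    (intervalIntegrable_abs_sub_rpow (by linarith) 1 a b).mul_continuousOn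
      (continuous_abs.rpow_const fun _ => Or.inr (sub_nonneg.2 hδα)).continuousOn
  have hmul := intervalIntegrable_mul_of_bound hpow (hP.measurable.comp measurable_inv)
    fun ρ => abs_le_of_forall_mem_Icc hPK ρ⁻¹
  rw [intervalIntegrable_iff] at hmul ⊢
  exact hmul.indicator measurableSet_Icc.compl

lemma intervalIntegrable_lineKernel (hδ : 0 < δ) (hδα : δ ≤ α) (hP : Continuous P)
    (hPK : ∀ v, P v ∈ Icc 0 K) (a b : ℝ) :
    IntervalIntegrable (lineKernel α δ P) volume a b :=
  (intervalIntegrable_lineDensity hδ hδα hP hPK a b).sub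
    ((intervalIntegrable_abs_sub_rpow (by linarith) 1 a b).mul_const _)

lemma intervalIntegrable_lineKernelZero (hα : 0 < α) (hP : Continuous P)
    (hPK : ∀ v, P v ∈ Icc 0 K) (a b : ℝ) :
    IntervalIntegrable (lineKernelZero α P) volume a b :=
  intervalIntegrable_mul_of_bound (intervalIntegrable_abs_rpow (by linarith) a b)
    ((hP.measurable.comp measurable_inv).sub_const _)
    fun ρ => abs_sub_le_of_forall_mem_Icc hPK ρ⁻¹ 0

lemma intervalIntegrable_lineDefect (hδ : 0 < δ) (hδα : δ ≤ α) (hP : Continuous P)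
    (hPK : ∀ v, P v ∈ Icc 0 K) (a b : ℝ) :
    IntervalIntegrable (lineDefect α δ P) volume a b :=
  (intervalIntegrable_lineKernel hδ hδα hP hPK a b).sub
    (intervalIntegrable_lineKernelZero (hδ.trans_le hδα) hP hPK a b)

lemma abs_inv_le_half {ρ : ℝ} (hρ : 2 ≤ |ρ|) : |ρ⁻¹| ≤ 1 / 2 := by
  rw [abs_inv, one_div]
  exact inv_anti₀ two_pos hρ

lemma lineDefect_eq {ρ : ℝ} (hρ : 2 ≤ |ρ|) :
    lineDefect α δ P ρ = |ρ| ^ (α - 1) * (((1 + -ρ⁻¹) ^ (δ - 1) - 1) * (P ρ⁻¹ - P 0) +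
      P 0 * ((1 + -ρ⁻¹) ^ (δ - 1) - (1 + -ρ⁻¹) ^ (α - 1))) := by
  have habs : 0 < |ρ| := by linarith
  have hne : ρ ≠ 0 := abs_pos.1 habs
  have hmem : ρ ∉ Icc (0 : ℝ) 1 := fun h => by
    rw [abs_of_nonneg h.1] at hρ; linarith [h.2]
  have hpos : 0 ≤ 1 + -ρ⁻¹ := by linarith [(abs_le.1 (abs_inv_le_half hρ)).2]
  have hfactor : |ρ - 1| = |ρ| * (1 + -ρ⁻¹) := by
    rw [← abs_of_nonneg hpos, ← abs_mul]; congr 1; field_simp; ring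
  have hsplit : |ρ| ^ (α - 1) = |ρ| ^ (δ - 1) * |ρ| ^ (α - δ) := by
    rw [← rpow_add habs]; congr 1; ring
  rw [lineDefect, lineKernel, lineKernelZero, lineDensity_of_notMem hmem, hfactor,
    mul_rpow habs.le hpos, mul_rpow habs.le hpos, hsplit]
  ring

lemma abs_lineDefect_le (hδ : 0 ≤ δ) (hδα : δ ≤ α) (hα : α ≤ 2)
    (hPK : ∀ v, P v ∈ Icc 0 K) {ρ : ℝ} (hρ : 2 ≤ |ρ|) :
    |lineDefect α δ P ρ| ≤ 12 * K * |ρ| ^ (α - 2) := by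
  have habs : 0 < |ρ| := by linarith
  have hK : 0 ≤ K := (hPK 0).1.trans (hPK 0).2
  have hinv : |-ρ⁻¹| ≤ 1 / 2 := by rw [abs_neg]; exact abs_inv_le_half hρ
  have hcδ : |δ - 1| ≤ 1 := abs_le.2 ⟨by linarith, by linarith⟩
  have hcα : |α - 1| ≤ 1 := abs_le.2 ⟨by linarith, by linarith⟩
  have hexp : |ρ| ^ (α - 2) = |ρ| ^ (α - 1) * |ρ|⁻¹ := by
    rw [← rpow_neg_one |ρ|, ← rpow_add habs]; congr 1; ring
  rw [lineDefect_eq hρ, abs_mul, abs_of_nonneg (rpow_nonneg habs.le _)]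
  calc _ ≤ |ρ| ^ (α - 1) * (4 * |-ρ⁻¹| * K + K * (8 * |-ρ⁻¹|)) := by
        gcongr
        refine (abs_add_le _ _).trans ?_
        rw [abs_mul, abs_mul]
        gcongr
        · exact abs_one_add_rpow_sub_one_le_of_abs_le_one hcδ hinv
        · exact abs_sub_le_of_forall_mem_Icc hPK _ _
        · exact abs_le_of_forall_mem_Icc hPK _
        · exact abs_one_add_rpow_sub_rpow_le hcδ hcα hinv
    _ = 12 * K * |ρ| ^ (α - 2) := by rw [hexp, abs_neg, abs_inv]; ring

lemma abs_lineDefect_symm_le (hδ : 0 ≤ δ) (hδα : δ ≤ α) (hα : α ≤ 2)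
    (hPK : ∀ v, P v ∈ Icc 0 K) {ρ m : ℝ} (hρ : 2 ≤ ρ)
    (hpos : |P ρ⁻¹ - P 0| ≤ m) (hneg : |P (-ρ⁻¹) - P 0| ≤ m) :
    |lineDefect α δ P (-ρ) + lineDefect α δ P ρ| ≤
      8 * (ρ ^ (α - 2) * m) + 64 * K * ρ ^ (α - 3) := by
  have hρ0 : 0 < ρ := by linarith
  have hρ' : 2 ≤ |ρ| := by rwa [abs_of_pos hρ0]
  have hK : 0 ≤ K := (hPK 0).1.trans (hPK 0).2
  have hinv : |ρ⁻¹| ≤ 1 / 2 := abs_inv_le_half hρ'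
  have hcδ : |δ - 1| ≤ 1 := abs_le.2 ⟨by linarith, by linarith⟩
  have hcα : |α - 1| ≤ 1 := abs_le.2 ⟨by linarith, by linarith⟩
  have hfirst : ∀ x v, |x| = ρ⁻¹ → |P v - P 0| ≤ m →
      |((1 + x) ^ (δ - 1) - 1) * (P v - P 0)| ≤ 4 * ρ⁻¹ * m := by
    intro x v hx hv
    rw [abs_mul]
    have hx' : |x| ≤ 1 / 2 := by rwa [hx, ← abs_of_pos (inv_pos.2 hρ0)]
    gcongr
    exact hx ▸ abs_one_add_rpow_sub_one_le_of_abs_le_one hcδ hx'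
  have hplus := hfirst (-ρ⁻¹) _ (by rw [abs_neg, abs_of_pos (inv_pos.2 hρ0)]) hpos
  have hminus := hfirst ρ⁻¹ _ (abs_of_pos (inv_pos.2 hρ0)) hneg
  have hsecond : |P 0 * ((1 + ρ⁻¹) ^ (δ - 1) - (1 + ρ⁻¹) ^ (α - 1) +
      ((1 + -ρ⁻¹) ^ (δ - 1) - (1 + -ρ⁻¹) ^ (α - 1)))| ≤ K * (64 * ρ⁻¹ ^ 2) := by
    rw [abs_mul]
    gcongr
    · exact abs_le_of_forall_mem_Icc hPK _
    · exact abs_one_add_rpow_sub_rpow_symm_le hcδ hcα hinv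
  have hexp₂ : ρ ^ (α - 2) = ρ ^ (α - 1) * ρ⁻¹ := by
    rw [← rpow_neg_one ρ, ← rpow_add hρ0]; congr 1; ring
  have hexp₃ : ρ ^ (α - 3) = ρ ^ (α - 1) * ρ⁻¹ ^ 2 := by
    rw [inv_pow, ← rpow_two, ← rpow_neg hρ0.le, ← rpow_add hρ0]; congr 1; ring
  rw [lineDefect_eq hρ', lineDefect_eq (by rwa [abs_neg]), abs_neg, abs_of_pos hρ0, inv_neg,
    neg_neg, ← mul_add, abs_mul, abs_of_pos (rpow_pos_of_pos hρ0 _)]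
  calc _ ≤ ρ ^ (α - 1) * (4 * ρ⁻¹ * m + 4 * ρ⁻¹ * m + K * (64 * ρ⁻¹ ^ 2)) := by
        gcongr
        rw [mul_add] at hsecond
        rw [abs_le] at hplus hminus hsecond ⊢
        constructor <;> linarith
    _ = _ := by rw [hexp₂, hexp₃]; ring

end LineKernel

section LineEstimate

variable {α δ K : ℝ} {P : ℝ → ℝ}

/-- The mass of `lineDensity` near `ρ = 1`, which carries the singularity `1 / δ`. -/
noncomputable def lineMain (α δ : ℝ) (P : ℝ → ℝ) : ℝ :=
  ∫ ρ in (1 : ℝ)..2, (ρ - 1) ^ (δ - 1) * ρ ^ (α - δ) * P ρ⁻¹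

lemma integral_lineDensity_near (hδ : 0 < δ) (hδα : δ ≤ α) (hP : Continuous P)
    (hPK : ∀ v, P v ∈ Icc 0 K) :
    ∫ ρ in (-2 : ℝ)..2, lineDensity α δ P ρ =
      (∫ ρ in (-2 : ℝ)..0, lineDensity α δ P ρ) + lineMain α δ P := by
  have hint := intervalIntegrable_lineDensity hδ hδα hP hPK
  have hgap : ∫ ρ in (0 : ℝ)..1, lineDensity α δ P ρ = 0 := by
    rw [intervalIntegral.integral_congr (g := fun _ => (0 : ℝ)) fun ρ hρ => ?_,
      intervalIntegral.integral_zero]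
    rw [uIcc_of_le zero_le_one] at hρ
    exact lineDensity_of_mem hρ
  have hmain : ∫ ρ in (1 : ℝ)..2, lineDensity α δ P ρ = lineMain α δ P := by
    refine intervalIntegral.integral_congr_ae (Eventually.of_forall fun ρ hρ => ?_)
    rw [uIoc_of_le one_le_two] at hρ
    have hρ1 := hρ.1
    rw [lineDensity_of_notMem fun h => hρ1.not_ge h.2, abs_of_pos (sub_pos.2 hρ1),
      abs_of_pos (by linarith)]
  rw [← intervalIntegral.integral_add_adjacent_intervals (hint (-2) 0) (hint 0 2),
    ← intervalIntegral.integral_add_adjacent_intervals (hint 0 1) (hint 1 2), hgap, hmain,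
    zero_add]

lemma abs_lineDensity_le (hδ : δ ≤ 2) (hδα : δ ≤ α) (hα : α ≤ δ + 2)
    (hPK : ∀ v, P v ∈ Icc 0 K) {ρ : ℝ} (hρ : ρ ∈ Icc (-2 : ℝ) 0) :
    |lineDensity α δ P ρ| ≤ 12 * K := by
  have hK : 0 ≤ K := (hPK 0).1.trans (hPK 0).2
  by_cases hmem : ρ ∈ Icc (0 : ℝ) 1
  · rw [lineDensity_of_mem hmem, abs_zero]
    positivity
  have hsub : |ρ - 1| ^ (δ - 1) ≤ 3 := by
    have habs : |ρ - 1| = 1 - ρ := by rw [abs_sub_comm, abs_of_nonneg (by linarith [hρ.2])]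
    calc |ρ - 1| ^ (δ - 1) ≤ |ρ - 1| ^ (1 : ℝ) :=
          rpow_le_rpow_of_exponent_le (by linarith [hρ.2]) (by linarith)
      _ ≤ 3 := by rw [rpow_one]; linarith [hρ.1]
  have hpow : |ρ| ^ (α - δ) ≤ 4 := by
    calc |ρ| ^ (α - δ) ≤ 2 ^ (α - δ) :=
          rpow_le_rpow (abs_nonneg _) (abs_le.2 ⟨hρ.1, by linarith [hρ.2]⟩) (by linarith)
      _ ≤ 2 ^ 2 := rpow_le_sq one_le_two (by linarith)
      _ = 4 := by norm_num
  rw [lineDensity_of_notMem hmem, abs_mul, abs_mul, abs_of_nonneg (rpow_nonneg (abs_nonneg _) _),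
    abs_of_nonneg (rpow_nonneg (abs_nonneg _) _)]
  calc _ ≤ 3 * 4 * K := by gcongr; exact abs_le_of_forall_mem_Icc hPK _
    _ = 12 * K := by ring

lemma abs_integral_lineDensity_le (hδ : 0 ≤ δ) (hδα : δ ≤ α) (hα : α ≤ 2)
    (hPK : ∀ v, P v ∈ Icc 0 K) : |∫ ρ in (-2 : ℝ)..0, lineDensity α δ P ρ| ≤ 24 * K := by
  calc |∫ ρ in (-2 : ℝ)..0, lineDensity α δ P ρ| ≤ 12 * K * |0 - (-2)| := by
        rw [← Real.norm_eq_abs]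
        refine intervalIntegral.norm_integral_le_of_norm_le_const fun ρ hρ => ?_
        rw [uIoc_of_le (by norm_num)] at hρ
        exact abs_lineDensity_le (by linarith) hδα (by linarith) hPK (Ioc_subset_Icc_self hρ)
    _ = 24 * K := by norm_num; ring

lemma abs_integral_lineKernelZero_le (hα0 : 0 < α) (hα : α ≤ 2) (hPK : ∀ v, P v ∈ Icc 0 K) :
    |∫ ρ in (-2 : ℝ)..2, lineKernelZero α P ρ| ≤ 8 / α * K := by
  have hK : 0 ≤ K := (hPK 0).1.trans (hPK 0).2
  have hle : ∀ ρ, ‖lineKernelZero α P ρ‖ ≤ |ρ| ^ (α - 1) * K := fun ρ => by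
    rw [lineKernelZero, norm_mul, Real.norm_of_nonneg (rpow_nonneg (abs_nonneg _) _)]
    gcongr
    exact abs_sub_le_of_forall_mem_Icc hPK _ _
  have hpow : ∫ ρ in (-2 : ℝ)..2, |ρ| ^ (α - 1) = (2 ^ α + 2 ^ α) / α := by
    simpa using integral_abs_sub_rpow_symm (b := 0) (R := 2) hα0 (by norm_num)
  calc |∫ ρ in (-2 : ℝ)..2, lineKernelZero α P ρ| ≤ ∫ ρ in (-2 : ℝ)..2, |ρ| ^ (α - 1) * K :=
        intervalIntegral.norm_integral_le_of_norm_le (by norm_num)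
          (Eventually.of_forall fun ρ _ => hle ρ)
          ((intervalIntegrable_abs_rpow (by linarith) _ _).mul_const K)
    _ ≤ 8 / α * K := by
        rw [intervalIntegral.integral_mul_const, hpow]
        gcongr
        linarith [rpow_le_sq one_le_two hα]

lemma abs_integral_compensator_le (hα0 : 0 < α) (hα : α ≤ 2) (hPK : ∀ v, P v ∈ Icc 0 K) :
    |∫ ρ in (-2 : ℝ)..2, |ρ - 1| ^ (α - 1) * P 0| ≤ 10 / α * K := by
  rw [intervalIntegral.integral_mul_const, integral_abs_sub_rpow_symm hα0 (by norm_num), abs_mul,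
    abs_of_nonneg (by positivity)]
  gcongr
  · have hle := rpow_le_sq (show (1 : ℝ) ≤ 2 + 1 by norm_num) hα
    rw [show (2 : ℝ) - 1 = 1 by norm_num, one_rpow]
    linarith
  · exact abs_le_of_forall_mem_Icc hPK 0

lemma abs_integral_lineDefect_near_le (hδ : 0 < δ) (hδα : δ ≤ α) (hα : α ≤ 2) (hP : Continuous P)
    (hPK : ∀ v, P v ∈ Icc 0 K) :
    |(∫ ρ in (-2 : ℝ)..2, lineDefect α δ P ρ) - lineMain α δ P| ≤ (24 + 18 / α) * K := by
  have hα0 : 0 < α := hδ.trans_le hδα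
  have hsplit : ∫ ρ in (-2 : ℝ)..2, lineDefect α δ P ρ =
      (∫ ρ in (-2 : ℝ)..2, lineDensity α δ P ρ) - (∫ ρ in (-2 : ℝ)..2, |ρ - 1| ^ (α - 1) * P 0) -
        ∫ ρ in (-2 : ℝ)..2, lineKernelZero α P ρ := by
    simp only [lineDefect]
    rw [intervalIntegral.integral_sub (intervalIntegrable_lineKernel hδ hδα hP hPK _ _)
      (intervalIntegrable_lineKernelZero hα0 hP hPK _ _)]
    simp only [lineKernel]
    rw [intervalIntegral.integral_sub (intervalIntegrable_lineDensity hδ hδα hP hPK _ _)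
      ((intervalIntegrable_abs_sub_rpow (by linarith) 1 _ _).mul_const _)]
  have hdensity := abs_le.1 (abs_integral_lineDensity_le hδ.le hδα hα hPK)
  have hcompensator := abs_le.1 (abs_integral_compensator_le hα0 hα hPK)
  have hzero := abs_le.1 (abs_integral_lineKernelZero_le hα0 hα hPK)
  rw [hsplit, integral_lineDensity_near hδ hδα hP hPK,
    show (24 + 18 / α) * K = 24 * K + 10 / α * K + 8 / α * K by ring, abs_le]
  constructor <;> linarith

lemma intervalIntegrable_rpow_of_pos (c : ℝ) {a b : ℝ} (ha : 0 < a) (hab : a ≤ b) :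
    IntervalIntegrable (fun ρ : ℝ => ρ ^ c) volume a b :=
  intervalIntegral.intervalIntegrable_rpow
    (Or.inr fun h => by rw [uIcc_of_le hab] at h; linarith [h.1])

lemma integral_rpow_le {c a b : ℝ} (hc : c < -1) (ha : 0 < a) (hab : a ≤ b) :
    ∫ ρ in a..b, ρ ^ c ≤ a ^ (c + 1) / (-(c + 1)) := by
  rw [integral_rpow (Or.inr ⟨by linarith, fun h => ?_⟩)]
  · have hb : 0 ≤ b ^ (c + 1) := rpow_nonneg (by linarith) _
    rw [div_neg, ← neg_div, div_le_div_right_of_neg (by linarith)]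
    linarith
  · rw [uIcc_of_le hab] at h
    linarith [h.1]

lemma abs_integral_lineDefect_symm_le (hδ : 0 ≤ δ) (hδα : δ ≤ α) (hα : α ≤ 2)
    (hPK : ∀ v, P v ∈ Icc 0 K) {s L a b : ℝ} (hL : ∀ v, |P v - P 0| ≤ L * |v| ^ s)
    (ha : 2 ≤ a) (hab : a ≤ b) :
    |∫ ρ in a..b, (lineDefect α δ P (-ρ) + lineDefect α δ P ρ)| ≤
      8 * L * (∫ ρ in a..b, ρ ^ (α - 2 - s)) + 64 * K * ∫ ρ in a..b, ρ ^ (α - 3) := by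
  have hint : ∀ c : ℝ, IntervalIntegrable (fun ρ : ℝ => ρ ^ c) volume a b := fun c =>
    intervalIntegrable_rpow_of_pos c (by linarith) hab
  rw [← intervalIntegral.integral_const_mul, ← intervalIntegral.integral_const_mul,
    ← intervalIntegral.integral_add ((hint _).const_mul _) ((hint _).const_mul _),
    ← Real.norm_eq_abs]
  refine intervalIntegral.norm_integral_le_of_norm_le hab (Eventually.of_forall fun ρ hρ => ?_)
    (((hint _).const_mul _).add ((hint _).const_mul _))
  have hρ0 : 0 < ρ := by linarith [hρ.1]
  refine (abs_lineDefect_symm_le hδ hδα hα hPK (ha.trans hρ.1.le) (hL _)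
    (by simpa only [abs_neg] using hL (-ρ⁻¹))).trans_eq ?_
  rw [abs_of_pos (inv_pos.2 hρ0), inv_rpow hρ0.le, ← rpow_neg hρ0.le, sub_eq_add_neg (α - 2) s,
    rpow_add hρ0]
  ring

/-- The integral of `ρ^(2p-2)` over `[2, 1/τ]`: the contribution of intermediate scales, which is
responsible for the logarithm when `p = 1/2`. -/
noncomputable def scaleIntegral (p τ : ℝ) : ℝ := ∫ ρ in (2 : ℝ)..τ⁻¹, ρ ^ (2 * p - 2)

lemma two_le_inv {τ : ℝ} (hτ : 0 < τ) (hτ2 : τ ≤ 1 / 2) : 2 ≤ τ⁻¹ := by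
  rw [le_inv_comm₀ two_pos hτ]
  linarith

lemma scaleIntegral_nonneg {p τ : ℝ} (hτ : 0 < τ) (hτ2 : τ ≤ 1 / 2) : 0 ≤ scaleIntegral p τ :=
  intervalIntegral.integral_nonneg (two_le_inv hτ hτ2) fun ρ hρ =>
    rpow_nonneg (by linarith [hρ.1]) _

lemma abs_integral_lineDefect_far_le {p τ L R : ℝ} (hp : p < 1)
    (hδ : 0 < δ) (hδα : δ ≤ 2 * p) (hP : Continuous P) (hPK : ∀ v, P v ∈ Icc 0 K)
    (hL : ∀ v, |P v - P 0| ≤ L * |v| ^ p) (hτ : 0 < τ) (hτ2 : τ ≤ 1 / 2) (hR : τ⁻¹ ≤ R) :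
    |∫ ρ in (2 : ℝ)..R, (lineDefect (2 * p) δ P (-ρ) + lineDefect (2 * p) δ P ρ)| ≤
      8 * K * scaleIntegral p τ + 8 * L * (τ ^ (1 - p) / (1 - p)) + 32 / (1 - p) * K := by
  have hK : 0 ≤ K := (hPK 0).1.trans (hPK 0).2
  have hL0 : 0 ≤ L := by simpa using (abs_nonneg _).trans (hL 1)
  have hinv := two_le_inv hτ hτ2
  have hint := intervalIntegrable_lineDefect hδ hδα hP hPK
  have hint' : ∀ a b, IntervalIntegrable
      (fun ρ => lineDefect (2 * p) δ P (-ρ) + lineDefect (2 * p) δ P ρ) volume a b := fun a b =>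
    IntervalIntegrable.add (by simpa using (IntervalIntegrable.iff_comp_neg).1 (hint (-a) (-b)))
      (hint a b)
  have hinner := abs_integral_lineDefect_symm_le hδ.le hδα (by linarith) hPK (s := 0) (L := K)
    (fun v => by simpa using abs_sub_le_of_forall_mem_Icc hPK v 0) le_rfl hinv
  have houter := abs_integral_lineDefect_symm_le hδ.le hδα (by linarith) hPK hL hinv hR
  have htail : ∫ ρ in τ⁻¹..R, ρ ^ (2 * p - 2 - p) ≤ τ ^ (1 - p) / (1 - p) := by
    refine (integral_rpow_le (by linarith) (by positivity) hR).trans_eq ?_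
    rw [inv_rpow hτ.le, ← rpow_neg hτ.le]
    congr 2 <;> ring
  have hp1 : 0 < 1 - p := sub_pos.2 hp
  have hcubic : (∫ ρ in (2 : ℝ)..τ⁻¹, ρ ^ (2 * p - 3)) + ∫ ρ in τ⁻¹..R, ρ ^ (2 * p - 3) ≤
      1 / (2 * (1 - p)) := by
    rw [intervalIntegral.integral_add_adjacent_intervals
      (intervalIntegrable_rpow_of_pos _ two_pos hinv)
      (intervalIntegrable_rpow_of_pos _ (by positivity) hR)]
    refine (integral_rpow_le (by linarith) two_pos (hinv.trans hR)).trans ?_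
    rw [show -(2 * p - 3 + 1) = 2 * (1 - p) by ring]
    gcongr
    exact rpow_le_one_of_one_le_of_nonpos one_le_two (by linarith)
  have houter' := mul_le_mul_of_nonneg_left htail (show 0 ≤ 8 * L by positivity)
  have hcubic' := mul_le_mul_of_nonneg_left hcubic (show 0 ≤ 64 * K by positivity)
  rw [sub_zero] at hinner
  rw [← intervalIntegral.integral_add_adjacent_intervals (hint' 2 τ⁻¹) (hint' τ⁻¹ R), scaleIntegral,
    show 32 / (1 - p) * K = 64 * K * (1 / (2 * (1 - p))) by field_simp; ring]
  refine (abs_add_le _ _).trans ?_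
  linarith

/-- A constant depending only on `p` for the error terms on a line. -/
noncomputable def lineConst (p : ℝ) : ℝ := 24 + 9 / p + 32 / (1 - p)

lemma lineConst_pos {p : ℝ} (hp0 : 0 < p) (hp : p < 1) : 0 < lineConst p := by
  have := sub_pos.2 hp
  unfold lineConst
  positivity

lemma abs_integral_lineDefect_sub_lineMain_le {p τ L R : ℝ} (hp0 : 0 < p) (hp : p < 1)
    (hδ : 0 < δ) (hδα : δ ≤ 2 * p) (hP : Continuous P) (hPK : ∀ v, P v ∈ Icc 0 K)
    (hL : ∀ v, |P v - P 0| ≤ L * |v| ^ p) (hτ : 0 < τ) (hτ2 : τ ≤ 1 / 2) (hR : τ⁻¹ ≤ R) :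
    |(∫ ρ in -R..R, lineDefect (2 * p) δ P ρ) - lineMain (2 * p) δ P| ≤
      lineConst p * (K * (1 + scaleIntegral p τ) + L * τ ^ (1 - p)) := by
  have hp1 : 0 < 1 - p := sub_pos.2 hp
  have hK : 0 ≤ K := (hPK 0).1.trans (hPK 0).2
  have hL0 : 0 ≤ L := by simpa using (abs_nonneg _).trans (hL 1)
  have hint := intervalIntegrable_lineDefect hδ hδα hP hPK
  have hnear := abs_integral_lineDefect_near_le hδ hδα (by linarith) hP hPK
  have hfar := abs_integral_lineDefect_far_le hp hδ hδα hP hPK hL hτ hτ2 hR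
  have hsplit : ∫ ρ in -R..R, lineDefect (2 * p) δ P ρ =
      (∫ ρ in (-2 : ℝ)..2, lineDefect (2 * p) δ P ρ) +
        ∫ ρ in (2 : ℝ)..R, (lineDefect (2 * p) δ P (-ρ) + lineDefect (2 * p) δ P ρ) := by
    have hsymm : ∀ a, IntervalIntegrable
        (fun ρ => lineDefect (2 * p) δ P (-ρ) + lineDefect (2 * p) δ P ρ) volume 0 a := fun a =>
      IntervalIntegrable.add
        (by simpa using (IntervalIntegrable.iff_comp_neg).1 (hint 0 (-a))) (hint 0 a)
    rw [integral_neg_eq_integral_comp_neg_add (hint _ _) (hint _ _),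
      integral_neg_eq_integral_comp_neg_add (hint _ _) (hint _ _),
      intervalIntegral.integral_add_adjacent_intervals (hsymm 2)
        ((hsymm 2).symm.trans (hsymm R))]
  have hI := mul_nonneg hK (scaleIntegral_nonneg (p := p) hτ hτ2)
  have hLτ := mul_nonneg hL0 (rpow_nonneg hτ.le (1 - p))
  have hp9 : 0 ≤ 9 / p := by positivity
  have hp32 : 32 ≤ 32 / (1 - p) := by
    rw [le_div_iff₀ hp1]; linarith
  have hconst : 8 / (1 - p) ≤ lineConst p := by
    rw [show 8 / (1 - p) = 32 / (1 - p) / 4 by ring, lineConst]; linarith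
  have hconstI := mul_le_mul_of_nonneg_right (show 8 ≤ lineConst p by unfold lineConst; linarith) hI
  have hconstL := mul_le_mul_of_nonneg_right hconst hLτ
  calc _ ≤ (24 + 18 / (2 * p)) * K + (8 * K * scaleIntegral p τ +
        8 * L * (τ ^ (1 - p) / (1 - p)) + 32 / (1 - p) * K) := by
        rw [hsplit, add_sub_right_comm]
        exact (abs_add_le _ _).trans (add_le_add hnear hfar)
    _ = lineConst p * K + 8 * (K * scaleIntegral p τ) + 8 / (1 - p) * (L * τ ^ (1 - p)) := by
        rw [lineConst]; ring
    _ ≤ _ := by linarith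

end LineEstimate

section QuadProfile

variable {p q b A : ℝ}

/-- The profile `(q + 2bv - Av²)₊^p` along a line. -/
noncomputable def quadProfile (p q b A v : ℝ) : ℝ := (max (q + 2 * b * v - A * v ^ 2) 0) ^ p

lemma continuous_quadProfile (hp : 0 ≤ p) : Continuous (quadProfile p q b A) :=
  Continuous.rpow_const (by fun_prop) fun _ => Or.inr hp

lemma quadProfile_zero (hq : 0 ≤ q) : quadProfile p q b A 0 = q ^ p := by
  simp [quadProfile, hq]

lemma lineKernelZero_quadProfile {ρ : ℝ} (hq : 0 < q) (hρ : ρ ≠ 0) :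
    lineKernelZero (2 * p) (quadProfile p q b A) ρ = q ^ p * quadKernel p (A / q) (b / q) ρ := by
  have habs : 0 < |ρ| := abs_pos.2 hρ
  have hsq : 0 < |ρ| ^ 2 := by positivity
  have hmax : max (q + 2 * b * ρ⁻¹ - A * ρ⁻¹ ^ 2) 0 =
      q * max (ρ ^ 2 + 2 * (b / q) * ρ - A / q) 0 / |ρ| ^ 2 := by
    rw [mul_max_of_nonneg _ _ hq.le, ← max_div_div_right hsq.le, mul_zero, zero_div, sq_abs]
    congr 1
    field_simp
  have hpow : (|ρ| ^ 2) ^ p = |ρ| ^ (2 * p - 1) * |ρ| := by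
    rw [← rpow_two, ← rpow_mul habs.le, ← rpow_add_one habs.ne', sub_add_cancel]
  have hne : |ρ| ^ (2 * p - 1) ≠ 0 := (rpow_pos_of_pos habs _).ne'
  rw [lineKernelZero, quadProfile_zero hq.le, quadProfile, quadKernel, hmax,
    div_rpow (by positivity) hsq.le, mul_rpow hq.le (le_max_right _ _), hpow]
  field_simp

lemma tendsto_lineKernelZero_quadProfile {l : Filter ℝ} (hq : 0 < q) (hl : ∀ᶠ ρ in l, ρ ≠ 0)
    (hk : Tendsto (quadKernel p (A / q) (b / q)) l (𝓝 0)) :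
    Tendsto (lineKernelZero (2 * p) (quadProfile p q b A)) l (𝓝 0) := by
  rw [← mul_zero (q ^ p)]
  exact (hk.const_mul _).congr' (hl.mono fun ρ hρ => (lineKernelZero_quadProfile hq hρ).symm)

lemma tendsto_integral_lineKernelZero_quadProfile (hp : 0 < p) (hp1 : p < 1) (hq : 0 < q)
    (hA : 0 < A) :
    Tendsto (fun R => ∫ ρ in -R..R, lineKernelZero (2 * p) (quadProfile p q b A) ρ) atTop
      (𝓝 (-(π / sin (π * p)) * A ^ p)) := by
  have hlim : -(π / sin (π * p)) * A ^ p = q ^ p * (-(π / sin (π * p)) * (A / q) ^ p) := by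
    rw [div_rpow hA.le hq.le]
    have := (rpow_pos_of_pos hq p).ne'
    field_simp
  rw [hlim]
  refine ((tendsto_integral_quadKernel (b / q) hp hp1 (div_pos hA hq)).const_mul _).congr
    fun R => ?_
  rw [← intervalIntegral.integral_const_mul]
  refine intervalIntegral.integral_congr_ae ?_
  filter_upwards [compl_mem_ae_iff.2 (measure_singleton (0 : ℝ))] with ρ hρ _
  exact (lineKernelZero_quadProfile hq hρ).symm

end QuadProfile

/-- The symmetric second difference of `f` at `x` with increment `h`. -/
noncomputable def secondDiff {E : Type*} [AddCommGroup E] (f : E → ℝ) (x h : E) : ℝ :=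
  f (x + h) + f (x - h) - 2 * f x

section LineSingularIntegral

variable {α β δ K : ℝ} {P : ℝ → ℝ}

/-- The restriction to a line, in the coordinate `σ` centred at height one, of a function which is
homogeneous of degree `β` with profile `P` and vanishes below height zero. -/
noncomputable def lineFun (β : ℝ) (P : ℝ → ℝ) (σ : ℝ) : ℝ :=
  if 0 < 1 + σ then (1 + σ) ^ β * P (σ / (1 + σ)) else 0

lemma lineFun_zero : lineFun β P 0 = P 0 := by simp [lineFun]

lemma lineFun_inv_sub_mul {r : ℝ} (hr : r ≠ 0) :
    (lineFun (α - δ) P r⁻¹ - P 0) * |r| ^ (α - 1) = lineKernel α δ P (r + 1) := by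
  have habs : 0 < |r| := abs_pos.2 hr
  have hheight : 1 + r⁻¹ = (r + 1) / r := by field_simp
  rw [lineKernel, add_sub_cancel_right, sub_mul, mul_comm (P 0)]
  congr 1
  by_cases hmem : r + 1 ∈ Icc (0 : ℝ) 1
  · have hneg : ¬0 < 1 + r⁻¹ := by
      rw [hheight, not_lt]
      exact div_nonpos_of_nonneg_of_nonpos hmem.1 (by linarith [hmem.2])
    rw [lineFun, if_neg hneg, lineDensity_of_mem hmem, zero_mul]
  · have hpos : 0 < 1 + r⁻¹ := by
      rw [hheight]
      rcases hr.lt_or_gt with h | h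
      · exact div_pos_of_neg_of_neg (not_le.1 fun h0 => hmem ⟨h0, by linarith⟩) h
      · positivity
    have hne : r + 1 ≠ 0 := fun h => hmem (by rw [h]; exact ⟨le_rfl, zero_le_one⟩)
    have hslope : r⁻¹ / (1 + r⁻¹) = (r + 1)⁻¹ := by rw [hheight]; field_simp
    have hsplit : |r| ^ (α - 1) = |r| ^ (α - δ) * |r| ^ (δ - 1) := by
      rw [← rpow_add habs]; congr 1; ring
    have hne' : |r| ^ (α - δ) ≠ 0 := (rpow_pos_of_pos habs _).ne'
    rw [lineFun, if_pos hpos, lineDensity_of_notMem hmem, hslope, ← abs_of_pos hpos, hheight,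
      abs_div, div_rpow (abs_nonneg _) habs.le, hsplit, add_sub_cancel_right]
    field_simp

lemma secondDiff_lineFun_inv_mul {r : ℝ} (hr : 0 < r) :
    secondDiff (lineFun (α - δ) P) 0 r⁻¹ * r ^ (α - 1) =
      lineKernel α δ P (-r + 1) + lineKernel α δ P (r + 1) := by
  rw [← lineFun_inv_sub_mul hr.ne', ← lineFun_inv_sub_mul (neg_ne_zero.2 hr.ne'), abs_neg,
    abs_of_pos hr, inv_neg, secondDiff, zero_add, zero_sub, lineFun_zero]
  ring

lemma tendsto_lineKernel (hδ : 0 ≤ δ) (hδα : δ ≤ α) (hα : α < 2) (hPK : ∀ v, P v ∈ Icc 0 K)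
    {l : Filter ℝ} (hl : Tendsto (fun ρ : ℝ => |ρ|) l atTop)
    (hzero : Tendsto (lineKernelZero α P) l (𝓝 0)) : Tendsto (lineKernel α δ P) l (𝓝 0) := by
  have hdefect : Tendsto (lineDefect α δ P) l (𝓝 0) := by
    refine squeeze_zero_norm' ?_
      ((tendsto_const_mul_rpow_zero (12 * K) (sub_neg.2 hα)).comp hl)
    filter_upwards [hl.eventually_ge_atTop 2] with ρ hρ
    exact abs_lineDefect_le hδ hδα hα.le hPK hρ
  simpa [lineDefect] using hdefect.add hzero

lemma eqOn_inv_rpow_mul_secondDiff_lineFun :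
    EqOn (fun r : ℝ => (|(-1 : ℝ)| * r ^ ((-1 : ℝ) - 1)) •
        (secondDiff (lineFun (α - δ) P) 0 (r ^ (-1 : ℝ)) * (r ^ (-1 : ℝ)) ^ (-1 - α)))
      (fun r => lineKernel α δ P (-r + 1) + lineKernel α δ P (r + 1)) (Ioi 0) := by
  intro r (hr : 0 < r)
  have hpow : r ^ ((-1 : ℝ) - 1) * r⁻¹ ^ (-1 - α) = r ^ (α - 1) := by
    rw [inv_rpow hr.le, ← rpow_neg hr.le, ← rpow_add hr]; congr 1; ring
  simp only [smul_eq_mul, abs_neg, abs_one, one_mul, rpow_neg_one]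
  rw [← secondDiff_lineFun_inv_mul hr, ← hpow]
  ring

lemma tendsto_integral_lineKernel (hδ : 0 < δ) (hδα : δ ≤ α) (hP : Continuous P)
    (hPK : ∀ v, P v ∈ Icc 0 K) (htop : Tendsto (lineKernel α δ P) atTop (𝓝 0))
    (hbot : Tendsto (lineKernel α δ P) atBot (𝓝 0))
    (hint : IntegrableOn (fun σ => secondDiff (lineFun (α - δ) P) 0 σ * σ ^ (-1 - α)) (Ioi 0)) :
    Tendsto (fun R => ∫ ρ in -R..R, lineKernel α δ P ρ) atTop
      (𝓝 (∫ σ in Ioi (0 : ℝ), secondDiff (lineFun (α - δ) P) 0 σ * σ ^ (-1 - α))) := by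
  have hkernel := intervalIntegrable_lineKernel hδ hδα hP hPK
  have hshift : ∀ a b, IntervalIntegrable (fun r => lineKernel α δ P (r + 1)) volume a b :=
    fun a b => by simpa using (hkernel (a + 1) (b + 1)).comp_add_right 1
  have hcomp : IntegrableOn (fun r => lineKernel α δ P (-r + 1) + lineKernel α δ P (r + 1))
      (Ioi 0) := by
    rw [← integrableOn_congr_fun eqOn_inv_rpow_mul_secondDiff_lineFun measurableSet_Ioi]
    exact (integrableOn_Ioi_comp_rpow_iff
      (fun σ => secondDiff (lineFun (α - δ) P) 0 σ * σ ^ (-1 - α)) (by norm_num)).2 hint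
  have hshifted : Tendsto (fun R => ∫ r in -R..R, lineKernel α δ P (r + 1)) atTop
      (𝓝 (∫ σ in Ioi (0 : ℝ), secondDiff (lineFun (α - δ) P) 0 σ * σ ^ (-1 - α))) := by
    rw [← integral_comp_rpow_Ioi (fun σ => secondDiff (lineFun (α - δ) P) 0 σ * σ ^ (-1 - α))
      (show (-1 : ℝ) ≠ 0 by norm_num),
      setIntegral_congr_fun measurableSet_Ioi eqOn_inv_rpow_mul_secondDiff_lineFun]
    refine (intervalIntegral_tendsto_integral_Ioi 0 hcomp tendsto_id).congr fun R => ?_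
    exact (integral_neg_eq_integral_comp_neg_add (hshift _ _) (hshift _ _)).symm
  simpa using hshifted.sub (tendsto_integral_shift_sub hkernel htop hbot 1)

lemma abs_integral_secondDiff_lineFun_add_le {p q b A τ L : ℝ} (hp : 0 < p) (hp1 : p < 1)
    (hδ : 0 < δ) (hδp : δ ≤ 2 * p) (hq : 0 < q) (hA : 0 < A)
    (hPK : ∀ v, quadProfile p q b A v ∈ Icc 0 K)
    (hL : ∀ v, |quadProfile p q b A v - quadProfile p q b A 0| ≤ L * |v| ^ p)
    (hτ : 0 < τ) (hτ2 : τ ≤ 1 / 2)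
    (hint : IntegrableOn (fun σ => secondDiff (lineFun (2 * p - δ) (quadProfile p q b A)) 0 σ *
      σ ^ (-1 - 2 * p)) (Ioi 0)) :
    |(∫ σ in Ioi (0 : ℝ),
        secondDiff (lineFun (2 * p - δ) (quadProfile p q b A)) 0 σ * σ ^ (-1 - 2 * p)) +
      π / sin (π * p) * A ^ p - lineMain (2 * p) δ (quadProfile p q b A)| ≤
      lineConst p * (K * (1 + scaleIntegral p τ) + L * τ ^ (1 - p)) := by
  have hP : Continuous (quadProfile p q b A) := continuous_quadProfile hp.le
  have htop := tendsto_lineKernel hδ.le hδp (by linarith) hPK tendsto_abs_atTop_atTop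
    (tendsto_lineKernelZero_quadProfile hq (eventually_ne_atTop 0) (tendsto_quadKernel_atTop hp1))
  have hbot := tendsto_lineKernel hδ.le hδp (by linarith) hPK tendsto_abs_atBot_atTop
    (tendsto_lineKernelZero_quadProfile hq (eventually_ne_atBot 0) (tendsto_quadKernel_atBot hp1))
  have hlim := ((tendsto_integral_lineKernel hδ hδp hP hPK htop hbot hint).sub
    (tendsto_integral_lineKernelZero_quadProfile (b := b) hp hp1 hq hA)).sub_const
    (lineMain (2 * p) δ (quadProfile p q b A))
  rw [neg_mul, sub_neg_eq_add] at hlim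
  refine le_of_tendsto hlim.abs ?_
  filter_upwards [eventually_ge_atTop τ⁻¹] with R hR
  rw [← intervalIntegral.integral_sub (intervalIntegrable_lineKernel hδ hδp hP hPK _ _)
    (intervalIntegrable_lineKernelZero (by linarith) hP hPK _ _)]
  exact abs_integral_lineDefect_sub_lineMain_le hp hp1 hδ hδp hP hPK hL hτ hτ2 hR

end LineSingularIntegral

section Coordinates

variable {n : ℕ} {α : ℝ}

/-- The point of `ℝ^(n+1)` with horizontal part `w` and last coordinate `s`. -/
noncomputable def pt (w : Ed n) (s : ℝ) : Ed (n + 1) :=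
  WithLp.toLp 2 (Fin.snoc (α := fun _ => ℝ) w s)

/-- The horizontal part of a point, consisting of all coordinates but the last. -/
noncomputable def hor (x : Ed (n + 1)) : Ed n := WithLp.toLp 2 (fun i => x i.castSucc)

@[simp] lemma pt_castSucc (w : Ed n) (s : ℝ) (i : Fin n) : pt w s i.castSucc = w i := by
  simp [pt]

@[simp] lemma pt_last (w : Ed n) (s : ℝ) : pt w s (Fin.last n) = s := by
  simp [pt]

@[simp] lemma hor_apply (x : Ed (n + 1)) (i : Fin n) : hor x i = x i.castSucc := rfl

lemma lastCoord_eq (x : Ed (n + 1)) : lastCoord (n + 1) x = x (Fin.last n) := by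
  rw [lastCoord, dif_pos (Nat.succ_pos n)]
  rfl

lemma ext_castSucc {x y : Ed (n + 1)} (hcast : ∀ i : Fin n, x i.castSucc = y i.castSucc)
    (hlast : x (Fin.last n) = y (Fin.last n)) : x = y := by
  ext i
  exact Fin.lastCases hlast hcast i

@[simp] lemma pt_hor (x : Ed (n + 1)) : pt (hor x) (x (Fin.last n)) = x :=
  ext_castSucc (fun i => by simp) (by simp)

@[simp] lemma hor_pt (w : Ed n) (s : ℝ) : hor (pt w s) = w := by ext i; simp

lemma pt_add (w w' : Ed n) (s s' : ℝ) : pt w s + pt w' s' = pt (w + w') (s + s') :=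
  ext_castSucc (fun i => by simp) (by simp)

lemma smul_pt (c : ℝ) (w : Ed n) (s : ℝ) : c • pt w s = pt (c • w) (c * s) :=
  ext_castSucc (fun i => by simp) (by simp)

lemma norm_pt_sq (w : Ed n) (s : ℝ) : ‖pt w s‖ ^ 2 = ‖w‖ ^ 2 + s ^ 2 := by
  rw [EuclideanSpace.norm_sq_eq, EuclideanSpace.norm_sq_eq, Fin.sum_univ_castSucc]
  simp

lemma norm_pt (w : Ed n) (s : ℝ) : ‖pt w s‖ = √(‖w‖ ^ 2 + s ^ 2) := by
  rw [← norm_pt_sq, sqrt_sq (norm_nonneg _)]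

/-- `hor` as a continuous linear map. -/
noncomputable def horL : Ed (n + 1) →L[ℝ] Ed n :=
  LinearMap.toContinuousLinearMap
    { toFun := hor
      map_add' := fun x y => by ext i; simp
      map_smul' := fun c x => by ext i; simp }

/-- The last coordinate as a continuous linear map. -/
noncomputable def lastL : Ed (n + 1) →L[ℝ] ℝ :=
  LinearMap.toContinuousLinearMap
    { toFun := fun x => x (Fin.last n)
      map_add' := fun x y => by simp
      map_smul' := fun c x => by simp }

lemma continuous_hor : Continuous (hor : Ed (n + 1) → Ed n) := (horL (n := n)).continuous

lemma continuous_pt : Continuous (fun q : Ed n × ℝ => pt q.1 q.2) := by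
  unfold pt
  refine (PiLp.continuous_toLp 2 _).comp (continuous_pi fun i => ?_)
  refine Fin.lastCases ?_ (fun j => ?_) i
  · simpa using continuous_snd
  · simp only [Fin.snoc_castSucc]
    fun_prop

lemma measurePreserving_pt :
    MeasurePreserving (fun q : Ed n × ℝ => pt q.1 q.2) (volume.prod volume) volume := by
  have hinsert := (volume_preserving_piFinSuccAbove (fun _ : Fin (n + 1) => ℝ) (Fin.last n)).symm
  have hswap : MeasurePreserving (fun q : Ed n × ℝ => (q.2, WithLp.ofLp q.1))
      (volume.prod volume) (volume.prod volume) :=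
    Measure.measurePreserving_swap.comp
      ((PiLp.volume_preserving_ofLp (Fin n)).prod (MeasurePreserving.id volume))
  have hpt : (fun q : Ed n × ℝ => pt q.1 q.2) = (WithLp.toLp 2 ∘
      (MeasurableEquiv.piFinSuccAbove (fun _ : Fin (n + 1) => ℝ) (Fin.last n)).symm) ∘
      fun q : Ed n × ℝ => (q.2, WithLp.ofLp q.1) := by
    funext q
    refine ext_castSucc (fun i => ?_) ?_ <;> simp [MeasurableEquiv.piFinSuccAbove]
  rw [hpt]
  exact ((PiLp.volume_preserving_toLp (Fin (n + 1))).comp hinsert).comp hswap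

lemma measurableEmbedding_pt : MeasurableEmbedding (fun q : Ed n × ℝ => pt q.1 q.2) := by
  refine continuous_pt.measurableEmbedding fun q q' hq => Prod.ext ?_ ?_
  · simpa using congrArg hor hq
  · simpa using congrArg (fun x => x (Fin.last n)) hq

end Coordinates

section LineIntegrals

variable {n : ℕ} {α : ℝ} {S : Ed (n + 1) → ℝ}

lemma integral_abs_pow_mul_comp_smul (G : Ed n → ℝ) {σ : ℝ} (hσ : σ ≠ 0) :
    ∫ ζ, |σ| ^ n * G (σ • ζ) = ∫ w, G w := by
  rw [integral_const_mul, Measure.integral_comp_smul, finrank_euclideanSpace_fin, smul_eq_mul,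
    ← mul_assoc, abs_inv, abs_pow, mul_inv_cancel₀ (by positivity), one_mul]

lemma integrable_comp_pt_swap (hS : Integrable S) :
    Integrable (fun q : ℝ × Ed n => S (pt q.2 q.1)) (volume.prod volume) :=
  ((measurePreserving_pt.integrable_comp_emb measurableEmbedding_pt).2 hS).swap

lemma integrable_abs_pow_mul_comp_pt_smul (hm : Measurable S) (hS : Integrable S) :
    Integrable (fun q : ℝ × Ed n => |q.1| ^ n * S (pt (q.1 • q.2) q.1)) (volume.prod volume) := by
  have hslice := integrable_comp_pt_swap hS
  have hne : ∀ᵐ σ : ℝ, σ ≠ 0 := compl_mem_ae_iff.2 (measure_singleton (0 : ℝ))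
  have hmeas : Measurable (fun q : ℝ × Ed n => |q.1| ^ n * S (pt (q.1 • q.2) q.1)) :=
    Measurable.mul (by fun_prop) (hm.comp (continuous_pt.measurable.comp (by fun_prop :
      Measurable fun q : ℝ × Ed n => (q.1 • q.2, q.1))))
  rw [integrable_prod_iff hslice.aestronglyMeasurable] at hslice
  refine (integrable_prod_iff hmeas.aestronglyMeasurable).2 ⟨?_, hslice.2.congr ?_⟩
  · filter_upwards [hslice.1, hne] with σ hσint hσ
    exact (hσint.comp_smul hσ).const_mul _
  · filter_upwards [hne] with σ hσ
    simp only [norm_mul, norm_pow, norm_eq_abs, abs_abs]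
    exact (integral_abs_pow_mul_comp_smul (fun w => |S (pt w σ)|) hσ).symm

lemma integral_eq_integral_abs_pow_mul_comp_pt_smul (hm : Measurable S) (hS : Integrable S) :
    ∫ x, S x = ∫ q : ℝ × Ed n, |q.1| ^ n * S (pt (q.1 • q.2) q.1) ∂(volume.prod volume) := by
  rw [← measurePreserving_pt.integral_comp measurableEmbedding_pt, ← integral_prod_swap]
  simp only [Prod.fst_swap, Prod.snd_swap]
  rw [integral_prod _ (integrable_comp_pt_swap hS),
    integral_prod _ (integrable_abs_pow_mul_comp_pt_smul hm hS)]
  refine integral_congr_ae ?_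
  filter_upwards [compl_mem_ae_iff.2 (measure_singleton (0 : ℝ))] with σ hσ
  exact (integral_abs_pow_mul_comp_smul (fun w => S (pt w σ)) hσ).symm

/-- The integral of `S` over the half-line in the direction of `pt ζ 1`, against the radial part of
the kernel `‖h‖ ^ (-(n + 1) - α)`. -/
noncomputable def lineIntegral (α : ℝ) (S : Ed (n + 1) → ℝ) (ζ : Ed n) : ℝ :=
  ∫ σ in Ioi (0 : ℝ), S (σ • pt ζ 1) * σ ^ (-1 - α)

/-- The angular part `‖pt ζ 1‖ ^ (-(n + 1) - α)` of the kernel. -/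
noncomputable def lineWeight (α : ℝ) (ζ : Ed n) : ℝ := (1 + ‖ζ‖ ^ 2) ^ (-((n : ℝ) + 1 + α) / 2)

lemma lineWeight_pos (ζ : Ed n) : 0 < lineWeight α ζ := rpow_pos_of_pos (by positivity) _

lemma norm_pt_one_rpow (ζ : Ed n) :
    ‖pt ζ 1‖ ^ (-((n + 1 : ℕ) : ℝ) - α) = lineWeight α ζ := by
  rw [lineWeight, norm_pt, sqrt_eq_rpow, ← rpow_mul (by positivity), one_pow, add_comm]
  congr 1
  push_cast
  ring

lemma apply_abs_smul_of_even (hS : ∀ h, S (-h) = S h) (σ : ℝ) (x : Ed (n + 1)) :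
    S (|σ| • x) = S (σ • x) := by
  rcases abs_choice σ with hσ | hσ <;> simp [hσ, neg_smul, hS]

lemma ae_abs_pow_mul_kernel_comp_pt_smul (hS : ∀ h, S (-h) = S h) :
    ∀ᵐ q : ℝ × Ed n ∂(volume.prod volume),
      |q.1| ^ n * (S (pt (q.1 • q.2) q.1) * ‖pt (q.1 • q.2) q.1‖ ^ (-((n + 1 : ℕ) : ℝ) - α)) =
      (S (|q.1| • pt q.2 1) * |q.1| ^ (-1 - α)) * lineWeight α q.2 := by
  have hne : ∀ᵐ q : ℝ × Ed n ∂(volume.prod volume), q.1 ≠ 0 :=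
    Measure.quasiMeasurePreserving_fst.ae (compl_mem_ae_iff.2 (measure_singleton (0 : ℝ)))
  filter_upwards [hne] with q hq
  have habs : 0 < |q.1| := abs_pos.2 hq
  have hpt : pt (q.1 • q.2) q.1 = q.1 • pt q.2 1 := by rw [smul_pt, mul_one]
  have hpow : |q.1| ^ n * |q.1| ^ (-((n + 1 : ℕ) : ℝ) - α) = |q.1| ^ (-1 - α) := by
    rw [← rpow_natCast, ← rpow_add habs]
    congr 1
    push_cast
    ring
  rw [hpt, apply_abs_smul_of_even hS, norm_smul, norm_eq_abs, mul_rpow habs.le (norm_nonneg _),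
    norm_pt_one_rpow, ← hpow]
  ring

lemma integrable_kernel_swap (hm : Measurable S) (hS : ∀ h, S (-h) = S h)
    (hint : Integrable (fun h => S h * ‖h‖ ^ (-((n + 1 : ℕ) : ℝ) - α))) :
    Integrable (fun q : Ed n × ℝ => (S (|q.2| • pt q.1 1) * |q.2| ^ (-1 - α)) * lineWeight α q.1)
      (volume.prod volume) :=
  ((integrable_abs_pow_mul_comp_pt_smul (by fun_prop) hint).congr
    (ae_abs_pow_mul_kernel_comp_pt_smul hS)).swap

lemma integral_abs_eq_two_mul_lineIntegral (ζ : Ed n) :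
    ∫ σ : ℝ, (S (|σ| • pt ζ 1) * |σ| ^ (-1 - α)) * lineWeight α ζ =
      2 * (lineIntegral α S ζ * lineWeight α ζ) := by
  rw [integral_mul_const, integral_comp_abs (f := fun σ => S (σ • pt ζ 1) * σ ^ (-1 - α)),
    lineIntegral]
  ring

lemma ae_integrableOn_line (hm : Measurable S) (hS : ∀ h, S (-h) = S h)
    (hint : Integrable (fun h => S h * ‖h‖ ^ (-((n + 1 : ℕ) : ℝ) - α))) :
    ∀ᵐ ζ : Ed n, IntegrableOn (fun σ : ℝ => S (σ • pt ζ 1) * σ ^ (-1 - α)) (Ioi 0) := by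
  filter_upwards [(integrable_kernel_swap hm hS hint).prod_right_ae] with ζ hζ
  rw [integrable_mul_const_iff (lineWeight_pos ζ).ne'.isUnit] at hζ
  refine hζ.integrableOn.congr_fun (fun σ (hσ : 0 < σ) => ?_) measurableSet_Ioi
  simp only [abs_of_pos hσ]

lemma integrable_lineIntegral_mul_lineWeight (hm : Measurable S) (hS : ∀ h, S (-h) = S h)
    (hint : Integrable (fun h => S h * ‖h‖ ^ (-((n + 1 : ℕ) : ℝ) - α))) :
    Integrable (fun ζ : Ed n => lineIntegral α S ζ * lineWeight α ζ) := by
  have hfubini := (integrable_kernel_swap hm hS hint).integral_prod_left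
  simp only [integral_abs_eq_two_mul_lineIntegral] at hfubini
  exact (integrable_const_mul_iff (by simp) _).1 hfubini

lemma integral_kernel_eq_two_mul_integral_lineIntegral (hm : Measurable S)
    (hS : ∀ h, S (-h) = S h)
    (hint : Integrable (fun h => S h * ‖h‖ ^ (-((n + 1 : ℕ) : ℝ) - α))) :
    ∫ h, S h * ‖h‖ ^ (-((n + 1 : ℕ) : ℝ) - α) =
      2 * ∫ ζ : Ed n, lineIntegral α S ζ * lineWeight α ζ := by
  rw [integral_eq_integral_abs_pow_mul_comp_pt_smul (by fun_prop) hint,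
    integral_congr_ae (ae_abs_pow_mul_kernel_comp_pt_smul hS), ← integral_prod_swap]
  simp only [Prod.fst_swap, Prod.snd_swap]
  rw [integral_prod _ (integrable_kernel_swap hm hS hint), ← integral_const_mul]
  simp only [integral_abs_eq_two_mul_lineIntegral]

end LineIntegrals

section NormPowers

variable {E : Type*} [NormedAddCommGroup E]

lemma add_rpow_le_two_rpow_mul {a b β : ℝ} (ha : 0 ≤ a) (hb : 0 ≤ b) (hβ : 0 ≤ β) :
    (a + b) ^ β ≤ 2 ^ β * (a ^ β + b ^ β) := by
  have hmax : max a b ^ β ≤ a ^ β + b ^ β := by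
    have := rpow_nonneg ha β
    have := rpow_nonneg hb β
    rcases max_choice a b with h | h <;> rw [h] <;> linarith
  calc (a + b) ^ β ≤ (2 * max a b) ^ β :=
        rpow_le_rpow (by positivity) (by linarith [le_max_left a b, le_max_right a b]) hβ
    _ = 2 ^ β * max a b ^ β := mul_rpow two_pos.le (le_max_of_le_left ha)
    _ ≤ 2 ^ β * (a ^ β + b ^ β) := by gcongr

lemma isBigO_const_one_add_norm_rpow (c β : ℝ) :
    (fun _ => c) =O[⊤] fun y : E => 1 + ‖y‖ ^ β := by
  refine Asymptotics.isBigO_top.2 ⟨|c|, fun y => ?_⟩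
  have := rpow_nonneg (norm_nonneg y) β
  rw [norm_eq_abs, norm_of_nonneg (by positivity)]
  nlinarith [abs_nonneg c]

lemma isBigO_comp_of_norm_le {f : E → ℝ} {β : ℝ} (hβ : 0 ≤ β)
    (hf : f =O[⊤] fun y => 1 + ‖y‖ ^ β) {g : E → E} {a : ℝ} (ha : 0 ≤ a)
    (hg : ∀ h, ‖g h‖ ≤ a + ‖h‖) : (fun h => f (g h)) =O[⊤] fun h : E => 1 + ‖h‖ ^ β := by
  refine (hf.comp_tendsto (k := g) tendsto_top).trans
    (Asymptotics.isBigO_top.2 ⟨1 + 2 ^ β * (a ^ β + 1), fun h => ?_⟩)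
  have hpow : ‖g h‖ ^ β ≤ 2 ^ β * (a ^ β + ‖h‖ ^ β) :=
    (rpow_le_rpow (norm_nonneg _) (hg h) hβ).trans
      (add_rpow_le_two_rpow_mul ha (norm_nonneg h) hβ)
  have hhβ := rpow_nonneg (norm_nonneg h) β
  have : 0 ≤ (2 : ℝ) ^ β * (a ^ β * ‖h‖ ^ β) := by positivity
  have : 0 < (2 : ℝ) ^ β := by positivity
  rw [Function.comp_apply, norm_of_nonneg (by positivity), norm_of_nonneg (by positivity)]
  nlinarith

lemma measurableSet_lt_norm [MeasurableSpace E] [OpensMeasurableSpace E] (ε : ℝ) :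
    MeasurableSet {h : E | ε < ‖h‖} :=
  measurableSet_lt measurable_const measurable_norm

lemma aecover_lt_norm [MeasurableSpace E] [OpensMeasurableSpace E] {μ : Measure E}
    [NullSingletonClass μ] :
    AECover μ (𝓝[>] (0 : ℝ)) (fun ε => {h : E | ε < ‖h‖}) where
  ae_eventually_mem := by
    filter_upwards [compl_mem_ae_iff.2 (measure_singleton (0 : E))] with h hh
    exact mem_of_superset (Ioo_mem_nhdsGT (norm_pos_iff.2 hh)) fun ε hε => hε.2
  measurableSet := measurableSet_lt_norm

variable [NormedSpace ℝ E] [FiniteDimensional ℝ E] [Nontrivial E]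

lemma pow_finrank_sub_one_smul_rpow (s : ℝ) {y : ℝ} (hy : 0 < y) :
    y ^ (Module.finrank ℝ E - 1) • y ^ s = y ^ (s + Module.finrank ℝ E - 1) := by
  rw [smul_eq_mul, ← rpow_natCast, ← rpow_add hy, Nat.cast_sub Module.finrank_pos]
  congr 1
  push_cast
  ring

variable [MeasurableSpace E] [BorelSpace E] {μ : Measure E} [μ.IsAddHaarMeasure] {s : ℝ}

lemma integrableOn_norm_rpow_ball {r : ℝ} (hs : -(Module.finrank ℝ E : ℝ) < s) :
    IntegrableOn (fun h : E => ‖h‖ ^ s) (ball 0 r) μ := by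
  rw [integrableOn_fun_norm_addHaar μ (f := fun y : ℝ => y ^ s)]
  refine IntegrableOn.congr_fun ?_ (fun y hy => (pow_finrank_sub_one_smul_rpow s hy.1).symm)
    measurableSet_Ioo
  rcases le_or_gt r 0 with hr | hr
  · simp [hr]
  · exact (intervalIntegral.integrableOn_Ioo_rpow_iff hr).2 (by linarith)

lemma integrableOn_norm_rpow_of_lt {ε : ℝ} (hε : 0 < ε) (hs : s < -(Module.finrank ℝ E : ℝ)) :
    IntegrableOn (fun h : E => ‖h‖ ^ s) {h | ε < ‖h‖} μ := by
  have hradial : IntegrableOn (fun y : ℝ => y ^ (Module.finrank ℝ E - 1) • y ^ s) (Ioi ε) :=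
    (integrableOn_Ioi_rpow_of_lt (by linarith) hε).congr_fun
      (fun y hy => (pow_finrank_sub_one_smul_rpow (E := E) s (hε.trans hy)).symm)
      measurableSet_Ioi
  rw [← integrable_indicator_iff (measurableSet_lt_norm ε)]
  refine (integrable_fun_norm_addHaar μ (f := (Ioi ε).indicator fun y : ℝ => y ^ s)).2 ?_
  simp only [← indicator_smul]
  exact hradial.integrable_indicator measurableSet_Ioi |>.integrableOn

end NormPowers

section SecondDifference

variable {E : Type*} {f : E → ℝ} {x : E}

lemma secondDiff_neg [AddCommGroup E] (f : E → ℝ) (x h : E) :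
    secondDiff f x (-h) = secondDiff f x h := by
  simp only [secondDiff, sub_neg_eq_add, ← sub_eq_add_neg]
  ring

@[simp] lemma secondDiff_zero [AddCommGroup E] (f : E → ℝ) (x : E) : secondDiff f x 0 = 0 := by
  simp only [secondDiff, add_zero, sub_zero]
  ring

variable [NormedAddCommGroup E]

lemma isBigO_secondDiff {β : ℝ} (hβ : 0 ≤ β) (hf : f =O[⊤] fun y => 1 + ‖y‖ ^ β) (x : E) :
    secondDiff f x =O[⊤] fun h => 1 + ‖h‖ ^ β :=
  ((isBigO_comp_of_norm_le hβ hf (norm_nonneg x) (norm_add_le x)).add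
    (isBigO_comp_of_norm_le hβ hf (norm_nonneg x) (norm_sub_le x))).sub
    (isBigO_const_one_add_norm_rpow _ β)

lemma measurable_secondDiff [MeasurableSpace E] [BorelSpace E] (hf : Measurable f) :
    Measurable (secondDiff f x) :=
  ((hf.comp (measurable_const_add x)).add (hf.comp (measurable_const_sub x))).sub_const _

variable [NormedSpace ℝ E]

lemma hasFDerivAt_symm_sum {k : E} (hadd : DifferentiableAt ℝ f (x + k))
    (hsub : DifferentiableAt ℝ f (x - k)) :
    HasFDerivAt (fun k => f (x + k) + f (x - k)) (fderiv ℝ f (x + k) - fderiv ℝ f (x - k)) k := by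
  have hsum := (hadd.hasFDerivAt.comp k ((hasFDerivAt_id k).const_add x)).add
    (hsub.hasFDerivAt.comp k ((hasFDerivAt_id k).const_sub x))
  simp only [ContinuousLinearMap.comp_id, ContinuousLinearMap.comp_neg, ← sub_eq_add_neg] at hsum
  exact hsum

lemma exists_secondDiff_le (hf : ContDiffAt ℝ 2 f x) :
    ∃ r > 0, ∃ L ≥ 0, ∀ h, ‖h‖ < r → |secondDiff f x h| ≤ L * ‖h‖ ^ 2 := by
  obtain ⟨L, t, ht, hL⟩ := (hf.fderiv_right (m := 1) (by norm_num)).exists_lipschitzOnWith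
  have hdiff : ∀ᶠ y in 𝓝 x, DifferentiableAt ℝ f y :=
    (hf.eventually (by simp)).mono fun y hy => hy.differentiableAt (by simp)
  obtain ⟨r, hr, hball⟩ := Metric.eventually_nhds_iff_ball.1 (hdiff.and ht)
  refine ⟨r, hr, 2 * L, by positivity, fun h hh => ?_⟩
  have hmem : ∀ k ∈ closedBall (0 : E) ‖h‖, x + k ∈ ball x r ∧ x - k ∈ ball x r := fun k hk => by
    have := mem_closedBall_zero_iff.1 hk
    simp only [mem_ball, dist_eq_norm, add_sub_cancel_left, sub_sub_cancel_left, norm_neg, and_self]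
    linarith
  have hbound : ∀ k ∈ closedBall (0 : E) ‖h‖,
      ‖fderiv ℝ f (x + k) - fderiv ℝ f (x - k)‖ ≤ 2 * L * ‖h‖ := by
    intro k hk
    have hnorm : ‖x + k - (x - k)‖ ≤ 2 * ‖h‖ := by
      rw [add_sub_sub_cancel, ← two_smul ℝ k, norm_smul, norm_two]
      linarith [mem_closedBall_zero_iff.1 hk]
    calc _ ≤ (L : ℝ) * ‖x + k - (x - k)‖ :=
          hL.norm_sub_le (hball _ (hmem k hk).1).2 (hball _ (hmem k hk).2).2
      _ ≤ L * (2 * ‖h‖) := by gcongr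
      _ = _ := by ring
  have hmean := Convex.norm_image_sub_le_of_norm_hasFDerivWithin_le
    (fun k hk => (hasFDerivAt_symm_sum (hball _ (hmem k hk).1).1
      (hball _ (hmem k hk).2).1).hasFDerivWithinAt)
    hbound (convex_closedBall _ _) (mem_closedBall_self (norm_nonneg h))
    (by simp : h ∈ closedBall (0 : E) ‖h‖)
  simp only [add_zero, sub_zero, ← two_mul] at hmean
  exact hmean.trans_eq (by ring)

end SecondDifference

section Comparison

variable {d : ℕ} {α β : ℝ} {f g M : Ed d → ℝ} {x : Ed d}

/-- The singular integral of the fractional Laplacian at `x`, truncated at distance `ε`. -/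
noncomputable def truncIntegral (α : ℝ) (f : Ed d → ℝ) (x : Ed d) (ε : ℝ) : ℝ :=
  ∫ h in {h | ε < ‖h‖}, (f (x + h) - f x) * ‖h‖ ^ (-(d : ℝ) - α)

/-- The absolutely convergent symmetrization of the singular integral of the fractional Laplacian.
It is twice the limit of `truncIntegral`. -/
noncomputable def secondDiffIntegral (α : ℝ) (f : Ed d → ℝ) (x : Ed d) : ℝ :=
  ∫ h, secondDiff f x h * ‖h‖ ^ (-(d : ℝ) - α)

lemma secondDiffIntegral_neg :
    secondDiffIntegral α (fun y => -f y) x = -secondDiffIntegral α f x := by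
  rw [secondDiffIntegral, secondDiffIntegral, ← integral_neg]
  congr 1 with h
  simp only [secondDiff]
  ring

lemma truncIntegral_eq (ε : ℝ) : truncIntegral α f x ε =
    ∫ y in {y | ε < ‖y - x‖}, (f y - f x) * ‖y - x‖ ^ (-(d : ℝ) - α) := by
  rw [← (measurePreserving_add_left volume x).setIntegral_preimage_emb
    (measurableEmbedding_addLeft x), truncIntegral]
  simp

lemma fracConst_pos (hd : 0 < d) (hα0 : 0 < α) (hα : α < 2) : 0 < fracConst d α := by
  have := Real.Gamma_pos_of_pos (show 0 < ((d : ℝ) + α) / 2 by positivity)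
  have := Real.Gamma_pos_of_pos (show 0 < 1 - α / 2 by linarith)
  unfold fracConst
  positivity

lemma tendsto_truncIntegral_of_fracLapAt_zero (hd : 0 < d) (hα0 : 0 < α) (hα : α < 2)
    (hM : fracLapAt d α M x 0) : Tendsto (truncIntegral α M x) (𝓝[>] 0) (𝓝 0) := by
  have hlim := hM.const_mul (fracConst d α)⁻¹
  simp only [← truncIntegral_eq, inv_mul_cancel_left₀ (fracConst_pos hd hα0 hα).ne',
    mul_zero] at hlim
  exact hlim

variable [NeZero d]

lemma integrableOn_kernel_far (hβ : 0 ≤ β) (hβα : β < α) (hg : Measurable g)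
    (hgrowth : g =O[⊤] fun h => 1 + ‖h‖ ^ β) {ε : ℝ} (hε : 0 < ε) :
    IntegrableOn (fun h => g h * ‖h‖ ^ (-(d : ℝ) - α)) {h | ε < ‖h‖} := by
  obtain ⟨C, hC⟩ := Asymptotics.isBigO_top.1 hgrowth
  have hpow : ∀ s < -(d : ℝ), IntegrableOn (fun h : Ed d => ‖h‖ ^ s) {h | ε < ‖h‖} := fun s hs =>
    integrableOn_norm_rpow_of_lt hε (by rwa [finrank_euclideanSpace_fin])
  refine (((hpow (-d - α) (by linarith)).add (hpow (β + (-d - α)) (by linarith))).const_mul C).mono'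
    (by fun_prop) ?_
  filter_upwards [ae_restrict_mem (measurableSet_lt_norm ε)] with h hh
  have hh0 : 0 < ‖h‖ := hε.trans hh
  have := rpow_nonneg hh0.le β
  rw [norm_mul, norm_of_nonneg (rpow_nonneg hh0.le _), Pi.add_apply, rpow_add hh0, ← one_add_mul,
    ← mul_assoc]
  gcongr
  simpa [norm_of_nonneg (show 0 ≤ 1 + ‖h‖ ^ β by positivity)] using hC h

lemma integrableOn_truncIntegral (hβ : 0 ≤ β) (hβα : β < α) (hf : Measurable f)
    (hgrowth : f =O[⊤] fun h => 1 + ‖h‖ ^ β) {ε : ℝ} (hε : 0 < ε) :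
    IntegrableOn (fun h => (f (x + h) - f x) * ‖h‖ ^ (-(d : ℝ) - α)) {h | ε < ‖h‖} :=
  integrableOn_kernel_far hβ hβα ((hf.comp (measurable_const_add x)).sub_const _)
    ((isBigO_comp_of_norm_le hβ hgrowth (norm_nonneg x) (norm_add_le x)).sub
      (isBigO_const_one_add_norm_rpow _ β)) hε

lemma integrable_secondDiff (hβ : 0 ≤ β) (hβα : β < α) (hα : α < 2) (hf : Measurable f)
    (hgrowth : f =O[⊤] fun y => 1 + ‖y‖ ^ β) (hx : ContDiffAt ℝ 2 f x) :
    Integrable (fun h => secondDiff f x h * ‖h‖ ^ (-(d : ℝ) - α)) := by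
  obtain ⟨r, hr, L, hL, hquad⟩ := exists_secondDiff_le hx
  have hm := measurable_secondDiff (x := x) hf
  have hnear : IntegrableOn (fun h => secondDiff f x h * ‖h‖ ^ (-(d : ℝ) - α)) (ball 0 r) := by
    have hpow : IntegrableOn (fun h : Ed d => ‖h‖ ^ (2 + (-(d : ℝ) - α))) (ball 0 r) :=
      integrableOn_norm_rpow_ball (by rw [finrank_euclideanSpace_fin]; linarith)
    refine (hpow.const_mul L).mono' (by fun_prop) ?_
    filter_upwards [ae_restrict_mem measurableSet_ball] with h hh
    rcases eq_or_ne h 0 with rfl | hne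
    · simpa using mul_nonneg hL (rpow_nonneg le_rfl _)
    · have hh0 : 0 < ‖h‖ := norm_pos_iff.2 hne
      rw [norm_mul, norm_eq_abs, norm_of_nonneg (rpow_nonneg hh0.le _), rpow_add hh0, rpow_two,
        ← mul_assoc]
      gcongr
      exact hquad h (by simpa using hh)
  have hfar := integrableOn_kernel_far hβ hβα hm (isBigO_secondDiff hβ hgrowth x) (half_pos hr)
  rw [← integrableOn_univ]
  refine (hnear.union hfar).mono_set fun h _ => (lt_or_ge ‖h‖ r).imp (by simp) fun hh => ?_
  exact show r / 2 < ‖h‖ by linarith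

lemma setIntegral_secondDiff_eq_two_mul_truncIntegral (hβ : 0 ≤ β) (hβα : β < α)
    (hf : Measurable f) (hgrowth : f =O[⊤] fun h => 1 + ‖h‖ ^ β) {ε : ℝ} (hε : 0 < ε) :
    ∫ h in {h | ε < ‖h‖}, secondDiff f x h * ‖h‖ ^ (-(d : ℝ) - α) =
      2 * truncIntegral α f x ε := by
  have hplus := integrableOn_truncIntegral (x := x) hβ hβα hf hgrowth hε
  have hpreserving := Measure.measurePreserving_neg (volume : Measure (Ed d))
  have hemb := (MeasurableEquiv.neg (Ed d)).measurableEmbedding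
  have hneg : Neg.neg ⁻¹' {h : Ed d | ε < ‖h‖} = {h | ε < ‖h‖} := by simp
  have hminus := (hpreserving.integrableOn_comp_preimage hemb).2 hplus
  have hreflect := hpreserving.setIntegral_preimage_emb hemb
    (fun h => (f (x + h) - f x) * ‖h‖ ^ (-(d : ℝ) - α)) {h | ε < ‖h‖}
  rw [hneg] at hminus hreflect
  calc _ = (∫ h in {h | ε < ‖h‖}, (f (x + h) - f x) * ‖h‖ ^ (-(d : ℝ) - α)) +
        ∫ h in {h | ε < ‖h‖}, (f (x + -h) - f x) * ‖-h‖ ^ (-(d : ℝ) - α) := by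
        refine (integral_congr_ae (Eventually.of_forall fun h => ?_)).trans
          (integral_add hplus hminus)
        simp only [secondDiff, norm_neg, ← sub_eq_add_neg]
        ring
    _ = 2 * truncIntegral α f x ε := by rw [hreflect, truncIntegral, two_mul]

lemma tendsto_truncIntegral (hβ : 0 ≤ β) (hβα : β < α) (hα : α < 2) (hf : Measurable f)
    (hgrowth : f =O[⊤] fun y => 1 + ‖y‖ ^ β) (hx : ContDiffAt ℝ 2 f x) :
    Tendsto (truncIntegral α f x) (𝓝[>] 0) (𝓝 (secondDiffIntegral α f x / 2)) := by
  refine ((aecover_lt_norm.integral_tendsto_of_countably_generated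
    (integrable_secondDiff hβ hβα hα hf hgrowth hx)).div_const 2).congr' ?_
  filter_upwards [self_mem_nhdsWithin] with ε hε
  rw [setIntegral_secondDiff_eq_two_mul_truncIntegral hβ hβα hf hgrowth hε]
  ring

lemma secondDiffIntegral_nonpos_of_le (hβ : 0 ≤ β) (hβα : β < α) (hα : α < 2)
    (hf : Measurable f) (hgrowth : f =O[⊤] fun y => 1 + ‖y‖ ^ β) (hx : ContDiffAt ℝ 2 f x)
    (hM : Measurable M) (hMgrowth : M =O[⊤] fun y => 1 + ‖y‖ ^ β) (hL : fracLapAt d α M x 0)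
    {c : ℝ} (hle : ∀ y, f y - f x ≤ c * (M y - M x)) : secondDiffIntegral α f x ≤ 0 := by
  have hlim := tendsto_truncIntegral hβ hβα hα hf hgrowth hx
  have hlimM := (tendsto_truncIntegral_of_fracLapAt_zero (NeZero.pos d) (hβ.trans_lt hβα) hα
    hL).const_mul c
  rw [mul_zero] at hlimM
  have hhalf : secondDiffIntegral α f x / 2 ≤ 0 := by
    refine le_of_tendsto_of_tendsto hlim hlimM ?_
    filter_upwards [self_mem_nhdsWithin] with ε hε
    rw [truncIntegral, truncIntegral, ← integral_const_mul]
    refine integral_mono (integrableOn_truncIntegral hβ hβα hf hgrowth hε)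
      ((integrableOn_truncIntegral hβ hβα hM hMgrowth hε).const_mul c) fun h => ?_
    simp only [← mul_assoc]
    exact mul_le_mul_of_nonneg_right (hle (x + h)) (rpow_nonneg (norm_nonneg _) _)
  linarith

lemma eq_zero_of_fracLapAt_zero (hβ : 0 ≤ β) (hβα : β < α) (hα : α < 2) (hM : Continuous M)
    (hMgrowth : M =O[⊤] fun y => 1 + ‖y‖ ^ β) (hM0 : ∀ y, 0 ≤ M y) (hx : M x = 0)
    (hL : fracLapAt d α M x 0) : M = 0 := by
  have hlim := tendsto_truncIntegral_of_fracLapAt_zero (NeZero.pos d) (hβ.trans_lt hβα) hα hL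
  have hint := fun {ε : ℝ} (hε : 0 < ε) =>
    integrableOn_truncIntegral (x := x) hβ hβα hM.measurable hMgrowth hε
  have hnonneg : ∀ h, 0 ≤ (M (x + h) - M x) * ‖h‖ ^ (-(d : ℝ) - α) := fun h => by
    rw [hx, sub_zero]
    exact mul_nonneg (hM0 _) (rpow_nonneg (norm_nonneg h) _)
  have htrunc : ∀ ε > 0, truncIntegral α M x ε ≤ 0 := fun ε hε => by
    refine ge_of_tendsto hlim ?_
    filter_upwards [Ioo_mem_nhdsGT hε] with η hη
    exact setIntegral_mono_set (hint hη.1) (Eventually.of_forall hnonneg)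
      (LE.le.eventuallyLE fun h (hh : ε < ‖h‖) => hη.2.trans hh)
  by_contra hne
  obtain ⟨y, hy⟩ := Function.ne_iff.1 hne
  have hyx : 0 < ‖y - x‖ := norm_sub_pos_iff.2 fun h => hy (h ▸ hx)
  have hopen : IsOpen ({h | 0 < M (x + h)} ∩ {h : Ed d | ‖y - x‖ / 2 < ‖h‖}) :=
    (isOpen_lt continuous_const (hM.comp (continuous_const_add x))).inter
      (isOpen_lt continuous_const continuous_norm)
  have hmem : y - x ∈ {h | 0 < M (x + h)} ∩ {h : Ed d | ‖y - x‖ / 2 < ‖h‖} :=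
    ⟨by simpa using (hM0 y).lt_of_ne' hy, half_lt_self hyx⟩
  refine (htrunc _ (half_pos hyx)).not_gt ((setIntegral_pos_iff_support_of_nonneg_ae
    (Eventually.of_forall hnonneg) (hint (half_pos hyx))).2 ?_)
  refine (hopen.measure_pos volume ⟨_, hmem⟩).trans_le (measure_mono fun h hh => ⟨?_, hh.2⟩)
  have hh0 : 0 < ‖h‖ := (half_pos hyx).trans hh.2
  rw [Function.mem_support, hx, sub_zero]
  exact (mul_pos hh.1 (rpow_pos_of_pos hh0 _)).ne'

end Comparison

section Bump

variable {E : Type*} [NormedAddCommGroup E] {p τ : ℝ}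

/-- The profile `(τ² - ‖w‖²)₊^p` on the ball of radius `τ`. For `p = α / 2` its fractional Laplacian
of order `α` is constant in the ball. -/
noncomputable def bump (p τ : ℝ) (w : E) : ℝ := (max (τ ^ 2 - ‖w‖ ^ 2) 0) ^ p

lemma bump_nonneg (w : E) : 0 ≤ bump p τ w := rpow_nonneg (le_max_right _ _) _

lemma bump_le (hp : 0 ≤ p) (hτ : 0 ≤ τ) (w : E) : bump p τ w ≤ τ ^ (2 * p) := by
  rw [rpow_mul hτ, rpow_two]
  exact rpow_le_rpow (le_max_right _ _) (max_le (sub_le_self _ (sq_nonneg _)) (sq_nonneg τ)) hp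

lemma bump_pos {w : E} (hw : ‖w‖ < τ) : 0 < bump p τ w :=
  rpow_pos_of_pos (lt_max_of_lt_left (by nlinarith [norm_nonneg w])) p

lemma bump_eq_zero (hp : p ≠ 0) (hτ : 0 ≤ τ) {w : E} (hw : τ ≤ ‖w‖) : bump p τ w = 0 := by
  rw [bump, max_eq_right (by nlinarith), zero_rpow hp]

lemma continuous_bump (hp : 0 ≤ p) : Continuous (bump p τ : E → ℝ) :=
  Continuous.rpow_const (by fun_prop) fun _ => Or.inr hp

lemma abs_rpow_sub_rpow_le {a b : ℝ} (hp0 : 0 ≤ p) (hp : p ≤ 1) (ha : 0 ≤ a) (hb : 0 ≤ b) :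
    |a ^ p - b ^ p| ≤ |a - b| ^ p := by
  wlog h : b ≤ a generalizing a b
  · rw [abs_sub_comm, abs_sub_comm a b]
    exact this hb ha (le_of_not_ge h)
  rw [abs_of_nonneg (sub_nonneg.2 (rpow_le_rpow hb h hp0)), abs_of_nonneg (sub_nonneg.2 h)]
  have hadd := rpow_add_le_add_rpow hb (sub_nonneg.2 h) hp0 hp
  rw [add_sub_cancel] at hadd
  linarith

lemma max_sq_sub_sq_zero {a : ℝ} (ha : 0 ≤ a) (hτ : 0 ≤ τ) :
    max (τ ^ 2 - a ^ 2) 0 = τ ^ 2 - min a τ ^ 2 := by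
  rcases le_total a τ with h | h
  · rw [min_eq_left h, max_eq_left (by nlinarith)]
  · rw [min_eq_right h, sub_self, max_eq_right (by nlinarith)]

lemma abs_max_sq_sub_sq_sub_le {a b : ℝ} (ha : 0 ≤ a) (hb : 0 ≤ b) (hτ : 0 ≤ τ) :
    |max (τ ^ 2 - a ^ 2) 0 - max (τ ^ 2 - b ^ 2) 0| ≤ 2 * τ * |a - b| := by
  have hdiff : |min b τ - min a τ| ≤ |a - b| := by
    simpa [abs_sub_comm] using abs_min_sub_min_le_max b τ a τ
  have hsum : |min b τ + min a τ| ≤ 2 * τ := by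
    rw [abs_of_nonneg (by positivity)]
    linarith [min_le_right b τ, min_le_right a τ]
  calc |max (τ ^ 2 - a ^ 2) 0 - max (τ ^ 2 - b ^ 2) 0|
      = |min b τ + min a τ| * |min b τ - min a τ| := by
        rw [max_sq_sub_sq_zero ha hτ, max_sq_sub_sq_zero hb hτ, ← abs_mul]
        congr 1
        ring
    _ ≤ 2 * τ * |a - b| := by gcongr

lemma abs_bump_sub_le (hp0 : 0 ≤ p) (hp : p ≤ 1) (hτ : 0 ≤ τ) (w w' : E) :
    |bump p τ w - bump p τ w'| ≤ (2 * τ * ‖w - w'‖) ^ p := by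
  refine (abs_rpow_sub_rpow_le hp0 hp (le_max_right _ _) (le_max_right _ _)).trans
    (rpow_le_rpow (abs_nonneg _) ?_ hp0)
  refine (abs_max_sq_sub_sq_sub_le (norm_nonneg w) (norm_nonneg w') hτ).trans ?_
  gcongr
  exact abs_norm_sub_norm_le w w'

lemma quadProfile_eq_bump [InnerProductSpace ℝ E] (z ζ : E) (v : ℝ) :
    quadProfile p (τ ^ 2 - ‖z‖ ^ 2) (-⟪z, ζ - z⟫) (‖ζ - z‖ ^ 2) v = bump p τ (z + v • (ζ - z)) := by
  rw [quadProfile, bump, norm_add_sq_real, norm_smul, mul_pow, norm_eq_abs, sq_abs,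
    real_inner_smul_right]
  congr 2
  ring

end Bump

section TestFunction

variable {n : ℕ} {p β δ τ : ℝ}

/-- The extension of `bump p τ` from the hyperplane of height one to a function which is homogeneous
of degree `β` and vanishes below height zero; it is supported in the cone of opening
`arctan τ`. -/
noncomputable def testFn (p β τ : ℝ) (x : Ed (n + 1)) : ℝ :=
  if 0 < x (Fin.last n) then x (Fin.last n) ^ β * bump p τ ((x (Fin.last n))⁻¹ • hor x) else 0

lemma testFn_pt {s : ℝ} (hs : 0 < s) (w : Ed n) :
    testFn p β τ (pt w s) = s ^ β * bump p τ (s⁻¹ • w) := by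
  simp [testFn, hs]

lemma testFn_pt_one (w : Ed n) : testFn p β τ (pt w 1) = bump p τ w := by simp [testFn_pt]

lemma testFn_eq_zero {x : Ed (n + 1)} (hx : x (Fin.last n) ≤ 0) : testFn p β τ x = 0 :=
  if_neg hx.not_gt

lemma testFn_nonneg (x : Ed (n + 1)) : 0 ≤ testFn p β τ x := by
  unfold testFn
  split_ifs with h
  · exact mul_nonneg (rpow_nonneg h.le _) (bump_nonneg _)
  · exact le_rfl

lemma isBigO_testFn (hp : 0 ≤ p) (hτ : 0 ≤ τ) (hβ : 0 ≤ β) :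
    (testFn p β τ : Ed (n + 1) → ℝ) =O[⊤] fun x => 1 + ‖x‖ ^ β := by
  refine Asymptotics.isBigO_top.2 ⟨τ ^ (2 * p), fun x => ?_⟩
  rw [norm_of_nonneg (testFn_nonneg x), norm_of_nonneg (by positivity)]
  rcases lt_or_ge 0 (x (Fin.last n)) with hx | hx
  · have hlast : x (Fin.last n) ^ β ≤ ‖x‖ ^ β :=
      rpow_le_rpow hx.le ((le_abs_self _).trans (by simpa using PiLp.norm_apply_le x (Fin.last n)))
        hβ
    rw [testFn, if_pos hx, mul_comm]
    gcongr
    · exact bump_le hp hτ _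
    · linarith
  · rw [testFn_eq_zero hx]
    positivity

lemma measurable_testFn (hp : 0 ≤ p) : Measurable (testFn p β τ : Ed (n + 1) → ℝ) := by
  have hlast : Measurable (fun x : Ed (n + 1) => x (Fin.last n)) := lastL.continuous.measurable
  refine Measurable.ite (measurableSet_lt measurable_const hlast) ?_ measurable_const
  exact (hlast.pow_const _).mul
    ((continuous_bump hp).measurable.comp (hlast.inv.smul continuous_hor.measurable))

lemma contDiffAt_testFn {z : Ed n} (hz : ‖z‖ < τ) :
    ContDiffAt ℝ 2 (testFn p β τ) (pt z 1) := by
  have hlast : ContDiff ℝ 2 (fun x : Ed (n + 1) => x (Fin.last n)) := (lastL (n := n)).contDiff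
  have hhor : ContDiff ℝ 2 (fun x : Ed (n + 1) => hor x) := (horL (n := n)).contDiff
  have hpos : 0 < (pt z 1) (Fin.last n) := by simp
  have hbase : ContDiffAt ℝ 2 (fun x : Ed (n + 1) => τ ^ 2 - ‖(x (Fin.last n))⁻¹ • hor x‖ ^ 2)
      (pt z 1) :=
    contDiffAt_const.sub (((hlast.contDiffAt.inv hpos.ne').smul hhor.contDiffAt).norm_sq ℝ)
  have hbase_pos : 0 < τ ^ 2 - ‖((pt z 1) (Fin.last n))⁻¹ • hor (pt z 1)‖ ^ 2 := by
    simp only [pt_last, hor_pt, inv_one, one_smul]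
    nlinarith [norm_nonneg z]
  refine ((hlast.contDiffAt.rpow_const_of_ne (p := β) hpos.ne').mul
    (hbase.rpow_const_of_ne (p := p) hbase_pos.ne')).congr_of_eventuallyEq ?_
  filter_upwards [hbase.continuousAt.eventually (lt_mem_nhds hbase_pos),
    hlast.continuous.continuousAt.eventually (lt_mem_nhds hpos)] with x hx hxlast
  rw [testFn, if_pos hxlast, bump, max_eq_left hx.le]

lemma testFn_line (z ζ : Ed n) (σ : ℝ) :
    testFn p β τ (pt z 1 + σ • pt ζ 1) =
      lineFun β (quadProfile p (τ ^ 2 - ‖z‖ ^ 2) (-⟪z, ζ - z⟫) (‖ζ - z‖ ^ 2)) σ := by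
  rw [smul_pt, pt_add, mul_one, lineFun]
  split_ifs with h
  · rw [testFn_pt h, quadProfile_eq_bump]
    congr 2
    have hinv : (1 + σ)⁻¹ = 1 - σ / (1 + σ) := by
      field_simp
      ring
    rw [smul_add, smul_smul, ← div_eq_inv_mul, hinv]
    module
  · exact testFn_eq_zero (by simpa using h)

lemma secondDiff_testFn_line (z ζ : Ed n) (σ : ℝ) :
    secondDiff (testFn p β τ) (pt z 1) (σ • pt ζ 1) =
      secondDiff (lineFun β (quadProfile p (τ ^ 2 - ‖z‖ ^ 2) (-⟪z, ζ - z⟫) (‖ζ - z‖ ^ 2))) 0 σ := by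
  have hbase := testFn_line (p := p) (β := β) (τ := τ) z ζ 0
  rw [zero_smul, add_zero] at hbase
  rw [secondDiff, secondDiff, sub_eq_add_neg (pt z 1), ← neg_smul, testFn_line, testFn_line, hbase,
    zero_add, zero_sub]

/-- The part of the integral of `testFn` along the line through `pt z 1` in the direction `pt ζ 1`
which is singular as `δ → 0`. -/
noncomputable def bumpMain (p δ τ : ℝ) (z ζ : Ed n) : ℝ :=
  lineMain (2 * p) δ fun v => bump p τ (z + v • (ζ - z))

/-- The size of the error terms: of order `ω(τ)` for `p = α / 2`. -/
noncomputable def errSize (p τ : ℝ) : ℝ := τ + τ ^ (2 * p) * (1 + scaleIntegral p τ)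

lemma add_rpow_le_errSize (hτ : 0 < τ) (hτ2 : τ ≤ 1 / 2) : τ + τ ^ (2 * p) ≤ errSize p τ := by
  have := mul_nonneg (rpow_nonneg hτ.le (2 * p)) (scaleIntegral_nonneg (p := p) hτ hτ2)
  unfold errSize
  linarith

lemma errSize_pos (hτ : 0 < τ) (hτ2 : τ ≤ 1 / 2) : 0 < errSize p τ :=
  lt_of_lt_of_le (by positivity) (add_rpow_le_errSize hτ hτ2)

lemma two_mul_rpow_mul_rpow_one_sub_le {r : ℝ} (hp : p ≤ 1) (hτ : 0 < τ) (hr : 0 ≤ r) :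
    (2 * τ * r) ^ p * τ ^ (1 - p) ≤ 2 * (τ * r ^ p) := by
  have hτpow : τ ^ p * τ ^ (1 - p) = τ := by rw [← rpow_add hτ, add_sub_cancel, rpow_one]
  have htwo : (2 : ℝ) ^ p ≤ 2 := by
    simpa using rpow_le_rpow_of_exponent_le (x := 2) (by norm_num) hp
  calc (2 * τ * r) ^ p * τ ^ (1 - p) = 2 ^ p * (τ ^ p * τ ^ (1 - p) * r ^ p) := by
        rw [mul_rpow (by positivity) hr, mul_rpow two_pos.le hτ.le]
        ring
    _ ≤ 2 * (τ * r ^ p) := by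
        rw [hτpow]
        gcongr

lemma abs_lineIntegral_add_le (hp0 : 0 < p) (hp : p < 1) (hδ : 0 < δ) (hδp : δ ≤ 2 * p)
    (hτ : 0 < τ) (hτ2 : τ ≤ 1 / 2) {z ζ : Ed n} (hz : ‖z‖ < τ) (hne : ζ ≠ z)
    (hint : IntegrableOn (fun σ => secondDiff (testFn p (2 * p - δ) τ) (pt z 1) (σ • pt ζ 1) *
      σ ^ (-1 - 2 * p)) (Ioi 0)) :
    |lineIntegral (2 * p) (secondDiff (testFn p (2 * p - δ) τ) (pt z 1)) ζ +
        π / sin (π * p) * ‖ζ - z‖ ^ (2 * p) - bumpMain p δ τ z ζ| ≤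
      2 * lineConst p * errSize p τ * (1 + ‖ζ - z‖ ^ p) := by
  have hq : 0 < τ ^ 2 - ‖z‖ ^ 2 := by nlinarith [norm_nonneg z]
  have hA : 0 < ‖ζ - z‖ ^ 2 := pow_pos (norm_sub_pos_iff.2 hne) 2
  simp only [secondDiff_testFn_line] at hint
  have hline := abs_integral_secondDiff_lineFun_add_le (K := τ ^ (2 * p))
    (L := (2 * τ * ‖ζ - z‖) ^ p) hp0 hp hδ hδp hq hA (fun v => ?_) (fun v => ?_) hτ hτ2 hint
  · have hI := scaleIntegral_nonneg (p := p) hτ hτ2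
    have hC := lineConst_pos hp0 hp
    have hmodulus := two_mul_rpow_mul_rpow_one_sub_le hp.le hτ (norm_nonneg (ζ - z))
    simp only [lineIntegral, bumpMain, secondDiff_testFn_line, ← quadProfile_eq_bump]
    rw [rpow_mul (norm_nonneg _), rpow_two]
    have hr := rpow_nonneg (norm_nonneg (ζ - z)) p
    have hX : 0 ≤ τ ^ (2 * p) * (1 + scaleIntegral p τ) := by positivity
    calc _ ≤ _ := hline
      _ ≤ lineConst p * (2 * errSize p τ * (1 + ‖ζ - z‖ ^ p)) := by
        gcongr
        rw [errSize]
        nlinarith [mul_nonneg hX hr]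
      _ = 2 * lineConst p * errSize p τ * (1 + ‖ζ - z‖ ^ p) := by ring
  · rw [quadProfile_eq_bump]
    exact ⟨bump_nonneg _, bump_le hp0.le hτ.le _⟩
  · rw [quadProfile_eq_bump, quadProfile_eq_bump, ← mul_rpow (by positivity) (abs_nonneg v)]
    refine (abs_bump_sub_le hp0.le hp.le hτ.le _ _).trans_eq ?_
    rw [zero_smul, add_zero, add_sub_cancel_left, norm_smul, norm_eq_abs, mul_comm |v|,
      mul_assoc _ _ |v|]

end TestFunction

section LineWeight

variable {n : ℕ} {α : ℝ}

lemma lineWeight_le_one (hα : 0 ≤ α) (ζ : Ed n) : lineWeight α ζ ≤ 1 :=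
  rpow_le_one_of_one_le_of_nonpos (le_add_of_nonneg_right (sq_nonneg _))
    (by linarith [(n.cast_nonneg : (0 : ℝ) ≤ n)])

lemma continuous_lineWeight : Continuous (lineWeight α : Ed n → ℝ) :=
  Continuous.rpow_const (by fun_prop) fun ζ => Or.inl (by positivity)

lemma one_sub_le_lineWeight (hα : 0 ≤ α) (ζ : Ed n) :
    1 - ((n : ℝ) + 1 + α) / 2 * ‖ζ‖ ^ 2 ≤ lineWeight α ζ := by
  have hbase : 0 < 1 + ‖ζ‖ ^ 2 := by positivity
  rw [lineWeight, rpow_def_of_pos hbase]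
  have hlog := log_le_sub_one_of_pos hbase
  have hexp := add_one_le_exp (log (1 + ‖ζ‖ ^ 2) * (-((n : ℝ) + 1 + α) / 2))
  have hc : (0 : ℝ) ≤ ((n : ℝ) + 1 + α) / 2 := by positivity
  nlinarith [mul_le_mul_of_nonneg_left hlog hc]

lemma integrable_one_add_norm_mul_lineWeight (hα : 0 < α) :
    Integrable (fun ζ : Ed n => (1 + ‖ζ‖) * lineWeight α ζ) := by
  have hbound : Integrable (fun ζ : Ed n => 2 * (1 + ‖ζ‖ ^ 2) ^ (-((n : ℝ) + α) / 2)) :=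
    (integrable_rpow_neg_one_add_norm_sq (by rw [finrank_euclideanSpace_fin]; linarith)).const_mul 2
  refine hbound.mono' ((continuous_const.add continuous_norm).mul
    continuous_lineWeight).aestronglyMeasurable (Eventually.of_forall fun ζ => ?_)
  have hbase : 0 < 1 + ‖ζ‖ ^ 2 := by positivity
  have hsqrt : (1 + ‖ζ‖) / 2 ≤ √(1 + ‖ζ‖ ^ 2) :=
    le_sqrt_of_sq_le (by nlinarith [sq_nonneg (‖ζ‖ - 1), norm_nonneg ζ])
  rw [norm_of_nonneg (mul_nonneg (by positivity) (lineWeight_pos ζ).le), lineWeight,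
    show -((n : ℝ) + α) / 2 = 1 / 2 + -((n : ℝ) + 1 + α) / 2 by ring, rpow_add hbase, ← mul_assoc,
    ← sqrt_eq_rpow]
  gcongr
  linarith

lemma integrable_lineWeight (hα : 0 < α) : Integrable (lineWeight α : Ed n → ℝ) := by
  refine (integrable_one_add_norm_mul_lineWeight hα).mono'
    continuous_lineWeight.aestronglyMeasurable (Eventually.of_forall fun ζ => ?_)
  rw [norm_of_nonneg (lineWeight_pos ζ).le]
  exact le_mul_of_one_le_left (lineWeight_pos ζ).le (le_add_of_nonneg_right (norm_nonneg ζ))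

lemma integrable_norm_rpow_mul_lineWeight (hα : 0 ≤ α) :
    Integrable (fun ζ : Ed n => ‖ζ‖ ^ α * lineWeight α ζ) := by
  have hbound : Integrable (fun ζ : Ed n => (1 + ‖ζ‖ ^ 2) ^ (-((n : ℝ) + 1) / 2)) :=
    integrable_rpow_neg_one_add_norm_sq (by rw [finrank_euclideanSpace_fin]; linarith)
  refine hbound.mono' ((continuous_norm.rpow_const fun _ => Or.inr hα).mul
    continuous_lineWeight).aestronglyMeasurable (Eventually.of_forall fun ζ => ?_)
  have hnorm : ‖ζ‖ ^ α = (‖ζ‖ ^ 2) ^ (α / 2) := by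
    rw [← rpow_two, ← rpow_mul (norm_nonneg ζ), mul_div_cancel₀ _ two_ne_zero]
  rw [norm_of_nonneg (mul_nonneg (by positivity) (lineWeight_pos ζ).le), lineWeight, hnorm,
    show -((n : ℝ) + 1) / 2 = α / 2 + -((n : ℝ) + 1 + α) / 2 by ring, rpow_add (by positivity)]
  gcongr
  linarith

end LineWeight

section DirectionalBounds

variable {n : ℕ} {p τ δ : ℝ}

lemma abs_rpow_sub_rpow_le_mul {q a b R : ℝ} (hq : 1 ≤ q) (ha : a ∈ Icc 0 R) (hb : b ∈ Icc 0 R) :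
    |a ^ q - b ^ q| ≤ q * R ^ (q - 1) * |a - b| := by
  refine (convex_Icc 0 R).norm_image_sub_le_of_norm_hasDerivWithin_le
    (fun x _ => (hasDerivAt_rpow_const (Or.inr hq)).hasDerivWithinAt) (fun x hx => ?_) hb ha
  have := hx.1
  rw [norm_of_nonneg (by positivity)]
  gcongr
  exact hx.2

lemma abs_rpow_sub_rpow_le_of_abs_sub_le {a b q : ℝ} (hq0 : 0 ≤ q) (hq : q ≤ 2) (ha : 0 ≤ a)
    (hb : 0 ≤ b) (hτ1 : τ ≤ 1) (hab : |a - b| ≤ τ) :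
    |a ^ q - b ^ q| ≤ 2 * (τ + τ ^ q) * (1 + b) := by
  have hτ : 0 ≤ τ := (abs_nonneg _).trans hab
  have hτq : 0 ≤ τ ^ q := rpow_nonneg hτ q
  rcases le_or_gt q 1 with hq1 | hq1
  · have := (abs_rpow_sub_rpow_le hq0 hq1 ha hb).trans (rpow_le_rpow (abs_nonneg _) hab hq0)
    nlinarith [mul_nonneg hτq hb, mul_nonneg hτ hb]
  · have haR : a ≤ 1 + b := by linarith [(abs_le.1 hab).2]
    calc |a ^ q - b ^ q| ≤ q * (1 + b) ^ (q - 1) * |a - b| :=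
          abs_rpow_sub_rpow_le_mul hq1.le ⟨ha, haR⟩ ⟨hb, by linarith⟩
      _ ≤ 2 * (1 + b) ^ (1 : ℝ) * τ := by
          gcongr <;> linarith
      _ ≤ 2 * (τ + τ ^ q) * (1 + b) := by
          rw [rpow_one]
          nlinarith [mul_nonneg hτq hb]

lemma sin_pi_mul_pos (hp0 : 0 < p) (hp : p < 1) : 0 < sin (π * p) :=
  sin_pos_of_pos_of_lt_pi (by positivity) (by nlinarith [pi_pos])

/-- A constant depending only on `p` for the error terms in a fixed direction. -/
noncomputable def dirConst (p : ℝ) : ℝ := 6 * lineConst p + 2 * (π / sin (π * p))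

lemma dirConst_pos (hp0 : 0 < p) (hp : p < 1) : 0 < dirConst p := by
  have := lineConst_pos hp0 hp
  have := sin_pi_mul_pos hp0 hp
  unfold dirConst
  positivity

lemma abs_lineIntegral_add_norm_le (hp0 : 0 < p) (hp : p < 1) (hδ : 0 < δ) (hδp : δ ≤ 2 * p)
    (hτ : 0 < τ) (hτ2 : τ ≤ 1 / 2) {z ζ : Ed n} (hz : ‖z‖ < τ) (hne : ζ ≠ z)
    (hint : IntegrableOn (fun σ => secondDiff (testFn p (2 * p - δ) τ) (pt z 1) (σ • pt ζ 1) *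
      σ ^ (-1 - 2 * p)) (Ioi 0)) :
    |lineIntegral (2 * p) (secondDiff (testFn p (2 * p - δ) τ) (pt z 1)) ζ +
        π / sin (π * p) * ‖ζ‖ ^ (2 * p) - bumpMain p δ τ z ζ| ≤
      dirConst p * errSize p τ * (1 + ‖ζ‖) := by
  have hcentred := abs_lineIntegral_add_le hp0 hp hδ hδp hτ hτ2 hz hne hint
  set I := lineIntegral (2 * p) (secondDiff (testFn p (2 * p - δ) τ) (pt z 1)) ζ
  set k := π / sin (π * p) with hk
  have hk0 : 0 < k := div_pos pi_pos (sin_pi_mul_pos hp0 hp)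
  have hC := lineConst_pos hp0 hp
  have hE := errSize_pos (p := p) hτ hτ2
  have hζ := norm_nonneg ζ
  have hnorm : |‖ζ - z‖ - ‖ζ‖| ≤ τ :=
    (abs_norm_sub_norm_le _ _).trans (by rw [sub_sub_cancel_left, norm_neg]; exact hz.le)
  have hpow : 1 + ‖ζ - z‖ ^ p ≤ 3 * (1 + ‖ζ‖) := by
    have : ‖ζ - z‖ ^ p ≤ (1 + ‖ζ‖) ^ p :=
      rpow_le_rpow (norm_nonneg _) (by linarith [(abs_le.1 hnorm).2]) hp0.le
    have := this.trans (rpow_le_rpow_of_exponent_le (by linarith) hp.le)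
    rw [rpow_one] at this
    linarith
  have hshift : |‖ζ - z‖ ^ (2 * p) - ‖ζ‖ ^ (2 * p)| ≤ 2 * errSize p τ * (1 + ‖ζ‖) := by
    refine (abs_rpow_sub_rpow_le_of_abs_sub_le (by positivity) (by linarith) (norm_nonneg _) hζ
      (by linarith) hnorm).trans ?_
    gcongr
    exact add_rpow_le_errSize hτ hτ2
  calc |I + k * ‖ζ‖ ^ (2 * p) - bumpMain p δ τ z ζ|
      = |(I + k * ‖ζ - z‖ ^ (2 * p) - bumpMain p δ τ z ζ) -
          k * (‖ζ - z‖ ^ (2 * p) - ‖ζ‖ ^ (2 * p))| := by congr 1; ring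
    _ ≤ 2 * lineConst p * errSize p τ * (1 + ‖ζ - z‖ ^ p) +
          k * |‖ζ - z‖ ^ (2 * p) - ‖ζ‖ ^ (2 * p)| := by
        refine (abs_sub _ _).trans (add_le_add hcentred ?_)
        rw [abs_mul, abs_of_pos hk0]
    _ ≤ 2 * lineConst p * errSize p τ * (3 * (1 + ‖ζ‖)) +
          k * (2 * errSize p τ * (1 + ‖ζ‖)) := by gcongr
    _ = dirConst p * errSize p τ * (1 + ‖ζ‖) := by
        rw [dirConst, ← hk]
        ring

end DirectionalBounds

section BumpMass

variable {E : Type*} [NormedAddCommGroup E] [NormedSpace ℝ E] {p τ ρ : ℝ}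

lemma bump_smul (hτ : 0 ≤ τ) (w : E) : bump p τ (τ • w) = τ ^ (2 * p) * bump p 1 w := by
  rw [bump, bump, norm_smul, norm_of_nonneg hτ, rpow_mul hτ, rpow_two,
    ← mul_rpow (sq_nonneg τ) (le_max_right _ _), mul_max_of_nonneg _ _ (sq_nonneg τ)]
  congr 2 <;> ring

variable [FiniteDimensional ℝ E] [MeasurableSpace E] [BorelSpace E] {μ : Measure E}
  [μ.IsAddHaarMeasure]

lemma integrable_bump (hp : 0 < p) (hτ : 0 ≤ τ) : Integrable (bump p τ : E → ℝ) μ :=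
  (continuous_bump hp.le).integrable_of_hasCompactSupport <|
    HasCompactSupport.intro (isCompact_closedBall 0 τ) fun w hw =>
      bump_eq_zero hp.ne' hτ (by simpa using (not_le.1 (mem_closedBall.not.1 hw)).le)

lemma integral_bump (hτ : 0 < τ) :
    ∫ w, bump p τ w ∂μ = τ ^ ((Module.finrank ℝ E : ℝ) + 2 * p) * ∫ w, bump p 1 w ∂μ := by
  have hscale := Measure.integral_comp_smul μ (bump p τ) τ
  simp only [bump_smul hτ.le, integral_const_mul, smul_eq_mul] at hscale
  rw [abs_of_pos (by positivity)] at hscale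
  rw [rpow_add hτ, rpow_natCast, mul_assoc, hscale]
  field_simp

lemma integrable_bump_dilate (hp : 0 < p) (hτ : 0 ≤ τ) (hρ : ρ ≠ 0) (z : E) :
    Integrable (fun ζ => bump p τ (z + ρ⁻¹ • (ζ - z))) μ :=
  (((integrable_bump hp hτ).comp_add_left z).comp_smul (inv_ne_zero hρ)).comp_sub_right z

lemma integral_bump_dilate (hρ : 0 ≤ ρ) (z : E) :
    ∫ ζ, bump p τ (z + ρ⁻¹ • (ζ - z)) ∂μ = ρ ^ Module.finrank ℝ E * ∫ w, bump p τ w ∂μ := by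
  rw [integral_sub_right_eq_self (fun ζ => bump p τ (z + ρ⁻¹ • ζ)) z,
    Measure.integral_comp_inv_smul μ (fun ζ => bump p τ (z + ζ)) ρ,
    integral_add_left_eq_self, abs_of_nonneg (by positivity), smul_eq_mul]

end BumpMass

section BumpMain

variable {n : ℕ} {p τ δ ρ : ℝ} {z : Ed n}

lemma integrable_bump_dilate_mul_lineWeight (hp : 0 < p) (hτ : 0 ≤ τ) (hρ : ρ ≠ 0) (z : Ed n) :
    Integrable (fun ζ : Ed n => bump p τ (z + ρ⁻¹ • (ζ - z)) * lineWeight (2 * p) ζ) := by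
  refine (integrable_bump_dilate hp hτ hρ z).mono'
    (((continuous_bump hp.le).comp (by fun_prop)).mul continuous_lineWeight).aestronglyMeasurable
    (Eventually.of_forall fun ζ => ?_)
  rw [norm_of_nonneg (mul_nonneg (bump_nonneg _) (lineWeight_pos ζ).le)]
  exact mul_le_of_le_one_right (bump_nonneg _) (lineWeight_le_one (by positivity) ζ)

lemma integral_bump_dilate_mul_lineWeight_le (hp : 0 < p) (hτ : 0 ≤ τ) (hρ : 0 < ρ) (z : Ed n) :
    ∫ ζ : Ed n, bump p τ (z + ρ⁻¹ • (ζ - z)) * lineWeight (2 * p) ζ ≤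
      ρ ^ n * ∫ w : Ed n, bump p τ w := by
  have hmass := integral_bump_dilate (μ := (volume : Measure (Ed n))) (p := p) (τ := τ) hρ.le z
  rw [finrank_euclideanSpace_fin] at hmass
  rw [← hmass]
  exact integral_mono (integrable_bump_dilate_mul_lineWeight hp hτ hρ.ne' z)
    (integrable_bump_dilate hp hτ hρ.ne' z)
    fun ζ => mul_le_of_le_one_right (bump_nonneg _) (lineWeight_le_one (by positivity) ζ)

lemma norm_le_three_mul_of_norm_dilate_lt (hρ1 : 1 ≤ ρ) (hρ2 : ρ ≤ 2) {ζ : Ed n} (hz : ‖z‖ ≤ τ)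
    (hζ : ‖z + ρ⁻¹ • (ζ - z)‖ ≤ τ) : ‖ζ‖ ≤ 3 * τ := by
  have hρ : ρ ≠ 0 := by positivity
  calc ‖ζ‖ = ‖ρ • (z + ρ⁻¹ • (ζ - z)) - (ρ - 1) • z‖ := by
        rw [smul_add, smul_smul, mul_inv_cancel₀ hρ]
        congr 1
        module
    _ ≤ ρ * ‖z + ρ⁻¹ • (ζ - z)‖ + (ρ - 1) * ‖z‖ := by
        refine (norm_sub_le _ _).trans_eq ?_
        rw [norm_smul, norm_smul, norm_of_nonneg (by linarith), norm_of_nonneg (by linarith)]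
    _ ≤ 2 * τ + 1 * τ := by gcongr; linarith
    _ = 3 * τ := by ring

/-- A lower bound for `lineWeight (2 * p)` on the ball of radius `3 * τ`. -/
noncomputable def weightLower (n : ℕ) (p τ : ℝ) : ℝ :=
  1 - ((n : ℝ) + 1 + 2 * p) / 2 * (3 * τ) ^ 2

lemma weightLower_le_lineWeight (hp : 0 ≤ p) {ζ : Ed n} (hζ : ‖ζ‖ ≤ 3 * τ) :
    weightLower n p τ ≤ lineWeight (2 * p) ζ := by
  refine le_trans ?_ (one_sub_le_lineWeight (by positivity) ζ)
  unfold weightLower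
  gcongr

lemma le_integral_bump_dilate_mul_lineWeight (hp : 0 < p) (hρ1 : 1 ≤ ρ) (hρ2 : ρ ≤ 2)
    (hz : ‖z‖ ≤ τ) :
    weightLower n p τ * (ρ ^ n * ∫ w : Ed n, bump p τ w) ≤
      ∫ ζ : Ed n, bump p τ (z + ρ⁻¹ • (ζ - z)) * lineWeight (2 * p) ζ := by
  have hτ : 0 ≤ τ := (norm_nonneg z).trans hz
  have hρ : 0 < ρ := by linarith
  have hmass := integral_bump_dilate (μ := (volume : Measure (Ed n))) (p := p) (τ := τ) hρ.le z
  rw [finrank_euclideanSpace_fin] at hmass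
  rw [← hmass, ← integral_const_mul]
  refine integral_mono ((integrable_bump_dilate hp hτ hρ.ne' z).const_mul _)
    (integrable_bump_dilate_mul_lineWeight hp hτ hρ.ne' z) fun ζ => ?_
  rcases le_or_gt τ ‖z + ρ⁻¹ • (ζ - z)‖ with h | h
  · simp only [bump_eq_zero hp.ne' hτ h, mul_zero, zero_mul, le_refl]
  · rw [mul_comm]
    exact mul_le_mul_of_nonneg_left (weightLower_le_lineWeight hp.le
      (norm_le_three_mul_of_norm_dilate_lt hρ1 hρ2 hz h.le)) (bump_nonneg _)

lemma intervalIntegrable_sub_one_rpow {c : ℝ} (hc : -1 < c) :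
    IntervalIntegrable (fun ρ : ℝ => (ρ - 1) ^ c) volume 1 2 := by
  have hshift := (intervalIntegral.intervalIntegrable_rpow' (a := 0) (b := 1) hc).comp_sub_right 1
  norm_num at hshift
  exact hshift

lemma integral_sub_one_rpow {c : ℝ} (hc : -1 < c) :
    ∫ ρ in (1 : ℝ)..2, (ρ - 1) ^ c = 1 / (c + 1) := by
  rw [intervalIntegral.integral_comp_sub_right (fun ρ => ρ ^ c), integral_rpow (Or.inl hc),
    sub_self, zero_rpow (by linarith), show (2 : ℝ) - 1 = 1 by norm_num, one_rpow, sub_zero]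

lemma bumpMain_eq (ζ : Ed n) : bumpMain p δ τ z ζ = ∫ ρ in Ioc (1 : ℝ) 2,
    (ρ - 1) ^ (δ - 1) * ρ ^ (2 * p - δ) * bump p τ (z + ρ⁻¹ • (ζ - z)) := by
  rw [bumpMain, lineMain, intervalIntegral.integral_of_le one_le_two]

lemma norm_bumpMain_density_le (hp0 : 0 ≤ p) (hp : p ≤ 1) (hδ : 0 ≤ δ)
    (hτ : 0 ≤ τ) (hρ : ρ ∈ Ioc (1 : ℝ) 2) (ζ : Ed n) :
    ‖(ρ - 1) ^ (δ - 1) * ρ ^ (2 * p - δ) * bump p τ (z + ρ⁻¹ • (ζ - z)) * lineWeight (2 * p) ζ‖ ≤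
      4 * τ ^ (2 * p) * (ρ - 1) ^ (δ - 1) * lineWeight (2 * p) ζ := by
  have hρ0 : 0 < ρ := by linarith [hρ.1]
  have hsing : 0 ≤ (ρ - 1) ^ (δ - 1) := rpow_nonneg (by linarith [hρ.1]) _
  have hw := (lineWeight_pos (α := 2 * p) ζ).le
  have hbump := bump_nonneg (p := p) (τ := τ) (z + ρ⁻¹ • (ζ - z))
  have hpow : ρ ^ (2 * p - δ) ≤ 4 := by
    have hsq := rpow_le_sq hρ.1.le (show 2 * p - δ ≤ 2 by linarith)
    nlinarith [hρ.2]
  rw [norm_of_nonneg (by positivity)]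
  calc _ ≤ (ρ - 1) ^ (δ - 1) * 4 * τ ^ (2 * p) * lineWeight (2 * p) ζ := by
        gcongr
        exact bump_le hp0 hτ _
    _ = _ := by ring

lemma integrable_bumpMain_density (hp0 : 0 < p) (hp : p ≤ 1) (hδ : 0 < δ)
    (hτ : 0 ≤ τ) (z : Ed n) :
    Integrable (fun q : ℝ × Ed n => (q.1 - 1) ^ (δ - 1) * q.1 ^ (2 * p - δ) *
      bump p τ (z + q.1⁻¹ • (q.2 - z)) * lineWeight (2 * p) q.2)
      ((volume.restrict (Ioc (1 : ℝ) 2)).prod volume) := by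
  have hsing : IntegrableOn (fun ρ : ℝ => (ρ - 1) ^ (δ - 1)) (Ioc 1 2) :=
    (intervalIntegrable_iff_integrableOn_Ioc_of_le one_le_two).1
      (intervalIntegrable_sub_one_rpow (by linarith))
  have hbound := (hsing.const_mul (4 * τ ^ (2 * p))).mul_prod
    (integrable_lineWeight (n := n) (α := 2 * p) (by positivity))
  have hbump : Measurable (bump p τ : Ed n → ℝ) := (continuous_bump hp0.le).measurable
  have hweight : Measurable (lineWeight (2 * p) : Ed n → ℝ) := continuous_lineWeight.measurable
  refine hbound.mono' (Measurable.aestronglyMeasurable (by fun_prop)) ?_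
  filter_upwards [Measure.quasiMeasurePreserving_fst.ae (ae_restrict_mem measurableSet_Ioc)]
    with q hq
  exact norm_bumpMain_density_le hp0.le hp hδ.le hτ hq q.2

lemma integrable_bumpMain_mul_lineWeight (hp0 : 0 < p) (hp : p ≤ 1) (hδ : 0 < δ)
    (hτ : 0 ≤ τ) (z : Ed n) :
    Integrable (fun ζ => bumpMain p δ τ z ζ * lineWeight (2 * p) ζ) := by
  refine (integrable_bumpMain_density hp0 hp hδ hτ z).integral_prod_right.congr
    (Eventually.of_forall fun ζ => ?_)
  simp only [integral_mul_const, bumpMain_eq]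

lemma intervalIntegrable_bumpMain_slice (hp0 : 0 < p) (hp : p ≤ 1) (hδ : 0 < δ)
    (hτ : 0 ≤ τ) (z : Ed n) :
    IntervalIntegrable (fun ρ : ℝ => (ρ - 1) ^ (δ - 1) * ρ ^ (2 * p - δ) *
      ∫ ζ : Ed n, bump p τ (z + ρ⁻¹ • (ζ - z)) * lineWeight (2 * p) ζ) volume 1 2 := by
  rw [intervalIntegrable_iff_integrableOn_Ioc_of_le one_le_two]
  refine (integrable_bumpMain_density hp0 hp hδ hτ z).integral_prod_left.congr
    (Eventually.of_forall fun ρ => ?_)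
  simp only [mul_assoc, integral_const_mul]

lemma integral_bumpMain_mul_lineWeight (hp0 : 0 < p) (hp : p ≤ 1) (hδ : 0 < δ)
    (hτ : 0 ≤ τ) (z : Ed n) :
    ∫ ζ, bumpMain p δ τ z ζ * lineWeight (2 * p) ζ =
      ∫ ρ in (1 : ℝ)..2, (ρ - 1) ^ (δ - 1) * ρ ^ (2 * p - δ) *
        ∫ ζ : Ed n, bump p τ (z + ρ⁻¹ • (ζ - z)) * lineWeight (2 * p) ζ := by
  have hswap := integral_integral_swap (f := fun (ρ : ℝ) (ζ : Ed n) => (ρ - 1) ^ (δ - 1) *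
    ρ ^ (2 * p - δ) * bump p τ (z + ρ⁻¹ • (ζ - z)) * lineWeight (2 * p) ζ)
    (integrable_bumpMain_density hp0 hp hδ hτ z)
  rw [intervalIntegral.integral_of_le one_le_two]
  simp only [bumpMain_eq, ← integral_mul_const]
  rw [← hswap]
  simp only [mul_assoc, integral_const_mul]

lemma le_integral_bumpMain_mul_lineWeight (hp0 : 0 < p) (hp : p ≤ 1) (hδ : 0 < δ)
    (hδp : δ ≤ 2 * p) (hz : ‖z‖ ≤ τ) (hsmall : 0 ≤ weightLower n p τ) :
    weightLower n p τ * (∫ w : Ed n, bump p τ w) / δ ≤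
      ∫ ζ, bumpMain p δ τ z ζ * lineWeight (2 * p) ζ := by
  have hτ : 0 ≤ τ := (norm_nonneg z).trans hz
  set D := ∫ w : Ed n, bump p τ w
  have hD : 0 ≤ D := integral_nonneg fun w => bump_nonneg w
  have hδ1 : -1 < δ - 1 := by linarith
  rw [integral_bumpMain_mul_lineWeight hp0 hp hδ hτ, div_eq_mul_one_div,
    ← sub_add_cancel δ 1, ← integral_sub_one_rpow hδ1, sub_add_cancel,
    ← intervalIntegral.integral_const_mul]
  refine intervalIntegral.integral_mono_on one_le_two
    ((intervalIntegrable_sub_one_rpow hδ1).const_mul _)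
    (intervalIntegrable_bumpMain_slice hp0 hp hδ hτ z) fun ρ hρ => ?_
  have hsing : 0 ≤ (ρ - 1) ^ (δ - 1) := rpow_nonneg (by linarith [hρ.1]) _
  have hpow : 1 ≤ ρ ^ (2 * p - δ) := one_le_rpow hρ.1 (by linarith)
  have hdilate : D ≤ ρ ^ n * D := le_mul_of_one_le_left hD (one_le_pow₀ hρ.1)
  calc weightLower n p τ * D * (ρ - 1) ^ (δ - 1)
      = (ρ - 1) ^ (δ - 1) * 1 * (weightLower n p τ * D) := by ring
    _ ≤ (ρ - 1) ^ (δ - 1) * ρ ^ (2 * p - δ) * (weightLower n p τ * (ρ ^ n * D)) := by gcongr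
    _ ≤ _ := by
        gcongr
        exact le_integral_bump_dilate_mul_lineWeight hp0 hρ.1 hρ.2 hz

lemma one_add_pow_le {x : ℝ} (hx : 0 ≤ x) (hx1 : x ≤ 1) (N : ℕ) : (1 + x) ^ N ≤ 1 + 2 ^ N * x := by
  have hconv := (convexOn_pow N).2 (x := (1 : ℝ)) (y := 2) (by simp) (by simp) (sub_nonneg.2 hx1) hx
    (sub_add_cancel 1 x)
  simp only [smul_eq_mul, one_pow, mul_one] at hconv
  rw [show 1 - x + x * 2 = 1 + x by ring] at hconv
  linarith

lemma sub_one_rpow_mul_pow_le (hρ : ρ ∈ Ioo (1 : ℝ) 2) (N : ℕ) :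
    (ρ - 1) ^ (δ - 1) * ρ ^ N ≤ (ρ - 1) ^ (δ - 1) + 2 ^ N * (ρ - 1) ^ δ := by
  have hρ0 : 0 < ρ - 1 := by linarith [hρ.1]
  have hpow := one_add_pow_le hρ0.le (by linarith [hρ.2]) N
  rw [add_sub_cancel] at hpow
  calc (ρ - 1) ^ (δ - 1) * ρ ^ N ≤ (ρ - 1) ^ (δ - 1) * (1 + 2 ^ N * (ρ - 1)) := by gcongr
    _ = (ρ - 1) ^ (δ - 1) + 2 ^ N * ((ρ - 1) ^ (δ - 1) * (ρ - 1)) := by ring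
    _ = _ := by rw [← rpow_add_one hρ0.ne', sub_add_cancel]

lemma integral_bumpMain_mul_lineWeight_le (hp0 : 0 < p) (hp : p ≤ 1) (hδ : 0 < δ) (hτ : 0 ≤ τ)
    (z : Ed n) :
    ∫ ζ, bumpMain p δ τ z ζ * lineWeight (2 * p) ζ ≤
      (∫ w : Ed n, bump p τ w) * (1 / δ + 2 ^ (n + 2)) := by
  set D := ∫ w : Ed n, bump p τ w
  have hD : 0 ≤ D := integral_nonneg fun w => bump_nonneg w
  have hint := intervalIntegrable_sub_one_rpow (c := δ - 1) (by linarith)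
  have hint' := intervalIntegrable_sub_one_rpow (c := δ) (by linarith)
  calc ∫ ζ, bumpMain p δ τ z ζ * lineWeight (2 * p) ζ
      ≤ ∫ ρ in (1 : ℝ)..2, D * ((ρ - 1) ^ (δ - 1) + 2 ^ (n + 2) * (ρ - 1) ^ δ) := by
        rw [integral_bumpMain_mul_lineWeight hp0 hp hδ hτ]
        refine intervalIntegral.integral_mono_on_of_le_Ioo one_le_two
          (intervalIntegrable_bumpMain_slice hp0 hp hδ hτ z)
          ((hint.add (hint'.const_mul _)).const_mul D) fun ρ hρ => ?_
        have hρ0 : 0 < ρ := by linarith [hρ.1]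
        have hsing : 0 ≤ (ρ - 1) ^ (δ - 1) := rpow_nonneg (by linarith [hρ.1]) _
        have hmass := integral_bump_dilate_mul_lineWeight_le hp0 hτ hρ0 z
        calc _ ≤ (ρ - 1) ^ (δ - 1) * ρ ^ 2 * (ρ ^ n * D) := by
              refine mul_le_mul (mul_le_mul_of_nonneg_left
                (rpow_le_sq hρ.1.le (by linarith)) hsing) hmass ?_ (by positivity)
              exact integral_nonneg fun ζ => mul_nonneg (bump_nonneg _) (lineWeight_pos ζ).le
          _ = D * ((ρ - 1) ^ (δ - 1) * ρ ^ (n + 2)) := by ring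
          _ ≤ _ := mul_le_mul_of_nonneg_left (sub_one_rpow_mul_pow_le hρ _) hD
    _ = D * (1 / δ + 2 ^ (n + 2) * (1 / (δ + 1))) := by
        rw [intervalIntegral.integral_const_mul,
          intervalIntegral.integral_add hint (hint'.const_mul _),
          intervalIntegral.integral_const_mul, integral_sub_one_rpow (by linarith),
          integral_sub_one_rpow (by linarith), sub_add_cancel]
    _ ≤ D * (1 / δ + 2 ^ (n + 2)) := by
        gcongr
        refine mul_le_of_le_one_right (by positivity) ?_
        rw [div_le_one (by linarith)]
        linarith

end BumpMain

section TestOperator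

variable {n : ℕ} {p τ δ : ℝ} {z : Ed n}

/-- The mass of the bump of radius one. -/
noncomputable def massConst (n : ℕ) (p : ℝ) : ℝ := ∫ w : Ed n, bump p 1 w

/-- Minus one half of the operator applied to the test functions, in the limit of narrow cones and
away from the singular part. -/
noncomputable def diffConst (n : ℕ) (p : ℝ) : ℝ :=
  π / sin (π * p) * ∫ ζ : Ed n, ‖ζ‖ ^ (2 * p) * lineWeight (2 * p) ζ

/-- The symmetrized fractional Laplacian, without normalizing constant, of the test function at the
point of height one above `z`. -/
noncomputable def testOp (p β τ : ℝ) (z : Ed n) : ℝ :=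
  secondDiffIntegral (2 * p) (testFn p β τ) (pt z 1)

/-- A constant depending only on `n` and `p` for the error terms in the expansion of `testOp`. -/
noncomputable def opConst (n : ℕ) (p : ℝ) : ℝ :=
  dirConst p * (∫ ζ : Ed n, (1 + ‖ζ‖) * lineWeight (2 * p) ζ) + massConst n p * 2 ^ (n + 2) +
    ((n : ℝ) + 1 + 2 * p) / 2 * 9

lemma massConst_nonneg : 0 ≤ massConst n p := integral_nonneg fun w => bump_nonneg w

lemma integral_one_add_norm_mul_lineWeight_nonneg :
    0 ≤ ∫ ζ : Ed n, (1 + ‖ζ‖) * lineWeight (2 * p) ζ :=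
  integral_nonneg fun ζ => mul_nonneg (by positivity) (lineWeight_pos ζ).le

lemma integral_bump_eq_massConst_mul (hτ : 0 < τ) :
    ∫ w : Ed n, bump p τ w = massConst n p * τ ^ ((n : ℝ) + 2 * p) := by
  rw [integral_bump hτ, finrank_euclideanSpace_fin, mul_comm, massConst]

lemma opConst_pos (hp0 : 0 < p) (hp : p < 1) : 0 < opConst n p := by
  have := dirConst_pos hp0 hp
  have := integral_one_add_norm_mul_lineWeight_nonneg (n := n) (p := p)
  have := massConst_nonneg (n := n) (p := p)
  unfold opConst
  positivity

lemma abs_testOp_half_add_diffConst_sub_le [NeZero n] (hp0 : 0 < p) (hp : p < 1) (hδ : 0 < δ)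
    (hδp : δ ≤ 2 * p) (hτ : 0 < τ) (hτ2 : τ ≤ 1 / 2) (hz : ‖z‖ < τ) :
    |testOp p (2 * p - δ) τ z / 2 + diffConst n p -
        ∫ ζ, bumpMain p δ τ z ζ * lineWeight (2 * p) ζ| ≤
      dirConst p * errSize p τ * ∫ ζ : Ed n, (1 + ‖ζ‖) * lineWeight (2 * p) ζ := by
  have hmeas := measurable_testFn (n := n) (β := 2 * p - δ) (τ := τ) hp0.le
  have hint := integrable_secondDiff (α := 2 * p) (by linarith) (by linarith) (by linarith) hmeas
    (isBigO_testFn hp0.le hτ.le (by linarith)) (contDiffAt_testFn hz)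
  have hsymm := secondDiff_neg (testFn p (2 * p - δ) τ) (pt z 1)
  have hline := integrable_lineIntegral_mul_lineWeight (measurable_secondDiff hmeas) hsymm hint
  have hpow := (integrable_norm_rpow_mul_lineWeight (n := n) (α := 2 * p)
    (by positivity)).const_mul (π / sin (π * p))
  have hmain := integrable_bumpMain_mul_lineWeight hp0 hp.le hδ hτ.le z
  rw [testOp, secondDiffIntegral, integral_kernel_eq_two_mul_integral_lineIntegral
    (measurable_secondDiff hmeas) hsymm hint, mul_div_cancel_left₀ _ two_ne_zero, diffConst,
    ← integral_const_mul, ← integral_const_mul, ← integral_add hline hpow,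
    ← integral_sub (by exact hline.add hpow) hmain, ← norm_eq_abs]
  refine norm_integral_le_of_norm_le
    ((integrable_one_add_norm_mul_lineWeight (by positivity)).const_mul _) ?_
  filter_upwards [ae_integrableOn_line (measurable_secondDiff hmeas) hsymm hint,
    compl_mem_ae_iff.2 (measure_singleton z)] with ζ hζ hne
  have hweight := lineWeight_pos (α := 2 * p) ζ
  rw [← mul_assoc, ← mul_assoc, ← add_mul, ← sub_mul, norm_mul, norm_of_nonneg hweight.le,
    norm_eq_abs]
  gcongr
  exact abs_lineIntegral_add_norm_le hp0 hp hδ hδp hτ hτ2 hz hne hζ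

lemma rpow_natCast_add_le_errSize (hτ : 0 < τ) (hτ2 : τ ≤ 1 / 2) :
    τ ^ ((n : ℝ) + 2 * p) ≤ errSize p τ :=
  calc τ ^ ((n : ℝ) + 2 * p) ≤ τ ^ (2 * p) :=
        rpow_le_rpow_of_exponent_ge hτ (by linarith) (by simp)
    _ ≤ errSize p τ := by linarith [add_rpow_le_errSize (p := p) hτ hτ2]

lemma testOp_le [NeZero n] (hp0 : 0 < p) (hp : p < 1) (hδ : 0 < δ) (hδp : δ ≤ 2 * p)
    (hτ : 0 < τ) (hτ2 : τ ≤ 1 / 2) (hz : ‖z‖ < τ) :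
    testOp p (2 * p - δ) τ z ≤ 2 * (-diffConst n p + opConst n p * errSize p τ +
      massConst n p * τ ^ ((n : ℝ) + 2 * p) / δ) := by
  have happrox := abs_testOp_half_add_diffConst_sub_le hp0 hp hδ hδp hτ hτ2 hz
  have hmain := integral_bumpMain_mul_lineWeight_le hp0 hp.le hδ hτ.le z
  have hmass : massConst n p * τ ^ ((n : ℝ) + 2 * p) ≤ massConst n p * errSize p τ :=
    mul_le_mul_of_nonneg_left (rpow_natCast_add_le_errSize hτ hτ2) massConst_nonneg
  have := errSize_pos (p := p) hτ hτ2
  have : 0 ≤ ((n : ℝ) + 1 + 2 * p) / 2 * 9 * errSize p τ := by positivity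
  have : massConst n p * τ ^ ((n : ℝ) + 2 * p) * 2 ^ (n + 2) ≤
    massConst n p * errSize p τ * 2 ^ (n + 2) := by gcongr
  rw [integral_bump_eq_massConst_mul hτ, mul_add, mul_one_div] at hmain
  rw [opConst]
  linarith [(abs_le.1 happrox).2]

lemma one_sub_opConst_mul_le_weightLower (hp0 : 0 < p) (hp : p < 1) (hτ : 0 ≤ τ) (hτ1 : τ ≤ 1) :
    1 - opConst n p * τ ≤ weightLower n p τ := by
  have := dirConst_pos hp0 hp
  have := integral_one_add_norm_mul_lineWeight_nonneg (n := n) (p := p)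
  have := massConst_nonneg (n := n) (p := p)
  have hsq : ((n : ℝ) + 1 + 2 * p) / 2 * 9 * τ ^ 2 ≤ opConst n p * τ := by
    unfold opConst
    gcongr
    · exact le_add_of_nonneg_left (by positivity)
    · exact pow_le_of_le_one hτ hτ1 two_ne_zero
  rw [weightLower]
  linarith

lemma le_testOp [NeZero n] (hp0 : 0 < p) (hp : p < 1) (hδ : 0 < δ) (hδp : δ ≤ 2 * p)
    (hτ : 0 < τ) (hτ2 : τ ≤ 1 / 2) (hsmall : opConst n p * τ ≤ 1) (hz : ‖z‖ < τ) :
    2 * (-diffConst n p - opConst n p * errSize p τ +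
      (1 - opConst n p * τ) * (massConst n p * τ ^ ((n : ℝ) + 2 * p)) / δ) ≤
        testOp p (2 * p - δ) τ z := by
  have happrox := abs_testOp_half_add_diffConst_sub_le hp0 hp hδ hδp hτ hτ2 hz
  have hweight := one_sub_opConst_mul_le_weightLower (n := n) hp0 hp hτ.le (by linarith)
  have hmain := le_integral_bumpMain_mul_lineWeight hp0 hp.le hδ hδp hz.le (by linarith)
  have hmass0 := massConst_nonneg (n := n) (p := p)
  have := errSize_pos (p := p) hτ hτ2
  have : 0 ≤ (massConst n p * 2 ^ (n + 2) + ((n : ℝ) + 1 + 2 * p) / 2 * 9) * errSize p τ := by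
    positivity
  have : (1 - opConst n p * τ) * (massConst n p * τ ^ ((n : ℝ) + 2 * p)) / δ ≤
    weightLower n p τ * (massConst n p * τ ^ ((n : ℝ) + 2 * p)) / δ := by gcongr
  rw [integral_bump_eq_massConst_mul hτ] at hmain
  nth_rewrite 1 [opConst]
  linarith [(abs_le.1 happrox).1]

end TestOperator

section ConeHarmonic

variable {n : ℕ} {p τ β Θ : ℝ} {M : Ed (n + 1) → ℝ}

lemma pt_mem_cone_iff (hΘ0 : 0 < Θ) (hΘ : Θ < π / 2) {w : Ed n} {s : ℝ} :
    pt w s ∈ cone (n + 1) Θ ↔ 0 < s ∧ ‖w‖ < s * tan Θ := by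
  have hcos : 0 < cos Θ := cos_pos_of_mem_Ioo ⟨by linarith, hΘ⟩
  have hsin : 0 < sin Θ := sin_pos_of_pos_of_lt_pi hΘ0 (by linarith)
  have hpos : ‖pt w s‖ * cos Θ < s → 0 < s := fun h => h.trans_le' (by positivity)
  have hsq : (‖pt w s‖ * cos Θ) ^ 2 - s ^ 2 = (‖w‖ * cos Θ) ^ 2 - (s * sin Θ) ^ 2 := by
    rw [mul_pow, norm_pt_sq, mul_pow, mul_pow, sin_sq]
    ring
  rw [cone, mem_ofPred_eq, lastCoord_eq, pt_last, tan_eq_sin_div_cos, ← mul_div_assoc,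
    lt_div_iff₀ hcos, ← and_iff_right_of_imp hpos]
  refine and_congr_right fun hs => ?_
  rw [← sq_lt_sq₀ (a := ‖w‖ * cos Θ) (by positivity) (by positivity),
    ← sq_lt_sq₀ (a := ‖pt w s‖ * cos Θ) (by positivity) hs.le, ← sub_neg, hsq, sub_neg]

lemma pt_one_ne_zero (w : Ed n) : pt w 1 ≠ 0 := fun h => by
  simpa using congrArg (fun x => x (Fin.last n)) h

lemma zero_notMem_cone : (0 : Ed (n + 1)) ∉ cone (n + 1) Θ := by simp [cone, lastCoord_eq]

lemma apply_pt_of_homogeneous (hM : ∀ r : ℝ, 0 < r → ∀ x, x ≠ 0 → M (r • x) = r ^ β * M x)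
    {s : ℝ} (hs : 0 < s) (w : Ed n) : M (pt w s) = s ^ β * M (pt (s⁻¹ • w) 1) := by
  rw [← hM s hs _ (pt_one_ne_zero _), smul_pt, smul_inv_smul₀ hs.ne', mul_one]

lemma isBigO_of_homogeneous {E : Type*} [NormedAddCommGroup E] [NormedSpace ℝ E] [ProperSpace E]
    {f : E → ℝ} (hf : Continuous f) (hf0 : f 0 = 0)
    (hhom : ∀ r : ℝ, 0 < r → ∀ x, x ≠ 0 → f (r • x) = r ^ β * f x) :
    f =O[⊤] fun x => 1 + ‖x‖ ^ β := by
  obtain ⟨C, hC⟩ := (isCompact_sphere (0 : E) 1).exists_bound_of_continuousOn hf.continuousOn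
  refine Asymptotics.isBigO_top.2 ⟨|C|, fun x => ?_⟩
  rcases eq_or_ne x 0 with rfl | hx
  · rw [hf0, norm_zero]
    positivity
  have hx0 : 0 < ‖x‖ := norm_pos_iff.2 hx
  have hunit : ‖‖x‖⁻¹ • x‖ = 1 := by rw [norm_smul, norm_inv, norm_norm, inv_mul_cancel₀ hx0.ne']
  have hpow := rpow_nonneg hx0.le β
  calc ‖f x‖ = ‖x‖ ^ β * ‖f (‖x‖⁻¹ • x)‖ := by
        rw [← norm_of_nonneg hpow, ← norm_mul, ← hhom _ hx0 _ (smul_ne_zero (by simpa) hx),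
          smul_inv_smul₀ hx0.ne']
    _ ≤ ‖x‖ ^ β * |C| := by
        gcongr
        exact (hC _ (by simpa using hunit)).trans (le_abs_self C)
    _ ≤ |C| * ‖1 + ‖x‖ ^ β‖ := by
        rw [mul_comm, norm_of_nonneg (by positivity)]
        gcongr
        linarith

lemma exists_eq_mul_forall_le_mul {X : Type*} [TopologicalSpace X] {K : Set X} {f g : X → ℝ}
    (hK : IsCompact K) (hf : ContinuousOn f K) (hg : ContinuousOn g K) (hg0 : ∀ x ∈ K, 0 < g x)
    {x₀ : X} (hx₀ : x₀ ∈ K) (hfx₀ : 0 < f x₀) :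
    ∃ z ∈ K, ∃ c > 0, f z = c * g z ∧ ∀ x ∈ K, f x ≤ c * g x := by
  obtain ⟨z, hz, hmax⟩ := hK.exists_isMaxOn ⟨x₀, hx₀⟩
    (hf.div hg fun x hx => (hg0 x hx).ne')
  exact ⟨z, hz, f z / g z, (div_pos hfx₀ (hg0 x₀ hx₀)).trans_le (hmax hx₀),
    (div_mul_cancel₀ _ (hg0 z hz).ne').symm, fun x hx => (div_le_iff₀ (hg0 x hx)).1 (hmax hx)⟩

lemma continuous_pt_one : Continuous (fun w : Ed n => pt w 1) :=
  continuous_pt.comp (continuous_id.prodMk continuous_const)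

/-- `M` is a Martin kernel at infinity of the cone of angle `Θ` for the operator of order `2 * p`:
harmonic and positive in the cone, zero outside, and homogeneous of degree `β`. -/
structure IsConeHarmonic (p β Θ : ℝ) (M : Ed (n + 1) → ℝ) : Prop where
  continuous : Continuous M
  eq_zero : ∀ x, x ∉ cone (n + 1) Θ → M x = 0
  pos : ∀ x ∈ cone (n + 1) Θ, 0 < M x
  homogeneous : ∀ r : ℝ, 0 < r → ∀ x, x ≠ 0 → M (r • x) = r ^ β * M x
  harmonic : ∀ x ∈ cone (n + 1) Θ, fracLapAt (n + 1) (2 * p) M x 0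

lemma IsConeHarmonic.nonneg (hM : IsConeHarmonic p β Θ M) (x : Ed (n + 1)) : 0 ≤ M x := by
  by_cases hx : x ∈ cone (n + 1) Θ
  · exact (hM.pos x hx).le
  · exact (hM.eq_zero x hx).ge

lemma IsConeHarmonic.isBigO (hM : IsConeHarmonic p β Θ M) : M =O[⊤] fun x => 1 + ‖x‖ ^ β :=
  isBigO_of_homogeneous hM.continuous (hM.eq_zero 0 zero_notMem_cone) hM.homogeneous

lemma IsConeHarmonic.exists_testFn_le (hM : IsConeHarmonic p β Θ M) (hp : 0 < p) (hΘ0 : 0 < Θ)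
    (hΘ : Θ < π / 2) (hτ : 0 < τ) (hτΘ : τ < tan Θ) :
    ∃ z : Ed n, ‖z‖ < τ ∧ ∃ c, testFn p β τ (pt z 1) = c * M (pt z 1) ∧
      ∀ y, testFn p β τ y ≤ c * M y := by
  have hMpos : ∀ w ∈ closedBall (0 : Ed n) τ, 0 < M (pt w 1) := fun w hw =>
    hM.pos _ ((pt_mem_cone_iff hΘ0 hΘ).2 ⟨one_pos, by linarith [mem_closedBall_zero_iff.1 hw]⟩)
  obtain ⟨z, hz, c, hc, heq, hle⟩ := exists_eq_mul_forall_le_mul (isCompact_closedBall (0 : Ed n) τ)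
    (continuous_bump (p := p) hp.le).continuousOn
    (hM.continuous.comp continuous_pt_one).continuousOn hMpos
    (mem_closedBall_self hτ.le) (bump_pos (by simpa using hτ))
  refine ⟨z, ?_, c, by rw [testFn_pt_one, heq, Function.comp_apply], fun y => ?_⟩
  · by_contra hzτ
    rw [bump_eq_zero hp.ne' hτ.le (not_lt.1 hzτ)] at heq
    exact (mul_pos hc (hMpos z hz)).ne heq
  rcases le_or_gt (y (Fin.last n)) 0 with hs | hs
  · rw [testFn_eq_zero hs]
    exact mul_nonneg hc.le (hM.nonneg y)
  rw [← pt_hor y, testFn_pt hs, apply_pt_of_homogeneous hM.homogeneous hs, mul_left_comm]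
  gcongr
  rcases le_or_gt ‖(y (Fin.last n))⁻¹ • hor y‖ τ with h | h
  · exact hle _ (by simpa using h)
  · rw [bump_eq_zero hp.ne' hτ.le h.le]
    exact mul_nonneg hc.le (hM.nonneg _)

lemma IsConeHarmonic.exists_le_mul_testFn (hM : IsConeHarmonic p β Θ M) (hp : 0 < p)
    (hΘ0 : 0 < Θ) (hΘ : Θ < π / 2) (hτΘ : tan Θ < τ) :
    ∃ z : Ed n, ‖z‖ < tan Θ ∧ ∃ c > 0, M (pt z 1) = c * testFn p β τ (pt z 1) ∧
      ∀ y, M y ≤ c * testFn p β τ y := by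
  have htan : 0 < tan Θ := tan_pos_of_pos_of_lt_pi_div_two hΘ0 hΘ
  have hbump : ∀ w ∈ closedBall (0 : Ed n) (tan Θ), 0 < bump p τ w := fun w hw =>
    bump_pos (by linarith [mem_closedBall_zero_iff.1 hw])
  have haxis : pt (0 : Ed n) 1 ∈ cone (n + 1) Θ :=
    (pt_mem_cone_iff hΘ0 hΘ).2 ⟨one_pos, by simpa using htan⟩
  obtain ⟨z, hz, c, hc, heq, hle⟩ :=
    exists_eq_mul_forall_le_mul (isCompact_closedBall (0 : Ed n) (tan Θ))
      (hM.continuous.comp continuous_pt_one).continuousOn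
      (continuous_bump (p := p) hp.le).continuousOn hbump
      (mem_closedBall_self htan.le) (hM.pos _ haxis)
  rw [Function.comp_apply] at heq
  refine ⟨z, ?_, c, hc, by rw [testFn_pt_one, heq], fun y => ?_⟩
  · have hcone : pt z 1 ∈ cone (n + 1) Θ := by
      by_contra h
      exact (mul_pos hc (hbump z hz)).ne ((hM.eq_zero _ h).symm.trans heq)
    simpa using ((pt_mem_cone_iff hΘ0 hΘ).1 hcone).2
  by_cases hy : y ∈ cone (n + 1) Θ
  · rw [← pt_hor y] at hy ⊢
    obtain ⟨hs, hw⟩ := (pt_mem_cone_iff hΘ0 hΘ).1 hy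
    rw [testFn_pt hs, apply_pt_of_homogeneous hM.homogeneous hs, mul_left_comm]
    gcongr
    refine hle _ (mem_closedBall_zero_iff.2 ?_)
    rw [norm_smul, norm_inv, norm_of_nonneg hs.le, inv_mul_le_iff₀ hs]
    exact hw.le
  · rw [hM.eq_zero y hy]
    exact mul_nonneg hc.le (testFn_nonneg y)

lemma IsConeHarmonic.exists_testOp_nonpos (hM : IsConeHarmonic p β Θ M) (hp0 : 0 < p)
    (hp : p < 1) (hβ : 0 ≤ β) (hβp : β < 2 * p) (hΘ0 : 0 < Θ) (hΘ : Θ < π / 2) (hτ : 0 < τ)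
    (hτΘ : τ < tan Θ) : ∃ z : Ed n, ‖z‖ < τ ∧ testOp p β τ z ≤ 0 := by
  obtain ⟨z, hz, c, heq, hle⟩ := hM.exists_testFn_le hp0 hΘ0 hΘ hτ hτΘ
  refine ⟨z, hz, secondDiffIntegral_nonpos_of_le hβ hβp (by linarith) (measurable_testFn hp0.le)
    (isBigO_testFn hp0.le hτ.le hβ) (contDiffAt_testFn hz) hM.continuous.measurable hM.isBigO
    (hM.harmonic _ ((pt_mem_cone_iff hΘ0 hΘ).2 ⟨one_pos, by linarith⟩)) (c := c) fun y => ?_⟩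
  rw [heq, mul_sub]
  gcongr
  exact hle y

lemma IsConeHarmonic.exists_testOp_nonneg (hM : IsConeHarmonic p β Θ M) (hp0 : 0 < p)
    (hp : p < 1) (hβ : 0 ≤ β) (hβp : β < 2 * p) (hΘ0 : 0 < Θ) (hΘ : Θ < π / 2)
    (hτΘ : tan Θ < τ) : ∃ z : Ed n, ‖z‖ < τ ∧ 0 ≤ testOp p β τ z := by
  have hτ : 0 < τ := (tan_pos_of_pos_of_lt_pi_div_two hΘ0 hΘ).trans hτΘ
  obtain ⟨z, hz, c, hc, heq, hle⟩ := hM.exists_le_mul_testFn hp0 hΘ0 hΘ hτΘ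
  have hneg : secondDiffIntegral (2 * p) (fun y => -testFn p β τ y) (pt z 1) ≤ 0 := by
    refine secondDiffIntegral_nonpos_of_le hβ hβp (by linarith) (measurable_testFn hp0.le).neg
      (isBigO_testFn hp0.le hτ.le hβ).neg_left (contDiffAt_testFn (hz.trans hτΘ)).neg
      hM.continuous.measurable hM.isBigO
      (hM.harmonic _ ((pt_mem_cone_iff hΘ0 hΘ).2 ⟨one_pos, by linarith⟩)) (c := -c⁻¹) fun y => ?_
    rw [heq, mul_sub, neg_mul, neg_mul, inv_mul_cancel_left₀ hc.ne']
    gcongr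
    exact (inv_mul_le_iff₀ hc).2 (hle y)
  rw [secondDiffIntegral_neg, neg_nonpos] at hneg
  exact ⟨z, hz.trans hτΘ, hneg⟩

end ConeHarmonic

section Constants

variable {n : ℕ} {p : ℝ}

lemma integral_norm_sq {E : Type*} [NormedAddCommGroup E] [NormedSpace ℝ E]
    [FiniteDimensional ℝ E] [Nontrivial E] [MeasurableSpace E] [BorelSpace E]
    (μ : Measure E) [μ.IsAddHaarMeasure] (g : ℝ → ℝ) :
    ∫ x, g (‖x‖ ^ 2) ∂μ = Module.finrank ℝ E * μ.real (ball 0 1) / 2 *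
      ∫ x in Ioi (0 : ℝ), x ^ ((Module.finrank ℝ E : ℝ) / 2 - 1) * g x := by
  have hd : 1 ≤ Module.finrank ℝ E := Module.finrank_pos
  have hsubst := integral_comp_rpow_Ioi_of_pos two_pos
    (g := fun x : ℝ => x ^ ((Module.finrank ℝ E : ℝ) / 2 - 1) * g x)
  have hpow : ∀ y ∈ Ioi (0 : ℝ), (2 * y ^ ((2 : ℝ) - 1)) •
      ((y ^ (2 : ℝ)) ^ ((Module.finrank ℝ E : ℝ) / 2 - 1) * g (y ^ (2 : ℝ))) =
        2 * (y ^ (Module.finrank ℝ E - 1) • g (y ^ 2)) := by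
    intro y (hy : 0 < y)
    have hexp : y ^ (Module.finrank ℝ E - 1) =
        y ^ ((2 : ℝ) - 1) * (y ^ (2 : ℝ)) ^ ((Module.finrank ℝ E : ℝ) / 2 - 1) := by
      rw [← rpow_mul hy.le, ← rpow_add hy, ← rpow_natCast, Nat.cast_sub hd]
      congr 1
      push_cast
      ring
    rw [smul_eq_mul, smul_eq_mul, hexp, rpow_two]
    ring
  rw [setIntegral_congr_fun measurableSet_Ioi hpow, integral_const_mul] at hsubst
  rw [integral_fun_norm_addHaar μ fun y => g (y ^ 2), ← hsubst, nsmul_eq_mul, smul_eq_mul]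
  ring

lemma integral_Ioi_rpow_mul_max_rpow {a : ℝ} (ha : 0 < a) (hp : 0 < p) :
    ∫ x in Ioi (0 : ℝ), x ^ (a - 1) * max (1 - x) 0 ^ p = eulerBeta a (1 + p) := by
  have hzero : ∀ x ∈ Ioi (0 : ℝ) \ Ioo 0 1, x ^ (a - 1) * max (1 - x) 0 ^ p = 0 := by
    intro x hx
    have hx1 : 1 ≤ x := not_lt.1 fun h => hx.2 ⟨hx.1, h⟩
    rw [max_eq_right (by linarith), zero_rpow hp.ne', mul_zero]
  rw [setIntegral_eq_of_subset_of_forall_sdiff_eq_zero measurableSet_Ioi Ioo_subset_Ioi_self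
    hzero, ← integral_rpow_mul_one_sub_rpow ha (by positivity)]
  refine setIntegral_congr_fun measurableSet_Ioo fun x hx => ?_
  rw [max_eq_left (sub_pos.2 hx.2).le, add_sub_cancel_left]

lemma massConst_eq_mul_eulerBeta [NeZero n] (hp : 0 < p) :
    massConst n p = n * volume.real (ball (0 : Ed n) 1) / 2 * eulerBeta ((n : ℝ) / 2) (1 + p) := by
  have hn : (0 : ℝ) < n := Nat.cast_pos.2 (NeZero.pos n)
  rw [← integral_Ioi_rpow_mul_max_rpow (by positivity) hp]
  have := integral_norm_sq (volume : Measure (Ed n)) fun x => max (1 - x) 0 ^ p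
  simpa only [massConst, bump, one_pow, finrank_euclideanSpace_fin] using this

lemma integral_norm_rpow_mul_lineWeight [NeZero n] (hp : 0 < p) :
    ∫ ζ : Ed n, ‖ζ‖ ^ (2 * p) * lineWeight (2 * p) ζ = n * volume.real (ball (0 : Ed n) 1) / 2 *
      eulerBeta (((n : ℝ) + 2 * p) / 2) (1 / 2) := by
  have hn : (0 : ℝ) < n := Nat.cast_pos.2 (NeZero.pos n)
  have hnorm := integral_norm_sq (volume : Measure (Ed n))
    fun x => x ^ p * (1 + x) ^ (-((n : ℝ) + 1 + 2 * p) / 2)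
  simp only [finrank_euclideanSpace_fin, ← rpow_natCast_mul (norm_nonneg _), Nat.cast_ofNat]
    at hnorm
  simp only [lineWeight]
  rw [hnorm, ← integral_rpow_mul_one_add_rpow (by positivity) (by positivity)]
  congr 1
  refine setIntegral_congr_fun measurableSet_Ioi fun x (hx : 0 < x) => ?_
  rw [← mul_assoc, ← rpow_add hx]
  ring_nf

lemma diffConst_pos [NeZero n] (hp0 : 0 < p) (hp : p < 1) : 0 < diffConst n p := by
  have hn : (0 : ℝ) < n := Nat.cast_pos.2 (NeZero.pos n)
  have hball : 0 < volume.real (ball (0 : Ed n) 1) :=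
    ENNReal.toReal_pos (measure_ball_pos _ _ one_pos).ne' measure_ball_lt_top.ne
  have hbeta : 0 < eulerBeta (((n : ℝ) + 2 * p) / 2) (1 / 2) :=
    eulerBeta_pos (by positivity) (by positivity)
  have hsin := sin_pi_mul_pos hp0 hp
  rw [diffConst, integral_norm_rpow_mul_lineWeight hp0]
  positivity

lemma massConst_eq [NeZero n] (hp0 : 0 < p) (hp : p < 1) :
    massConst n p = Bconst (n + 1) (2 * p) * diffConst n p := by
  have hn : (0 : ℝ) < n := Nat.cast_pos.2 (NeZero.pos n)
  have hsin := (sin_pi_mul_pos hp0 hp).ne'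
  have hGamma : Real.Gamma (((n : ℝ) + 2 * p) / 2) ≠ 0 := (Gamma_pos_of_pos (by positivity)).ne'
  have hπ : π ^ ((3 : ℝ) / 2) = π * √π := by
    rw [sqrt_eq_rpow, ← rpow_one_add' pi_pos.le (by norm_num)]
    norm_num
  have hd : ((n + 1 : ℕ) : ℝ) - 1 = n := by push_cast; ring
  rw [diffConst, massConst_eq_mul_eulerBeta hp0, integral_norm_rpow_mul_lineWeight hp0, Bconst,
    hd, hπ, show (((n + 1 : ℕ) : ℝ) + 2 * p) / 2 = ((n : ℝ) + 2 * p) / 2 + 1 / 2 by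
      push_cast; ring, show π * (2 * p) / 2 = π * p by ring, show 2 * p / 2 = p by ring]
  unfold eulerBeta
  rw [add_comm (1 + p), Real.Gamma_one_half_eq]
  generalize sin (π * p) = S at *
  field_simp

end Constants

section ErrorSize

variable {p α τ Θ : ℝ}

lemma rpow_le_four_mul_rpow (hp0 : 0 ≤ p) (hp : p ≤ 1) (hτ : 0 ≤ τ) (hΘ : 0 ≤ Θ)
    (hτΘ : τ ≤ 2 * Θ) : τ ^ (2 * p) ≤ 4 * Θ ^ (2 * p) :=
  calc τ ^ (2 * p) ≤ (2 * Θ) ^ (2 * p) := by gcongr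
    _ = 2 ^ (2 * p) * Θ ^ (2 * p) := mul_rpow two_pos.le hΘ
    _ ≤ 2 ^ (2 : ℝ) * Θ ^ (2 * p) := by
      gcongr
      · norm_num
      · linarith
    _ = 4 * Θ ^ (2 * p) := by norm_num

lemma scaleIntegral_le_of_lt (hp : 2 * p < 1) (hτ : 0 < τ) (hτ2 : τ ≤ 1 / 2) :
    scaleIntegral p τ ≤ 1 / (1 - 2 * p) := by
  have : 0 < 1 - 2 * p := by linarith
  refine (integral_rpow_le (by linarith) two_pos (two_le_inv hτ hτ2)).trans ?_
  rw [show -(2 * p - 2 + 1) = 1 - 2 * p by ring]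
  gcongr
  exact rpow_le_one_of_one_le_of_nonpos (by norm_num) (by linarith)

lemma scaleIntegral_le_of_eq (hp : 2 * p = 1) (hτ : 0 < τ) :
    scaleIntegral p τ ≤ -log (2 * τ) := by
  have hinv : ∀ ρ : ℝ, ρ ^ (2 * p - 2) = ρ⁻¹ := fun ρ => by
    rw [hp, show (1 : ℝ) - 2 = -1 by norm_num, rpow_neg_one]
  simp only [scaleIntegral, hinv]
  rw [integral_inv_of_pos two_pos (inv_pos.2 hτ), ← log_inv, mul_inv, div_eq_mul_inv, mul_comm]

lemma rpow_mul_scaleIntegral_le_of_gt (hp : 1 < 2 * p) (hτ : 0 < τ) :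
    τ ^ (2 * p) * scaleIntegral p τ ≤ τ / (2 * p - 1) := by
  have : 0 < 2 * p - 1 := by linarith
  have hcancel : τ ^ (2 * p) * τ⁻¹ ^ (2 * p - 1) = τ := by
    rw [inv_rpow hτ.le, ← rpow_neg hτ.le, ← rpow_add hτ, neg_sub, add_sub_cancel, rpow_one]
  calc τ ^ (2 * p) * scaleIntegral p τ
      ≤ τ ^ (2 * p) * (τ⁻¹ ^ (2 * p - 1) / (2 * p - 1)) := by
        rw [scaleIntegral, integral_rpow (Or.inl (by linarith)),
          show 2 * p - 2 + 1 = 2 * p - 1 by ring]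
        gcongr
        exact sub_le_self _ (by positivity)
    _ = τ / (2 * p - 1) := by rw [← mul_div_assoc, hcancel]

lemma exists_errSize_le_of_lt (hp0 : 0 < p) (hp : 2 * p < 1) :
    ∃ C > 0, ∀ Θ τ, 0 < Θ → 0 < τ → τ ≤ 1 / 2 → τ ≤ 2 * Θ → errSize p τ ≤ C * Θ ^ (2 * p) := by
  have : 0 < 1 - 2 * p := by linarith
  refine ⟨4 * (1 + (1 + 1 / (1 - 2 * p))), by positivity, fun Θ τ hΘ hτ hτ2 hτΘ => ?_⟩
  calc errSize p τ ≤ τ ^ (2 * p) + τ ^ (2 * p) * (1 + 1 / (1 - 2 * p)) := by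
        unfold errSize
        gcongr
        · exact self_le_rpow_of_le_one hτ.le (by linarith) hp.le
        · exact scaleIntegral_le_of_lt hp hτ hτ2
    _ = τ ^ (2 * p) * (1 + (1 + 1 / (1 - 2 * p))) := by ring
    _ ≤ 4 * Θ ^ (2 * p) * (1 + (1 + 1 / (1 - 2 * p))) := by
        gcongr
        exact rpow_le_four_mul_rpow hp0.le (by linarith) hτ.le hΘ.le hτΘ
    _ = 4 * (1 + (1 + 1 / (1 - 2 * p))) * Θ ^ (2 * p) := by ring

lemma one_le_neg_log (hΘ : 0 < Θ) (hΘ4 : Θ ≤ 1 / 4) : 1 ≤ -log Θ := by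
  rw [← log_inv, le_log_iff_exp_le (inv_pos.2 hΘ), le_inv_comm₀ (exp_pos 1) hΘ]
  refine hΘ4.trans ?_
  rw [le_inv_comm₀ (by norm_num) (exp_pos 1)]
  linarith [exp_one_lt_d9]

lemma errSize_le_of_eq (hp : 2 * p = 1) (hΘ : 0 < Θ) (hΘ4 : Θ ≤ 1 / 4) (hτΘ : Θ / 2 ≤ τ)
    (hτΘ' : τ ≤ 2 * Θ) : errSize p τ ≤ 6 * (Θ * -log Θ) := by
  have hlog := one_le_neg_log hΘ hΘ4
  have hτ : 0 < τ := by linarith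
  calc errSize p τ = τ + τ * (1 + scaleIntegral p τ) := by rw [errSize, hp, rpow_one]
    _ ≤ τ + τ * (1 + -log (2 * τ)) := by
        gcongr
        exact scaleIntegral_le_of_eq hp hτ
    _ ≤ τ + τ * (1 + -log Θ) := by
        gcongr
        linarith
    _ ≤ 2 * Θ + 2 * Θ * (1 + -log Θ) := by gcongr
    _ ≤ 6 * (Θ * -log Θ) := by nlinarith

lemma exists_errSize_le_of_gt (hp : 1 < 2 * p) :
    ∃ C > 0, ∀ Θ τ, 0 < τ → τ ≤ 1 → τ ≤ 2 * Θ → errSize p τ ≤ C * Θ := by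
  have : 0 < 2 * p - 1 := by linarith
  refine ⟨2 * (2 + 1 / (2 * p - 1)), by positivity, fun Θ τ hτ hτ1 hτΘ => ?_⟩
  calc errSize p τ = τ + (τ ^ (2 * p) + τ ^ (2 * p) * scaleIntegral p τ) := by
        rw [errSize, mul_one_add]
    _ ≤ τ + (τ + τ / (2 * p - 1)) := by
        gcongr
        · exact rpow_le_self_of_le_one hτ.le hτ1 hp.le
        · exact rpow_mul_scaleIntegral_le_of_gt hp hτ
    _ = τ * (2 + 1 / (2 * p - 1)) := by ring
    _ ≤ 2 * Θ * (2 + 1 / (2 * p - 1)) := by gcongr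
    _ = 2 * (2 + 1 / (2 * p - 1)) * Θ := by ring

lemma exists_errSize_le_mul_omegaFn (hp0 : 0 < p) :
    ∃ C > 0, ∀ Θ τ, 0 < Θ → Θ ≤ 1 / 4 → Θ / 2 ≤ τ → τ ≤ 2 * Θ →
      errSize p τ ≤ C * omegaFn (2 * p) Θ := by
  rcases lt_trichotomy (2 * p) 1 with hlt | heq | hgt
  · obtain ⟨C, hC, hle⟩ := exists_errSize_le_of_lt hp0 hlt
    refine ⟨C, hC, fun Θ τ hΘ hΘ4 hτ hτ' => ?_⟩
    rw [omegaFn, if_pos hlt]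
    exact hle Θ τ hΘ (by linarith) (by linarith) hτ'
  · refine ⟨6, by norm_num, fun Θ τ hΘ hΘ4 hτ hτ' => ?_⟩
    have hlog := one_le_neg_log hΘ hΘ4
    rw [omegaFn, if_neg heq.not_lt, if_pos heq, abs_of_nonpos (by linarith)]
    exact errSize_le_of_eq heq hΘ hΘ4 hτ hτ'
  · obtain ⟨C, hC, hle⟩ := exists_errSize_le_of_gt hgt
    refine ⟨C, hC, fun Θ τ hΘ hΘ4 hτ hτ' => ?_⟩
    rw [omegaFn, if_neg hgt.not_gt, if_neg hgt.ne']
    exact hle Θ τ (by linarith) (by linarith) hτ'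

lemma tendsto_omegaFn (hα : 0 < α) : Tendsto (omegaFn α) (𝓝[>] 0) (𝓝 0) := by
  unfold omegaFn
  split_ifs
  · have hcont : ContinuousAt (fun x : ℝ => x ^ α) 0 := continuousAt_rpow_const 0 α (Or.inr hα.le)
    simpa [ContinuousAt, zero_rpow hα.ne'] using hcont.tendsto.mono_left nhdsWithin_le_nhds
  · have hlog := (tendsto_log_mul_rpow_nhdsGT_zero one_pos).abs
    simp only [abs_zero, rpow_one] at hlog
    refine hlog.congr' ?_
    filter_upwards [self_mem_nhdsWithin] with x (hx : 0 < x)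
    rw [abs_mul, abs_of_pos hx, mul_comm]
  · exact nhdsWithin_le_nhds

lemma omegaFn_nonneg (hΘ : 0 ≤ Θ) : 0 ≤ omegaFn α Θ := by
  unfold omegaFn
  split_ifs <;> positivity

end ErrorSize

section PowerLaw

variable {n : ℕ} {p β Θ : ℝ}

lemma tan_lt_mul_one_add (hΘ : 0 < Θ) (hΘ4 : Θ ≤ 1 / 4) : tan Θ < Θ * (1 + Θ) := by
  have hcos := one_sub_sq_div_two_le_cos (x := Θ)
  have hcos0 : 0 < cos Θ := by nlinarith
  have hfactor : 0 ≤ Θ ^ 2 * (1 - Θ / 2 - Θ ^ 2 / 2) := mul_nonneg (sq_nonneg Θ) (by nlinarith)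
  rw [tan_eq_sin_div_cos, div_lt_iff₀ hcos0]
  calc sin Θ < Θ := sin_lt hΘ
    _ ≤ Θ * (1 + Θ) * (1 - Θ ^ 2 / 2) := by linarith
    _ ≤ Θ * (1 + Θ) * cos Θ := by gcongr

lemma rpow_mul_one_add_le (hΘ : 0 < Θ) (hΘ1 : Θ ≤ 1) {m : ℝ} {N : ℕ} (hm : m ≤ N) :
    (Θ * (1 + Θ)) ^ m ≤ Θ ^ m * (1 + 2 ^ N * Θ) := by
  rw [mul_rpow hΘ.le (by positivity)]
  gcongr
  calc (1 + Θ) ^ m ≤ (1 + Θ) ^ (N : ℝ) := rpow_le_rpow_of_exponent_le (by linarith) hm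
    _ = (1 + Θ) ^ N := rpow_natCast _ _
    _ ≤ 1 + 2 ^ N * Θ := one_add_pow_le hΘ.le hΘ1 N

lemma le_rpow_mul_one_sub (hΘ : 0 < Θ) (hΘ1 : Θ < 1) {m : ℝ} {N : ℕ} (hm : m ≤ N) :
    Θ ^ m * (1 - N * Θ) ≤ (Θ * (1 - Θ)) ^ m := by
  rw [mul_rpow hΘ.le (by linarith)]
  gcongr
  calc 1 - N * Θ = 1 + N * -Θ := by ring
    _ ≤ (1 + -Θ) ^ N := one_add_mul_le_pow (by linarith) N
    _ = (1 - Θ) ^ (N : ℝ) := by rw [rpow_natCast, ← sub_eq_add_neg]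
    _ ≤ (1 - Θ) ^ m := rpow_le_rpow_of_exponent_ge (by linarith) (by linarith) hm

lemma abs_div_sub_le {c X δ s : ℝ} (hc : 0 < c) (hX : 0 ≤ X) (hs : 0 ≤ s) (hs1 : s ≤ 1)
    (hsc : s ≤ c / 2) (hδ : 0 ≤ δ) (hupper : δ * (c - s) ≤ X * (1 + s))
    (hlower : X * (1 - s) ≤ δ * (c + s)) : |X / c - δ| ≤ s * ((1 + 4 / c) / c) * X := by
  have hδX : δ ≤ 4 / c * X := by
    rw [div_mul_eq_mul_div, le_div_iff₀ hc]
    nlinarith [mul_le_mul_of_nonneg_left hsc hδ, mul_le_mul_of_nonneg_left hs1 hX]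
  have hsδ := mul_le_mul_of_nonneg_left hδX hs
  have hdiff : |X - δ * c| ≤ s * X + s * (4 / c * X) := abs_le.2 ⟨by linarith, by linarith⟩
  calc |X / c - δ| = |X - δ * c| / c := by
        rw [← abs_of_pos hc, ← abs_div, abs_of_pos hc, sub_div, mul_div_cancel_right₀ _ hc.ne']
    _ ≤ (s * X + s * (4 / c * X)) / c := by gcongr
    _ = s * ((1 + 4 / c) / c) * X := by ring

lemma add_two_mul_le_natCast (hp : p ≤ 1) : (n : ℝ) + 2 * p ≤ (n + 2 : ℕ) := by
  push_cast
  linarith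

lemma IsConeHarmonic.mul_diffConst_sub_le [NeZero n] {M : Ed (n + 1) → ℝ}
    (hM : IsConeHarmonic p β Θ M) (hp0 : 0 < p) (hp : p < 1) (hβ : β ∈ Ico 0 (2 * p))
    (hΘ : 0 < Θ) (hΘ4 : Θ ≤ 1 / 4) {s : ℝ} (herr : opConst n p * errSize p (Θ * (1 + Θ)) ≤ s)
    (hpow : 2 ^ (n + 2) * Θ ≤ s) :
    (2 * p - β) * (diffConst n p - s) ≤ massConst n p * Θ ^ ((n : ℝ) + 2 * p) * (1 + s) := by
  have hδ : 0 < 2 * p - β := sub_pos.2 hβ.2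
  have hmass := massConst_nonneg (n := n) (p := p)
  obtain ⟨z, hz, hsign⟩ := hM.exists_testOp_nonneg hp0 hp hβ.1 hβ.2 hΘ
    (by linarith [pi_gt_three]) (tan_lt_mul_one_add hΘ hΘ4)
  have hupper := testOp_le hp0 hp hδ (by linarith [hβ.1]) (by positivity) (by nlinarith) hz
  rw [sub_sub_cancel] at hupper
  have hquot : diffConst n p - s ≤
      massConst n p * (Θ * (1 + Θ)) ^ ((n : ℝ) + 2 * p) / (2 * p - β) := by linarith
  calc _ ≤ massConst n p * (Θ * (1 + Θ)) ^ ((n : ℝ) + 2 * p) := by rwa [← le_div_iff₀' hδ]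
    _ ≤ massConst n p * (Θ ^ ((n : ℝ) + 2 * p) * (1 + 2 ^ (n + 2) * Θ)) := by
        gcongr
        exact rpow_mul_one_add_le hΘ (by linarith) (add_two_mul_le_natCast hp.le)
    _ ≤ massConst n p * (Θ ^ ((n : ℝ) + 2 * p) * (1 + s)) := by gcongr
    _ = _ := by ring

lemma IsConeHarmonic.massConst_mul_le [NeZero n] {M : Ed (n + 1) → ℝ}
    (hM : IsConeHarmonic p β Θ M) (hp0 : 0 < p) (hp : p < 1) (hβ : β ∈ Ico 0 (2 * p))
    (hΘ : 0 < Θ) (hΘ4 : Θ ≤ 1 / 4) {s : ℝ} (herr : opConst n p * errSize p (Θ * (1 - Θ)) ≤ s)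
    (hlin : (opConst n p + (n + 2 : ℕ)) * Θ ≤ s) (hs1 : s ≤ 1) :
    massConst n p * Θ ^ ((n : ℝ) + 2 * p) * (1 - s) ≤ (2 * p - β) * (diffConst n p + s) := by
  have hδ : 0 < 2 * p - β := sub_pos.2 hβ.2
  have hop := opConst_pos (n := n) hp0 hp
  have hmass := massConst_nonneg (n := n) (p := p)
  have hτ : 0 < Θ * (1 - Θ) := mul_pos hΘ (by linarith)
  have hτΘ : Θ * (1 - Θ) ≤ Θ := mul_le_of_le_one_right hΘ.le (by linarith)
  have hΘπ : Θ < π / 2 := by linarith [pi_gt_three]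
  have hNΘ : 0 ≤ ((n + 2 : ℕ) : ℝ) * Θ := by positivity
  have hopΘ : opConst n p * Θ ≤ 1 := by linarith
  have hopτ : opConst n p * (Θ * (1 - Θ)) ≤ opConst n p * Θ := by gcongr
  obtain ⟨z, hz, hsign⟩ := hM.exists_testOp_nonpos hp0 hp hβ.1 hβ.2 hΘ hΘπ hτ
    (hτΘ.trans_lt (lt_tan hΘ hΘπ))
  have hlower := le_testOp hp0 hp hδ (by linarith [hβ.1]) hτ (by linarith) (hopτ.trans hopΘ) hz
  rw [sub_sub_cancel] at hlower
  have hquot : (1 - opConst n p * (Θ * (1 - Θ))) *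
      (massConst n p * (Θ * (1 - Θ)) ^ ((n : ℝ) + 2 * p)) / (2 * p - β) ≤ diffConst n p + s := by
    linarith
  calc _ ≤ massConst n p * Θ ^ ((n : ℝ) + 2 * p) *
          ((1 - opConst n p * Θ) * (1 - (n + 2 : ℕ) * Θ)) := by
        have : 0 ≤ opConst n p * Θ * ((n + 2 : ℕ) * Θ) := by positivity
        gcongr
        linarith
    _ = (1 - opConst n p * Θ) *
          (massConst n p * (Θ ^ ((n : ℝ) + 2 * p) * (1 - (n + 2 : ℕ) * Θ))) := by ring
    _ ≤ (1 - opConst n p * Θ) * (massConst n p * (Θ * (1 - Θ)) ^ ((n : ℝ) + 2 * p)) := by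
        have : 0 ≤ 1 - opConst n p * Θ := by linarith
        gcongr _ * (_ * ?_)
        exact le_rpow_mul_one_sub hΘ (by linarith) (add_two_mul_le_natCast hp.le)
    _ ≤ (1 - opConst n p * (Θ * (1 - Θ))) *
          (massConst n p * (Θ * (1 - Θ)) ^ ((n : ℝ) + 2 * p)) := by gcongr
    _ ≤ _ := by rwa [← div_le_iff₀' hδ]

lemma IsConeHarmonic.abs_sub_add_le [NeZero n] {M : Ed (n + 1) → ℝ}
    (hM : IsConeHarmonic p β Θ M) (hp0 : 0 < p) (hp : p < 1) (hβ : β ∈ Ico 0 (2 * p))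
    (hΘ : 0 < Θ) (hΘ4 : Θ ≤ 1 / 4) {e : ℝ}
    (he : ∀ τ, Θ / 2 ≤ τ → τ ≤ 2 * Θ → errSize p τ ≤ e)
    (hsmall : (opConst n p + (n + 2 : ℕ) + 2 ^ (n + 2)) * e ≤ min 1 (diffConst n p / 2)) :
    |β - 2 * p + Bconst (n + 1) (2 * p) * Θ ^ ((n : ℝ) + 2 * p)| ≤
      (opConst n p + (n + 2 : ℕ) + 2 ^ (n + 2)) * e *
        ((1 + 4 / diffConst n p) / diffConst n p) * (massConst n p * Θ ^ ((n : ℝ) + 2 * p)) := by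
  have hop := opConst_pos (n := n) hp0 hp
  have hdiff := diffConst_pos (n := n) hp0 hp
  have hmass := massConst_nonneg (n := n) (p := p)
  have hΘe : Θ ≤ e := (le_add_of_nonneg_right (by positivity)).trans
    ((add_rpow_le_errSize hΘ (by linarith)).trans (he Θ (by linarith) (by linarith)))
  have he0 : 0 ≤ e := hΘ.le.trans hΘe
  obtain ⟨hs1, hsc⟩ := le_min_iff.1 hsmall
  have herr : ∀ τ, Θ / 2 ≤ τ → τ ≤ 2 * Θ → opConst n p * errSize p τ ≤
      (opConst n p + (n + 2 : ℕ) + 2 ^ (n + 2)) * e := fun τ hτ hτ' => by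
    rw [add_assoc]
    have := (errSize_pos (p := p) (show 0 < τ by linarith) (by linarith)).le
    gcongr
    · exact le_add_of_nonneg_right (by positivity)
    · exact he τ hτ hτ'
  have hupper := hM.mul_diffConst_sub_le hp0 hp hβ hΘ hΘ4
    (herr _ (by nlinarith) (by nlinarith))
    (mul_le_mul (le_add_of_nonneg_left (by positivity)) hΘe hΘ.le (by positivity))
  have hlower := hM.massConst_mul_le hp0 hp hβ hΘ hΘ4 (herr _ (by nlinarith) (by nlinarith))
    (mul_le_mul (le_add_of_nonneg_right (by positivity)) hΘe hΘ.le (by positivity)) hs1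
  convert abs_div_sub_le hdiff (by positivity) (by positivity) hs1 hsc (sub_nonneg.2 hβ.2.le)
    hupper hlower using 2
  rw [massConst_eq hp0 hp]
  field_simp
  ring

theorem exists_power_law [NeZero n] (hp0 : 0 < p) (hp : p < 1) :
    ∃ C > 0, ∃ Θ₀ ∈ Ioo (0 : ℝ) π, ∀ Θ ∈ Ioo (0 : ℝ) Θ₀, ∀ β ∈ Ico (0 : ℝ) (2 * p),
      ∀ M : Ed (n + 1) → ℝ, IsConeHarmonic p β Θ M →
        |β - 2 * p + Bconst (n + 1) (2 * p) * Θ ^ ((n : ℝ) + 2 * p)| ≤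
          C * Θ ^ ((n : ℝ) + 2 * p) * omegaFn (2 * p) Θ := by
  obtain ⟨C, hC, herr⟩ := exists_errSize_le_mul_omegaFn hp0
  have hop := opConst_pos (n := n) hp0 hp
  have hdiff := diffConst_pos (n := n) hp0 hp
  have hmass := massConst_nonneg (n := n) (p := p)
  set K := opConst n p + (n + 2 : ℕ) + 2 ^ (n + 2)
  set L := (1 + 4 / diffConst n p) / diffConst n p
  have htend : Tendsto (fun Θ => K * (C * omegaFn (2 * p) Θ)) (𝓝[>] 0) (𝓝 0) := by
    simpa using ((tendsto_omegaFn (by positivity)).const_mul C).const_mul K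
  obtain ⟨Θ₀, hΘ₀, hsmall⟩ := mem_nhdsGT_iff_exists_Ioo_subset.1
    (htend.eventually_le_const (show 0 < min 1 (diffConst n p / 2) by positivity))
  refine ⟨K * C * L * (massConst n p + 1), by positivity, min Θ₀ (1 / 4),
    ⟨lt_min hΘ₀ (by norm_num), (min_le_right _ _).trans_lt (by linarith [pi_gt_three])⟩,
    fun Θ hΘ β hβ M hM => ?_⟩
  obtain ⟨hΘ₁, hΘ4⟩ := lt_min_iff.1 hΘ.2
  have := omegaFn_nonneg (α := 2 * p) hΘ.1.le
  have : 0 < Θ := hΘ.1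
  calc _ ≤ K * (C * omegaFn (2 * p) Θ) * L * (massConst n p * Θ ^ ((n : ℝ) + 2 * p)) :=
        hM.abs_sub_add_le hp0 hp hβ hΘ.1 hΘ4.le
          (fun τ hτ hτ' => herr Θ τ hΘ.1 hΘ4.le hτ hτ') (hsmall ⟨hΘ.1, hΘ₁⟩)
    _ = K * C * L * massConst n p * Θ ^ ((n : ℝ) + 2 * p) * omegaFn (2 * p) Θ := by ring
    _ ≤ K * C * L * (massConst n p + 1) * Θ ^ ((n : ℝ) + 2 * p) * omegaFn (2 * p) Θ := by
        gcongr
        exact le_add_of_nonneg_right zero_le_one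

end PowerLaw

section Positivity

variable {n : ℕ} {p β Θ : ℝ}

lemma pos_of_harmonic_of_ne_zero {M : Ed (n + 1) → ℝ} (hβ : 0 ≤ β) (hβp : β < 2 * p) (hp : p < 1)
    (hcont : Continuous M) (hnonneg : ∀ x, 0 ≤ M x) (hne : M ≠ 0) (hM0 : M 0 = 0)
    (hhom : ∀ r : ℝ, 0 < r → ∀ x, x ≠ 0 → M (r • x) = r ^ β * M x) {x : Ed (n + 1)}
    (hx : fracLapAt (n + 1) (2 * p) M x 0) : 0 < M x :=
  (hnonneg x).lt_of_ne' fun h => hne <| eq_zero_of_fracLapAt_zero hβ hβp (by linarith) hcont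
    (isBigO_of_homogeneous hcont hM0 hhom) hnonneg h hx

lemma axis_mem_cone (hΘ : Θ ∈ Ioo 0 π) :
    EuclideanSpace.single (Fin.last n) 1 ∈ cone (n + 1) Θ := by
  have hcos : cos Θ < 1 := by simpa using cos_lt_cos_of_nonneg_of_le_pi le_rfl hΘ.2.le hΘ.1
  simpa [cone, lastCoord_eq] using hcos

lemma isOpen_cone : IsOpen (cone (n + 1) Θ) := by
  have hlast : Continuous (lastCoord (n + 1)) := by
    simp only [funext lastCoord_eq]
    fun_prop
  exact isOpen_lt (by fun_prop) hlast

lemma exists_infDist_compl_cone_pos {d : ℕ} (hd : 0 < d) (hΘ : Θ ∈ Ioo 0 π) :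
    ∃ θ ∈ unitSphere d, 0 < infDist θ (cone d Θ)ᶜ := by
  obtain ⟨n, rfl⟩ := Nat.exists_eq_succ_of_ne_zero hd.ne'
  exact ⟨EuclideanSpace.single (Fin.last n) 1, by simp [unitSphere],
    (isOpen_cone.isClosed_compl.notMem_iff_infDist_pos ⟨0, zero_notMem_cone⟩).1
      (not_not_intro (axis_mem_cone hΘ))⟩

end Positivity

end NarrowCone

theorem martin_kernel_power_law_general (d : ℕ) (hd : 2 ≤ d) (α : ℝ) (hα : 0 < α) (hα2 : α < 2) :
    ∃ C : ℝ, 0 < C ∧ ∃ Θ₀ ∈ Ioo (0 : ℝ) π, ∀ Θ ∈ Ioo (0 : ℝ) Θ₀, ∀ β ∈ Ioo (0 : ℝ) α,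
      ∀ M : Ed d → ℝ, Continuous M → (∀ x, 0 ≤ M x) → M ≠ 0 →
        (∀ x, x ∉ cone d Θ → M x = 0) →
        (∀ r : ℝ, 0 < r → ∀ x : Ed d, x ≠ 0 → M (r • x) = r ^ β * M x) →
        (∀ x ∈ cone d Θ, fracLapAt d α M x 0) →
        |β - α + Bconst d α * Θ ^ ((d : ℝ) - 1 + α)| ≤
          C * Θ ^ ((d : ℝ) - 1 + α) * omegaFn α Θ := by
  obtain ⟨n, rfl⟩ : ∃ n, d = n + 1 := ⟨d - 1, by omega⟩
  obtain ⟨p, rfl⟩ : ∃ p, α = 2 * p := ⟨α / 2, by ring⟩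
  have : NeZero n := ⟨by omega⟩
  obtain ⟨C, hC, Θ₀, hΘ₀, hlaw⟩ :=
    NarrowCone.exists_power_law (n := n) (p := p) (by linarith) (by linarith)
  have hexp : ((n + 1 : ℕ) : ℝ) - 1 + 2 * p = n + 2 * p := by push_cast; ring
  refine ⟨C, hC, Θ₀, hΘ₀, fun Θ hΘ β hβ M hcont hnonneg hne hzero hhom hharm => ?_⟩
  rw [hexp]
  exact hlaw Θ hΘ β (Ioo_subset_Ico_self hβ) M
    { continuous := hcont
      eq_zero := hzero
      pos := fun x hx => NarrowCone.pos_of_harmonic_of_ne_zero hβ.1.le hβ.2 (by linarith) hcont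
        hnonneg hne (hzero 0 NarrowCone.zero_notMem_cone) hhom (hharm x hx)
      homogeneous := hhom
      harmonic := hharm }

/-- power law for the homogeneity degree of the Martin kernel in narrow cones. -/
theorem martin_kernel_power_law (d : ℕ) (hd : 2 ≤ d) (α : ℝ) (hα : 0 < α) (hα2 : α < 2) :
    ∃ C : ℝ, 0 < C ∧ ∃ Θ₀ ∈ Set.Ioo (0 : ℝ) π, ∀ Θ ∈ Set.Ioo (0 : ℝ) Θ₀,
      ∀ β ∈ Set.Ioo (0 : ℝ) α, ∀ κ : ℝ, 1 ≤ κ →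
        ∀ M : Ed d → ℝ, Continuous M → (∀ x, 0 ≤ M x) →
          (∀ x, x ∉ cone d Θ → M x = 0) →
          ContDiffOn ℝ 2 M (cone d Θ) →
          (∀ r : ℝ, 0 < r → ∀ x : Ed d, x ≠ 0 → M (r • x) = r ^ β * M x) →
          (∀ x ∈ cone d Θ, fracLapAt d α M x 0) →
          (∀ θ ∈ unitSphere d,
            κ⁻¹ * Metric.infDist θ (cone d Θ)ᶜ ^ (α / 2) ≤ M θ ∧
              M θ ≤ κ * Metric.infDist θ (cone d Θ)ᶜ ^ (α / 2)) →
          |β - α + Bconst d α * Θ ^ ((d : ℝ) - 1 + α)| ≤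
            C * Θ ^ ((d : ℝ) - 1 + α) * omegaFn α Θ := by
  obtain ⟨C, hC, Θ₀, hΘ₀, hlaw⟩ := martin_kernel_power_law_general d hd α hα hα2
  refine ⟨C, hC, Θ₀, hΘ₀, fun Θ hΘ β hβ κ hκ M hcont hnonneg hzero _ hhom hharm hsphere => ?_⟩
  refine hlaw Θ hΘ β hβ M hcont hnonneg ?_ hzero hhom hharm
  obtain ⟨θ, hθ, hdist⟩ := NarrowCone.exists_infDist_compl_cone_pos (two_pos.trans_le hd)
    ⟨hΘ.1, hΘ.2.trans hΘ₀.2⟩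
  have hpos : 0 < M θ := lt_of_lt_of_le (by positivity) (hsphere θ hθ).1
  exact fun h => hpos.ne' (congrFun h θ)
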